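/- arXiv:math/0511474 — 3 statements merged into one kernel-verified Lean document; each statement's English description precedes it below -/
import Mathlib

section
/- The bar map, restricted to N_inf(p), is a bijection from N_inf(p) onto N_fin(p). -/
/-- `N_inf(p)` (letters encoded as pairs `(i, ε)` with `ε : Bool`, `true` = `+1`):
each pair of consecutive letters satisfies (a) `i_k < i_{k+1}`, or
(b) `i_k = i_{k+1}` and `ε_k = ε_{k+1}`, or (c) `0 < i_k − i_{k+1} < p` and
`ε_{k+1} = −1`. -/
def NInf (p : ℕ) (w : List (ℕ × Bool)) : Prop :=
  List.Chain' (fun a b : ℕ × Bool =>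
    a.1 < b.1 ∨ (a.1 = b.1 ∧ a.2 = b.2) ∨
    (b.1 < a.1 ∧ a.1 - b.1 < p ∧ b.2 = false)) w

/-- Cancel (exhaustively) all adjacent pairs `x_0^ε x_0^{−ε}` in a word. -/
def reduce0 : List (ℕ × Bool) → List (ℕ × Bool)
  | [] => []
  | a :: l =>
    match reduce0 l with
    | [] => [a]
    | b :: t => if a.1 = 0 ∧ b.1 = 0 ∧ a.2 = !b.2 then t else a :: b :: t

/-- Expansion of a letter: `x_j^ε` with `j = r + d(p−1)`, `1 ≤ r ≤ p−1`,
`d ≥ 0`, becomes `x_0^{−d} x_r^ε x_0^{d}`; the letter `x_0^{±1}` is unchanged. -/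
def letterExpand (p : ℕ) (a : ℕ × Bool) : List (ℕ × Bool) :=
  if a.1 = 0 then [a]
  else
    List.replicate ((a.1 - 1) / (p - 1)) ((0 : ℕ), false) ++
      [((a.1 - 1) % (p - 1) + 1, a.2)] ++
      List.replicate ((a.1 - 1) / (p - 1)) ((0 : ℕ), true)

/-- The bar map: expand every letter and freely cancel adjacent pairs
`x_0^ε x_0^{−ε}`. -/
def barMap (p : ℕ) (w : List (ℕ × Bool)) : List (ℕ × Bool) :=
  reduce0 ((w.map (letterExpand p)).flatten)

/-- The forbidden subwords (1)–(5). -/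
def Forbidden (p : ℕ) (u : List (ℕ × Bool)) : Prop :=
  (∃ (i : ℕ) (ε : Bool), i ≤ p - 1 ∧ u = [(i, ε), (i, !ε)]) ∨
  (∃ (α β k : ℕ) (ε : Bool), 1 ≤ β ∧ β < α ∧ α ≤ p - 1 ∧
    u = (α, ε) :: (List.replicate k ((0 : ℕ), true) ++ [(β, true)])) ∨
  (∃ (α β k : ℕ) (ε : Bool), 1 ≤ β ∧ β < α ∧ α ≤ p - 1 ∧
    u = (α, ε) :: (List.replicate (k + 1) ((0 : ℕ), true) ++ [(β, false)])) ∨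
  (∃ (α β k : ℕ) (ε : Bool), 1 ≤ α ∧ α ≤ β ∧ β ≤ p - 1 ∧
    u = (α, ε) :: (List.replicate (k + 1) ((0 : ℕ), true) ++ [(β, true)])) ∨
  (∃ (α β k : ℕ) (ε : Bool), 1 ≤ α ∧ α ≤ β ∧ β ≤ p - 1 ∧
    u = (α, ε) :: (List.replicate (k + 2) ((0 : ℕ), true) ++ [(β, false)]))

/-- `N_fin(p)`: words over `x_0^{±1}, …, x_{p−1}^{±1}` with no forbidden
subword. -/
def NFin (p : ℕ) (w : List (ℕ × Bool)) : Prop :=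
  (∀ a ∈ w, a.1 ≤ p - 1) ∧ ∀ u, u <:+: w → ¬ Forbidden p u

def zz (n : ℤ) : List (ℕ × Bool) := List.replicate n.natAbs ((0 : ℕ), decide (0 ≤ n))

def push0 (a : ℕ × Bool) (l : List (ℕ × Bool)) : List (ℕ × Bool) :=
  match l with
  | [] => [a]
  | b :: t => if a.1 = 0 ∧ b.1 = 0 ∧ a.2 = !b.2 then t else a :: b :: t

def ff : List (ℕ × Bool × ℤ) → List (ℕ × Bool)
  | [] => []
  | a :: L => (a.1, a.2.1) :: (zz a.2.2 ++ ff L)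

def dep : List (ℕ × Bool × ℤ) → ℕ
  | [] => 0
  | a :: L => (a.2.2 + dep L).toNat

def ii (p : ℕ) : List (ℕ × Bool × ℤ) → List (ℕ × Bool)
  | [] => []
  | a :: L => (a.1 + dep (a :: L) * (p - 1), a.2.1) :: (zz (min (a.2.2 + dep L) 0) ++ ii p L)

def Val (p : ℕ) (L : List (ℕ × Bool × ℤ)) : Prop := ∀ a ∈ L, 1 ≤ a.1 ∧ a.1 ≤ p - 1

def Bad (r : ℕ) (ε : Bool) (e : ℤ) (r' : ℕ) (ε' : Bool) : Prop :=
  (e = 0 ∧ r = r' ∧ ε' = !ε) ∨ (ε' = true ∧ 0 ≤ e ∧ (r' < r ∨ 1 ≤ e)) ∨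
    (ε' = false ∧ ((r' < r ∧ 1 ≤ e) ∨ 2 ≤ e))

def Good : List (ℕ × Bool × ℤ) → Prop
  | [] => True
  | [_] => True
  | a :: b :: L => ¬ Bad a.1 a.2.1 a.2.2 b.1 b.2.1 ∧ Good (b :: L)

lemma reduce0_eq (l : List (ℕ × Bool)) : reduce0 l = l.foldr push0 [] := by
  induction l with
  | nil => rfl
  | cons a l ih => simp only [reduce0, List.foldr, ih, push0]

/-- no leading zero letter -/
def NZ (X : List (ℕ × Bool)) : Prop := ∀ a ∈ X.head?, a.1 ≠ 0

lemma nz_ff {p L} (h : Val p L) : NZ (ff L) := by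
  cases L with
  | nil => simp [NZ, ff]
  | cons a L => have := h a (by simp); simp [NZ, ff]; omega

lemma zz_zero : zz 0 = [] := rfl

lemma zz_succ (n : ℕ) : zz (n + 1) = (0, true) :: zz n := by
  have h1 : ((n:ℤ)+1).natAbs = n + 1 := by omega
  have h2 : (0:ℤ) ≤ (n:ℤ)+1 := by omega
  simp [zz, h1, h2, List.replicate_succ]

lemma zz_nat (n : ℕ) : zz n = List.replicate n (0, true) := by simp [zz]

lemma zz_neg (n : ℕ) : zz (-n) = List.replicate n (0, false) := by
  cases n with
  | zero => simp [zz]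
  | succ n => 
    have h2 : ¬ (0:ℤ) ≤ -((n+1 : ℕ):ℤ) := by omega
    have h3 : (-((n+1 : ℕ):ℤ)).natAbs = n + 1 := by omega
    simp only [zz, h2, h3]; simp

lemma zz_pred (n : ℕ) : zz (-n - 1) = (0, false) :: zz (-n) := by
  have : (-(n:ℤ) - 1) = -((n+1 : ℕ):ℤ) := by push_cast; ring
  rw [this, zz_neg, zz_neg, List.replicate_succ]

lemma push_nz {X} (h : NZ X) (ε : Bool) : push0 (0, ε) X = (0, ε) :: X := by
  cases X with
  | nil => rfl
  | cons b t => simp [NZ] at h; simp [push0, h]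

lemma push_pos (r : ℕ) (hr : 1 ≤ r) (ε : Bool) (X) : push0 (r, ε) X = (r, ε) :: X := by
  cases X with
  | nil => rfl
  | cons b t => simp [push0]; omega

lemma push_true {X} (h : NZ X) (n : ℤ) : push0 (0, true) (zz n ++ X) = zz (n + 1) ++ X := by
  rcases lt_trichotomy n 0 with h1 | h1 | h1
  · obtain ⟨k, rfl⟩ : ∃ k : ℕ, n = -k - 1 := ⟨(-n - 1).toNat, by omega⟩
    rw [zz_pred]; simp [push0]
  · subst h1
    rw [zz_zero, List.nil_append, push_nz h]; rfl
  · obtain ⟨k, rfl⟩ : ∃ k : ℕ, n = k + 1 := ⟨(n - 1).toNat, by omega⟩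
    have := zz_succ (k+1)
    push_cast at this
    rw [this, zz_succ]; simp [push0]

lemma push_false {X} (h : NZ X) (n : ℤ) : push0 (0, false) (zz n ++ X) = zz (n - 1) ++ X := by
  rcases lt_trichotomy n 0 with h1 | h1 | h1
  · obtain ⟨k, rfl⟩ : ∃ k : ℕ, n = -k - 1 := ⟨(-n - 1).toNat, by omega⟩
    have := zz_pred (k+1)
    have e : -((k+1 : ℕ):ℤ) = -k - 1 := by push_cast; ring
    rw [e] at this
    rw [this, zz_pred]; simp [push0]
  · subst h1
    rw [zz_zero, List.nil_append, push_nz h]; rfl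
  · obtain ⟨k, rfl⟩ : ∃ k : ℕ, n = k + 1 := ⟨(n - 1).toNat, by omega⟩
    rw [zz_succ]; simp [push0]

lemma foldr_true {X} (h : NZ X) (n : ℤ) (k : ℕ) :
    (List.replicate k ((0:ℕ), true)).foldr push0 (zz n ++ X) = zz (n + k) ++ X := by
  induction k with
  | zero => simp
  | succ k ih => 
    rw [List.replicate_succ, List.foldr_cons, ih, push_true h]; push_cast; ring_nf

lemma foldr_false {X} (h : NZ X) (n : ℤ) (k : ℕ) :
    (List.replicate k ((0:ℕ), false)).foldr push0 (zz n ++ X) = zz (n - k) ++ X := by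
  induction k with
  | zero => simp
  | succ k ih => 
    rw [List.replicate_succ, List.foldr_cons, ih, push_false h]; push_cast; ring_nf

lemma foldr_zz {X} (h : NZ X) (n m : ℤ) :
    (zz m).foldr push0 (zz n ++ X) = zz (n + m) ++ X := by
  rcases le_total 0 m with h1 | h1
  · obtain ⟨k, rfl⟩ : ∃ k : ℕ, m = k := ⟨m.toNat, by omega⟩
    rw [zz_nat, foldr_true h]
  · obtain ⟨k, rfl⟩ : ∃ k : ℕ, m = -k := ⟨(-m).toNat, by omega⟩
    rw [zz_neg, foldr_false h]; rfl

lemma exp_zz (p : ℕ) (n : ℤ) : ((zz n).map (letterExpand p)).flatten = zz n := by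
  unfold zz
  generalize n.natAbs = k
  induction k with
  | zero => rfl
  | succ k ih => rw [List.replicate_succ, List.map_cons, List.flatten_cons, ih]; rfl

lemma exp_letter (p r d : ℕ) (ε : Bool) (h1 : 1 ≤ r) (h2 : r ≤ p - 1) :
    letterExpand p (r + d * (p - 1), ε) = zz (-d) ++ [(r, ε)] ++ zz d := by
  have e : r + d * (p-1) - 1 = (r - 1) + d * (p-1) := by omega
  have hd : (r + d * (p-1) - 1) / (p-1) = d := by
    rw [e, Nat.add_mul_div_right _ _ (by omega), Nat.div_eq_of_lt (by omega)]; simp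
  have hm : (r + d * (p-1) - 1) % (p-1) = r - 1 := by
    rw [e, Nat.add_mul_mod_self_right, Nat.mod_eq_of_lt (by omega)]
  have : ¬ (r + d * (p-1) = 0) := by omega
  simp only [letterExpand, hd, hm, this, if_false, zz_nat, zz_neg]
  rw [Nat.sub_add_cancel h1]

lemma bar_ii (p : ℕ) (L) (h : Val p L) :
    (((ii p L).map (letterExpand p)).flatten).foldr push0 [] = zz (-dep L) ++ ff L := by
  induction L with
  | nil => rfl
  | cons a L ih =>
    have hL : Val p L := fun b hb => h b (by simp [hb])
    obtain ⟨h1, h2⟩ := h a (by simp)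
    rw [ii, List.map_cons, List.flatten_cons, List.map_append, List.flatten_append, exp_zz,
      exp_letter _ _ _ _ h1 h2, List.foldr_append, List.foldr_append, List.foldr_append, List.foldr_append, ih hL,
      foldr_zz (nz_ff hL), foldr_zz (nz_ff hL),
      List.foldr_cons, List.foldr_nil, push_pos _ h1]
    have := foldr_zz (nz_ff h) 0 (-(dep (a::L) : ℤ))
    have e : -(dep L : ℤ) + min (a.2.2 + dep L) 0 + dep (a :: L) = a.2.2 := by
      simp only [dep]; omega
    rw [e]
    simpa [zz_zero, ff] using this

lemma bar_inf (p : ℕ) (n : ℤ) (L) (h : Val p L) :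
    barMap p (zz n ++ ii p L) = zz (n - dep L) ++ ff L := by
  rw [barMap, reduce0_eq, List.map_append, List.flatten_append, exp_zz, List.foldr_append,
    bar_ii p L h, foldr_zz (nz_ff h)]
  congr 2; ring

lemma zz_inj {n m : ℤ} (h : zz n = zz m) : n = m := by
  unfold zz at h
  rw [List.replicate_inj] at h
  obtain ⟨h1, h2⟩ := h
  simp at h2
  omega

lemma zz_split {X Y} (hX : NZ X) (hY : NZ Y) {n m : ℤ} (h : zz n ++ X = zz m ++ Y) :
    n = m ∧ X = Y := by
  have key : ∀ {X} (_ : NZ X) (n : ℤ), (zz n ++ X).takeWhile (fun a => a.1 = 0) = zz n := by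
    intro X hX n
    rw [List.takeWhile_append_of_pos]
    · cases X with
      | nil => simp
      | cons b t => simp [NZ] at hX; simp [hX]
    · intro a ha
      have := List.eq_of_mem_replicate ha
      simp [this]
  have h1 := key hX n
  rw [h, key hY] at h1
  have := zz_inj h1
  subst this
  exact ⟨rfl, List.append_cancel_left h⟩

lemma ff_inj {p} (L L' : List (ℕ × Bool × ℤ)) (h : Val p L) (h' : Val p L') (e : ff L = ff L') :
    L = L' := by
  induction L generalizing L' with
  | nil => cases L' with
    | nil => rfl
    | cons a L' => simp [ff] at e
  | cons a L ih => cases L' with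
    | nil => simp [ff] at e
    | cons b L' =>
      have hL : Val p L := fun b hb => h b (by simp [hb])
      have hL' : Val p L' := fun b hb => h' b (by simp [hb])
      simp only [ff, List.cons.injEq, Prod.mk.injEq] at e
      obtain ⟨⟨e1, e2⟩, e3⟩ := e
      obtain ⟨e4, e5⟩ := zz_split (nz_ff hL) (nz_ff hL') e3
      rw [ih _ hL hL' e5]
      congr 1
      ext1
      · exact e1
      · ext1 <;> assumption

def Rr (p : ℕ) (a b : ℕ × Bool) : Prop :=
    a.1 < b.1 ∨ (a.1 = b.1 ∧ a.2 = b.2) ∨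
    (b.1 < a.1 ∧ a.1 - b.1 < p ∧ b.2 = false)

lemma nz_ii {p L} (h : Val p L) : NZ (ii p L) := by
  cases L with
  | nil => simp [NZ, ii]
  | cons a L => have := h a (by simp); simp [NZ, ii]; omega

lemma NInf_eq (p w) : NInf p w ↔ List.IsChain (Rr p) w := Iff.rfl

lemma chain_zz (p : ℕ) (n : ℤ) (X) (h : NZ X) :
    List.IsChain (Rr p) (zz n ++ X) ↔ List.IsChain (Rr p) X := by
  unfold zz
  generalize n.natAbs = k
  generalize decide (0 ≤ n) = b
  induction k with
  | zero => simp
  | succ k ih =>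
    rw [List.replicate_succ, List.cons_append, List.isChain_cons, ih]
    refine ⟨fun h => h.2, fun h' => ⟨?_, h'⟩⟩
    cases k with
    | zero =>
      intro y hy
      have := h y (by simpa using hy)
      left; show 0 < y.1; omega
    | succ k =>
      intro y hy
      simp [List.replicate_succ] at hy
      subst hy
      right; left; simp

lemma zz_cases (m : ℤ) : (m = 0 ∧ zz m = []) ∨ (0 < m ∧ zz m = (0,true) :: zz (m-1)) ∨
    (m < 0 ∧ zz m = (0,false) :: zz (m+1)) := by
  rcases lt_trichotomy m 0 with h1 | h1 | h1
  · obtain ⟨k, rfl⟩ : ∃ k : ℕ, m = -k - 1 := ⟨(-m - 1).toNat, by omega⟩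
    right; right; rw [zz_pred]; exact ⟨h1, by congr 2; ring⟩
  · subst h1; left; exact ⟨rfl, rfl⟩
  · obtain ⟨k, rfl⟩ : ∃ k : ℕ, m = k + 1 := ⟨(m - 1).toNat, by omega⟩
    right; left; rw [zz_succ]; exact ⟨h1, by congr 2; ring⟩

lemma key_arith (p r r' d d' : ℕ) (ε ε' : Bool) (h1 : 1 ≤ r) (h2 : r ≤ p - 1) (h1' : 1 ≤ r')
    (h2' : r' ≤ p - 1) : Rr p (r + d * (p-1), ε) (r' + d' * (p-1), ε') ↔
      ¬ Bad r ε (d - d') r' ε' := by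
  obtain ⟨q, rfl⟩ : ∃ q, p = q + 1 := ⟨p - 1, by omega⟩
  simp only [Nat.add_sub_cancel] at *
  rcases lt_or_ge d d' with h | h
  · obtain ⟨t, rfl⟩ := Nat.exists_eq_add_of_lt h
    have : (d + t + 1) * q = d * q + t * q + q := by ring
    have h3 : ¬ Bad r ε ((d:ℤ) - (d + t + 1 : ℕ)) r' ε' := by
      unfold Bad; push_cast; omega
    simp only [h3, not_false_eq_true, iff_true]
    left; simp only [this]
    generalize t * q = z; omega
  · obtain ⟨t, rfl⟩ := Nat.exists_eq_add_of_le h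
    have e : (((d' + t : ℕ):ℤ) - d') = t := by push_cast; ring
    rw [e]
    have : (d' + t) * q = d' * q + t * q := by ring
    rcases t with _ | _ | t
    · cases ε <;> cases ε' <;> simp [Rr, Bad] <;> omega
    · cases ε <;> cases ε' <;> simp [Rr, Bad, this] <;> omega
    · have : (d' + (t + 1 + 1)) * q = d' * q + t * q + q + q := by ring
      simp only [Rr, Bad, this]
      generalize t * q = z 
      generalize d' * q = z 
      cases ε <;> cases ε' <;> simp <;> omega

lemma chain_ii (p : ℕ) (L) (h : Val p L) : List.IsChain (Rr p) (ii p L) ↔ Good L := by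
  induction L with
  | nil => simp [ii, Good]
  | cons a L ih =>
    have hL : Val p L := fun b hb => h b (by simp [hb])
    obtain ⟨h1, h2⟩ := h a (by simp)
    rw [ii, List.isChain_cons, chain_zz _ _ _ (nz_ii hL), ih hL]
    rcases zz_cases (min (a.2.2 + dep L) 0) with ⟨h3, h4⟩ | ⟨h3, h4⟩ | ⟨h3, h4⟩
    · rw [h4]
      cases L with
      | nil => simp [ii, Good]
      | cons b L =>
        obtain ⟨h1', h2'⟩ := hL b (by simp)
        have := key_arith p a.1 b.1 (dep (a :: b :: L)) (dep (b :: L)) a.2.1 b.2.1 h1 h2 h1' h2'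
        have e : ((dep (a :: b :: L) : ℤ) - (dep (b :: L))) = a.2.2 := by
          rw [dep]; omega
        rw [e] at this
        rw [Good, ← this]
        simp [ii]
    · omega
    · rw [h4]
      have hd : dep (a :: L) = 0 := by rw [dep]; omega
      have : Rr p (a.1 + dep (a :: L) * (p-1), a.2.1) (0, false) := by
        right; right; simp [hd]; omega
      have h5 : Good (a :: L) ↔ Good L := by
        cases L with
        | nil => simp [Good]
        | cons b L =>
          rw [Good]
          have : ¬ Bad a.1 a.2.1 a.2.2 b.1 b.2.1 := by unfold Bad; omega
          simp [this]
      rw [h5]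
      simp [this]

lemma ninf_form (p : ℕ) (hp : 2 ≤ p) (w) (h : List.IsChain (Rr p) w) :
    ∃ n L, Val p L ∧ w = zz n ++ ii p L := by
  induction w with
  | nil => exact ⟨0, [], by simp [Val], rfl⟩
  | cons a w ih =>
    rw [List.isChain_cons] at h
    obtain ⟨n, L, hL, rfl⟩ := ih h.2
    have h := h.1
    obtain ⟨j, ε⟩ := a
    rcases Nat.eq_zero_or_pos j with hj | hj
    · subst hj
      have hh := push_true (nz_ii hL) n
      have hh' := push_false (nz_ii hL) n
      have : push0 (0, ε) (zz n ++ ii p L) = (0, ε) :: (zz n ++ ii p L) := by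
        revert h
        cases zz n ++ ii p L with
        | nil => intro h; rfl
        | cons b t =>
          intro h
          have := h b (by simp)
          obtain ⟨b1, b2⟩ := b
          simp [Rr] at this
          show (if _ then _ else _) = _
          rw [if_neg]
          rintro ⟨_, h1, h2⟩
          simp only at h1 h2
          subst h1 h2
          simp at this
      cases ε
      · exact ⟨n - 1, L, hL, by rw [← hh', this]⟩
      · exact ⟨n + 1, L, hL, by rw [← hh, this]⟩
    · have hn : n ≤ 0 ∧ (n < 0 → j ≤ p - 1) := by
        rcases zz_cases n with ⟨h3, h4⟩ | ⟨h3, h4⟩ | ⟨h3, h4⟩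
        · omega
        · have := h (0, true) (by simp [h4])
          simp [Rr] at this; omega
        · have := h (0, false) (by simp [h4])
          simp [Rr] at this; omega
      have hq : 0 < p - 1 := by omega
      have hm := Nat.mod_lt (j-1) hq
      have hdm := Nat.div_add_mod' (j-1) (p-1)
      rcases hn.1.lt_or_eq with h0 | h0
      · refine ⟨0, (j, ε, n - dep L) :: L, ?_, ?_⟩
        · intro b hb
          rcases List.mem_cons.1 hb with rfl | hb
          · exact ⟨hj, hn.2 h0⟩
          · exact hL b hb
        · have e1 : dep ((j, ε, n - dep L) :: L) = 0 := by simp [dep]; omega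
          have e2 : min (n - dep L + dep L) 0 = n := by omega
          simp only [ii, e1, e2, zz_zero]; simp
      · refine ⟨0, ((j-1) % (p-1) + 1, ε, ((j-1)/(p-1) : ℕ) - (dep L : ℤ)) :: L, ?_, ?_⟩
        · intro b hb
          rcases List.mem_cons.1 hb with rfl | hb
          · exact ⟨by simp, by simp only []; omega⟩
          · exact hL b hb
        · have e1 : dep (((j-1) % (p-1) + 1, ε, ((j-1)/(p-1) : ℕ) - (dep L : ℤ)) :: L) = (j-1)/(p-1) := by
            rw [dep, sub_add_cancel, Int.toNat_natCast]
          have hg : (0:ℤ) ≤ (((j-1)/(p-1) : ℕ) : ℤ) := Int.natCast_nonneg _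
          have e2 : min ((((j-1)/(p-1) : ℕ) : ℤ) - dep L + dep L) 0 = n := by
            rw [sub_add_cancel, h0, min_eq_right hg]
          have e3 : (j-1) % (p-1) + 1 + (j-1)/(p-1) * (p-1) = j := by omega
          simp only [ii, e1, e2, e3, zz_zero]; simp

lemma nfin_form (p : ℕ) (w) (h1 : ∀ a ∈ w, a.1 ≤ p - 1)
    (h2 : ∀ u, u <:+: w → ¬ Forbidden p u) :
    ∃ n L, Val p L ∧ w = zz n ++ ff L := by
  induction w with
  | nil => exact ⟨0, [], by simp [Val], rfl⟩
  | cons a w ih =>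
    obtain ⟨n, L, hL, rfl⟩ := ih (fun b hb => h1 b (by simp [hb]))
      (fun u hu => h2 u (hu.trans (List.suffix_cons _ _).isInfix))
    obtain ⟨j, ε⟩ := a
    rcases Nat.eq_zero_or_pos j with hj | hj
    · subst hj
      have hh := push_true (nz_ff hL) n
      have hh' := push_false (nz_ff hL) n
      have : push0 (0, ε) (zz n ++ ff L) = (0, ε) :: (zz n ++ ff L) := by
        revert h2
        cases zz n ++ ff L with
        | nil => intro h; rfl
        | cons b t =>
          intro h
          obtain ⟨b1, b2⟩ := b
          have := h [(0, ε), (b1, b2)] ⟨[], t, by simp⟩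
          show (if _ then _ else _) = _
          rw [if_neg]
          rintro ⟨_, h1, h2⟩
          simp only at h1 h2
          apply this
          left
          exact ⟨0, ε, by omega, by simp [h1, h2]⟩
      cases ε
      · exact ⟨n - 1, L, hL, by rw [← hh', this]⟩
      · exact ⟨n + 1, L, hL, by rw [← hh, this]⟩
    · refine ⟨0, (j, ε, n) :: L, ?_, ?_⟩
      · intro b hb
        rcases List.mem_cons.1 hb with rfl | hb
        · exact ⟨hj, h1 (j, ε) (by simp)⟩
        · exact hL b hb
      · simp [ff, zz_zero]

lemma forb_iff (p u) : Forbidden p u ↔ (∃ ε, u = [(0, ε), (0, !ε)]) ∨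
    ∃ (α β k : ℕ) (ε ε' : Bool), 1 ≤ α ∧ α ≤ p - 1 ∧ 1 ≤ β ∧ β ≤ p - 1 ∧ Bad α ε k β ε' ∧
      u = (α, ε) :: (zz k ++ [(β, ε')]) := by
  simp only [zz_nat]
  constructor
  · rintro (⟨i, ε, h, rfl⟩ | ⟨α, β, k, ε, h1, h2, h3, rfl⟩ | ⟨α, β, k, ε, h1, h2, h3, rfl⟩ |
      ⟨α, β, k, ε, h1, h2, h3, rfl⟩ | ⟨α, β, k, ε, h1, h2, h3, rfl⟩)
    · rcases Nat.eq_zero_or_pos i with hj | hj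
      · subst hj; left; exact ⟨ε, rfl⟩
      · right; exact ⟨i, i, 0, ε, !ε, hj, h, hj, h, by simp [Bad], by simp⟩
    · right; exact ⟨α, β, k, ε, _, by omega, by omega, by omega, by omega, by simp [Bad, h2], rfl⟩
    · right; exact ⟨α, β, k+1, ε, _, by omega, by omega, by omega, by omega, by simp [Bad, h2], rfl⟩
    · right; exact ⟨α, β, k+1, ε, _, by omega, by omega, by omega, by omega, by simp [Bad]; omega, rfl⟩
    · right; exact ⟨α, β, k+2, ε, _, by omega, by omega, by omega, by omega, by simp [Bad], rfl⟩
  · rintro (⟨ε, rfl⟩ | ⟨α, β, k, ε, ε', h1, h2, h3, h4, h5, rfl⟩)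
    · left; exact ⟨0, ε, by omega, rfl⟩
    · rcases h5 with ⟨h5, rfl, rfl⟩ | ⟨rfl, _, h5⟩ | ⟨rfl, h5⟩
      · left
        have : k = 0 := by omega
        subst this
        exact ⟨α, ε, h2, rfl⟩
      · by_cases h : β < α
        · right; left; exact ⟨α, β, k, ε, h3, h, h2, rfl⟩
        · right; right; right; left
          obtain ⟨k, rfl⟩ : ∃ k', k = k' + 1 := ⟨k - 1, by omega⟩
          exact ⟨α, β, k, ε, h1, by omega, h4, rfl⟩
      · by_cases h : β < α
        · right; right; left
          obtain ⟨k, rfl⟩ : ∃ k', k = k' + 1 := ⟨k - 1, by omega⟩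
          exact ⟨α, β, k, ε, h3, h, h2, rfl⟩
        · right; right; right; right
          obtain ⟨k, rfl⟩ : ∃ k', k = k' + 2 := ⟨k - 2, by omega⟩
          exact ⟨α, β, k, ε, h1, by omega, h4, rfl⟩

def NF (p : ℕ) (w : List (ℕ × Bool)) : Prop := ∀ u, u <:+: w → ¬ Forbidden p u

lemma NF_cons (p a w) : NF p (a :: w) ↔ (∀ u, u <+: a :: w → ¬ Forbidden p u) ∧ NF p w := by
  simp only [NF, List.infix_cons_iff]
  constructor
  · intro h; exact ⟨fun u hu => h u (Or.inl hu), fun u hu => h u (Or.inr hu)⟩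
  · rintro ⟨h1, h2⟩ u (hu | hu)
    · exact h1 u hu
    · exact h2 u hu

lemma NF_zz (p : ℕ) (n : ℤ) (X) (h : NZ X) : NF p (zz n ++ X) ↔ NF p X := by
  unfold zz
  generalize n.natAbs = k
  generalize decide (0 ≤ n) = b
  induction k with
  | zero => simp
  | succ k ih =>
    rw [List.replicate_succ, List.cons_append, NF_cons, ih]
    refine ⟨fun h => h.2, fun h' => ⟨?_, h'⟩⟩
    rintro u hu hf
    rw [forb_iff] at hf
    rcases hf with ⟨ε, rfl⟩ | ⟨α, β, k', ε, ε', h1, h2, h3, h4, h5, rfl⟩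
    · rw [List.cons_prefix_cons] at hu
      obtain ⟨h1, h2⟩ := hu
      cases k with
      | zero =>
        cases X with
        | nil => simp at h2
        | cons x X =>
          simp [NZ] at h
          simp at h2
          simp [← h2] at h
      | succ k =>
        rw [List.replicate_succ, List.cons_append, List.cons_prefix_cons] at h2
        simp at h1 h2
        simp [h1] at h2
    · rw [List.cons_prefix_cons] at hu
      simp at hu; omega

lemma NF_ff (p : ℕ) (L) (h : Val p L) : NF p (ff L) ↔ Good L := by
  induction L with
  | nil =>
    simp only [ff, Good, iff_true]
    intro u hu hf
    rw [forb_iff] at hf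
    simp at hu; subst hu; simp at hf
  | cons a L ih =>
    have hL : Val p L := fun b hb => h b (by simp [hb])
    obtain ⟨h1, h2⟩ := h a (by simp)
    rw [ff, NF_cons, NF_zz _ _ _ (nz_ff hL), ih hL]
    have key : ∀ u, u <+: (a.1, a.2.1) :: (zz a.2.2 ++ ff L) → Forbidden p u →
        ∃ b L', L = b :: L' ∧ Bad a.1 a.2.1 a.2.2 b.1 b.2.1 := by
      intro u hu hf
      rw [forb_iff] at hf
      rcases hf with ⟨ε, rfl⟩ | ⟨α, β, k', ε, ε', h1, h2, h3, h4, h5, rfl⟩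
      · rw [List.cons_prefix_cons] at hu
        simp at hu; omega
      · rw [List.cons_prefix_cons] at hu
        obtain ⟨h6, t, h7⟩ := hu
        rw [List.append_assoc] at h7
        obtain ⟨h8, h9⟩ := zz_split (by simp [NZ]; omega) (nz_ff hL) h7
        cases L with
        | nil => simp [ff] at h9
        | cons b L =>
          refine ⟨b, L, rfl, ?_⟩
          simp [ff] at h9 h6
          rw [← h6.1, ← h6.2, ← h8, ← h9.1.1, ← h9.1.2]
          exact h5
    cases L with
    | nil =>
      simp only [Good, and_true, iff_true]
      intro u hu hf
      obtain ⟨b, L', h, _⟩ := key u hu hf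
      simp at h
    | cons b L =>
      rw [Good]
      refine and_congr_left fun _ => ⟨fun hh hb => ?_, fun hh u hu hf => ?_⟩
      · have h0 : 0 ≤ a.2.2 := by unfold Bad at hb; omega
        obtain ⟨k, hk⟩ : ∃ k : ℕ, a.2.2 = k := ⟨a.2.2.toNat, by omega⟩
        obtain ⟨h1', h2'⟩ := hL b (by simp)
        refine hh ((a.1, a.2.1) :: (zz k ++ [(b.1, b.2.1)])) ?_ ((forb_iff _ _).2 (Or.inr
          ⟨a.1, b.1, k, a.2.1, b.2.1, h1, h2, h1', h2', hk ▸ hb, rfl⟩))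
        rw [hk, ff]
        exact ⟨zz b.2.2 ++ ff L, by simp⟩
      · obtain ⟨b', L', h, h'⟩ := key u hu hf
        simp at h
        rw [← h.1] at h'
        exact hh h'

lemma ff_le (p : ℕ) (L) (h : Val p L) (n : ℤ) : ∀ a ∈ zz n ++ ff L, a.1 ≤ p - 1 := by
  induction L generalizing n with
  | nil =>
    intro a ha
    simp only [ff, List.append_nil] at ha
    have := List.eq_of_mem_replicate ha
    simp [this]
  | cons b L ih =>
    intro a ha
    have hL : Val p L := fun b hb => h b (by simp [hb])
    rcases List.mem_append.1 ha with ha | ha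
    · have := List.eq_of_mem_replicate ha
      simp [this]
    · rw [ff] at ha
      rcases List.mem_cons.1 ha with rfl | ha
      · exact (h b (by simp)).2
      · exact ih hL _ _ ha

/-- The bar map restricted to `N_inf(p)` is a bijection onto `N_fin(p)`. -/
theorem stmt5 (p : ℕ) (hp : 2 ≤ p) :
    Set.BijOn (barMap p) {w | NInf p w} {w | NFin p w} := by
  refine ⟨?_, ?_, ?_⟩
  · intro w hw
    obtain ⟨n, L, hL, rfl⟩ := ninf_form p hp w hw
    have hw : List.IsChain (Rr p) _ := hw
    rw [chain_zz _ _ _ (nz_ii hL), chain_ii _ _ hL] at hw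
    rw [bar_inf _ _ _ hL]
    exact ⟨ff_le p L hL _, (NF_zz _ _ _ (nz_ff hL)).2 ((NF_ff _ _ hL).2 hw)⟩
  · intro w hw w' hw' e
    obtain ⟨n, L, hL, rfl⟩ := ninf_form p hp w hw
    obtain ⟨n', L', hL', rfl⟩ := ninf_form p hp w' hw'
    rw [bar_inf _ _ _ hL, bar_inf _ _ _ hL'] at e
    obtain ⟨e1, e2⟩ := zz_split (nz_ff hL) (nz_ff hL') e
    have := ff_inj _ _ hL hL' e2
    subst this
    have : n = n' := by omega
    rw [this]
  · rintro u ⟨h1, h2⟩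
    obtain ⟨n, L, hL, rfl⟩ := nfin_form p u h1 h2
    refine ⟨zz (n + dep L) ++ ii p L, ?_, ?_⟩
    · show List.IsChain (Rr p) _
      rw [chain_zz _ _ _ (nz_ii hL), chain_ii _ _ hL]
      exact (NF_ff _ _ hL).1 ((NF_zz _ _ _ (nz_ff hL)).1 h2)
    · rw [bar_inf _ _ _ hL]
      congr 2; ring
end

section
/- The evaluation map from N_fin(p) to the generalized Thompson group F(p), sending a word over {x_0^{±1}, …, x_{p-1}^{±1}} to the corresponding product in F(p), is a bijection: every element of F(p) is represented by exactly one word containing no forbidden subword. -/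
/-- Relators of the generalized Thompson group `F(p)`:
`x_j x_i x_{j+p-1}⁻¹ x_i⁻¹` for `i < j`. -/
def ThompsonRels (p : ℕ) : Set (FreeGroup ℕ) :=
  {r | ∃ i j : ℕ, i < j ∧
    r = FreeGroup.of j * FreeGroup.of i * (FreeGroup.of (j + p - 1))⁻¹ * (FreeGroup.of i)⁻¹}

/-- The generalized Thompson group `F(p)` as a presented group. -/
abbrev FP (p : ℕ) := PresentedGroup (ThompsonRels p)

/-- The generator `x_i` of `F(p)`. -/
def xgen (p : ℕ) (i : ℕ) : FP p := PresentedGroup.of i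

/-- Evaluation of a word in the `x_i^{±1}` as an element of `F(p)`. -/
def evalWord (p : ℕ) (w : List (ℕ × Bool)) : FP p :=
  (w.map fun a => if a.2 then xgen p a.1 else (xgen p a.1)⁻¹).prod

namespace T6

abbrev L := ℤ × Bool

def sg (q : ℤ) (d : Bool) : ℤ := if d then q else -q

/-- `X_j^ε` can be moved right past `X_i^d`. -/
def Red (q j i : ℤ) (d : Bool) : Prop := i < j ∧ i < j + sg q d

instance (q j i : ℤ) (d : Bool) : Decidable (Red q j i d) := by unfold Red; infer_instance

def Stuck (q : ℤ) (a b : L) : Prop := ¬ Red q a.1 b.1 b.2 ∧ b ≠ (a.1, !a.2)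

def NF (q : ℤ) : List L → Prop
  | [] => True
  | [_] => True
  | a :: b :: w => Stuck q a b ∧ NF q (b :: w)

def act (q : ℤ) (e : Bool) : ℤ → List L → List L
  | j, [] => [(j, e)]
  | j, b :: w =>
    if b = (j, !e) then w
    else if Red q j b.1 b.2 then b :: act q e (j + sg q b.2) w
    else (j, e) :: b :: w

def HStuck (q : ℤ) (a : L) : List L → Prop
  | [] => True
  | b :: _ => Stuck q a b

lemma NF_cons (q : ℤ) (a : L) (w : List L) : NF q (a :: w) ↔ HStuck q a w ∧ NF q w := by
  cases w <;> simp [NF, HStuck]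

lemma hstuck_act (q : ℤ) (hq : 1 ≤ q) (e : Bool) (i j : ℤ) (d : Bool) (w : List L) (hw : NF q w)
    (hs : HStuck q (i, d) w) (hr : Red q j i d) : HStuck q (i, d) (act q e (j + sg q d) w) := by
  cases w with
  | nil =>
    simp only [act, HStuck, Stuck, Red] at *
    cases d <;> cases e <;> simp [sg] at * <;> omega
  | cons b w =>
    simp only [act]
    split_ifs with h1 h2
    · cases w with
      | nil => trivial
      | cons c w =>
        subst h1
        obtain ⟨⟨h3, h4⟩, _⟩ := hw
        obtain ⟨k, f⟩ := c
        simp only [HStuck, Stuck, Red] at *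
        cases d <;> cases e <;> cases f <;> simp [sg] at * <;> omega
    · exact hs
    · simp only [HStuck, Stuck, Red] at *
      cases d <;> cases e <;> simp [sg] at * <;> omega

lemma NF_act (q : ℤ) (hq : 1 ≤ q) (e : Bool) (w : List L) : ∀ (j : ℤ), NF q w →
    NF q (act q e j w) := by
  induction w with
  | nil => intro j _; trivial
  | cons b w ih =>
    intro j hw
    have hw' := (NF_cons q b w).1 hw
    simp only [act]
    split_ifs with h1 h2
    · exact hw'.2
    · rw [NF_cons]
      exact ⟨hstuck_act q hq e b.1 j b.2 w hw'.2 hw'.1 h2, ih _ hw'.2⟩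
    · exact ⟨⟨h2, h1⟩, hw⟩

lemma act_stuck (q : ℤ) (e : Bool) (j : ℤ) (w : List L) (h : HStuck q (j, e) w) :
    act q e j w = (j, e) :: w := by
  cases w with
  | nil => rfl
  | cons b w =>
    simp only [act]
    rw [if_neg h.2, if_neg h.1]

lemma act_inv (q : ℤ) (hq : 1 ≤ q) (e : Bool) (w : List L) : ∀ (j : ℤ), NF q w →
    act q e j (act q (!e) j w) = w := by
  induction w with
  | nil => intro j _; simp [act]
  | cons b w ih =>
    intro j hw
    have hw' := (NF_cons q b w).1 hw
    rw [act]
    split_ifs with h1 h2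
    · simp only [Bool.not_not] at h1
      subst h1
      exact act_stuck q e j w hw'.1
    · rw [act]
      have : b ≠ (j, !e) := by
        rintro rfl; exact absurd h2.1 (lt_irrefl _)
      rw [if_neg this, if_pos h2, ih _ hw'.2]
    · rw [act, if_pos rfl]

lemma act_comm (q : ℤ) (hq : 1 ≤ q) (e d : Bool) (w : List L) : ∀ (i j : ℤ), NF q w →
    Red q j i d → act q e j (act q d i w) = act q d i (act q e (j + sg q d) w) := by
  induction w with
  | nil =>
    intro i j hw hr
    rw [act_stuck q d i _ (hstuck_act q hq e i j d [] hw trivial hr)]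
    have : (i, d) ≠ (j, !e) := by
      intro h; simp at h; exact absurd hr.1 (by omega)
    simp only [act, if_neg this, if_pos hr]
  | cons b w ih =>
    intro i j hw hr
    have hw' := (NF_cons q b w).1 hw
    by_cases h1 : b = (i, !d)
    · subst h1
      have hr' : Red q (j + sg q d) i (!d) := by
        unfold Red at *; cases d <;> simp [sg] at * <;> omega
      have e1 : act q d i ((i, !d) :: w) = w := by rw [act, if_pos rfl]
      have hn : (i, !d) ≠ (j + sg q d, !e) := by
        intro h; simp at h; exact absurd hr'.1 (by omega)
      have e2 : act q e (j + sg q d) ((i, !d) :: w) = (i, !d) :: act q e j w := by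
        rw [act, if_neg hn, if_pos hr']
        congr 2
        cases d <;> simp [sg]
      rw [e1, e2, act, if_pos rfl]
    · by_cases h2 : Red q i b.1 b.2
      · have r1 : Red q j b.1 b.2 := by
          unfold Red at *; omega
        have r2 : Red q (j + sg q d) b.1 b.2 := by
          unfold Red at *
          cases d <;> cases hb : b.2 <;> simp [sg, hb] at * <;> omega
        have r3 : Red q (j + sg q b.2) (i + sg q b.2) d := by
          unfold Red at *; omega
        have n1 : ∀ k, Red q k b.1 b.2 → b ≠ (k, !e) := by
          rintro k hk rfl; exact absurd hk.1 (lt_irrefl _)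
        have e1 : act q d i (b :: w) = b :: act q d (i + sg q b.2) w := by
          rw [act, if_neg h1, if_pos h2]
        have e2 : act q e (j + sg q d) (b :: w) = b :: act q e (j + sg q d + sg q b.2) w := by
          rw [act, if_neg (n1 _ r2), if_pos r2]
        rw [e1, e2, act, if_neg (n1 _ r1), if_pos r1, act, if_neg h1, if_pos h2, ih _ _ hw'.2 r3]
        congr 3
        ring_nf
      · have hs : HStuck q (i, d) (b :: w) := ⟨h2, h1⟩
        rw [act_stuck q d i _ hs, act_stuck q d i _ (hstuck_act q hq e i j d _ hw hs hr)]
        have : (i, d) ≠ (j, !e) := by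
          intro h; simp at h; exact absurd hr.1 (by omega)
        rw [act, if_neg this, if_pos hr]

/-- conjugation by `x_0^n` -/
def sh (q n : ℤ) (w : List L) : List L := w.map fun a => (a.1 - n * q, a.2)

lemma sh_sh (q m n : ℤ) (w : List L) : sh q m (sh q n w) = sh q (m + n) w := by
  simp only [sh, List.map_map]
  congr 1
  funext a
  simp only [Function.comp, Prod.mk.injEq, and_true]
  ring

lemma sh_zero (q : ℤ) (w : List L) : sh q 0 w = w := by simp [sh]

lemma hstuck_sh (q n : ℤ) (a : L) (w : List L) :
    HStuck q (a.1 - n * q, a.2) (sh q n w) ↔ HStuck q a w := by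
  cases w with
  | nil => simp [sh, HStuck]
  | cons b w =>
    simp only [sh, List.map_cons, HStuck, Stuck, Red, ne_eq, Prod.ext_iff]
    constructor <;> rintro ⟨h1, h2⟩ <;> constructor <;> intro h
    · apply h1; omega
    · apply h2; exact ⟨by simp; exact h.1, h.2⟩
    · apply h1; omega
    · apply h2; refine ⟨?_, h.2⟩; have := h.1; simp at this; exact this

lemma NF_sh (q n : ℤ) (w : List L) : NF q (sh q n w) ↔ NF q w := by
  induction w with
  | nil => simp [sh]
  | cons b w ih =>
    have : sh q n (b :: w) = (b.1 - n * q, b.2) :: sh q n w := rfl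
    rw [this, NF_cons, NF_cons, ih, hstuck_sh]

lemma act_sh (q n : ℤ) (e : Bool) (w : List L) : ∀ j : ℤ,
    act q e (j - n * q) (sh q n w) = sh q n (act q e j w) := by
  induction w with
  | nil => intro j; simp [act, sh]
  | cons b w ih =>
    intro j
    have : sh q n (b :: w) = (b.1 - n * q, b.2) :: sh q n w := rfl
    rw [this, act, act]
    have h1 : (b.1 - n * q, b.2) = (j - n * q, !e) ↔ b = (j, !e) := by
      simp [Prod.ext_iff]
    have h2 : Red q (j - n * q) (b.1 - n * q) b.2 ↔ Red q j b.1 b.2 := by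
      unfold Red; constructor <;> intro h <;> omega
    simp only [h1, h2]
    split_ifs
    · rfl
    · have h3 : j - n * q + sg q b.2 = j + sg q b.2 - n * q := by ring
      rw [h3, ih]; rfl
    · rfl

abbrev Y (q : ℤ) := {y : List L × ℤ // NF q y.1}

def shP (q : ℤ) : Equiv.Perm (Y q) where
  toFun y := ⟨(sh q 1 y.1.1, y.1.2 + 1), (NF_sh _ _ _).2 y.2⟩
  invFun y := ⟨(sh q (-1) y.1.1, y.1.2 - 1), (NF_sh _ _ _).2 y.2⟩
  left_inv y := by
    apply Subtype.ext; simp [sh_sh, sh_zero]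
  right_inv y := by
    apply Subtype.ext; simp [sh_sh, sh_zero]

def actP (q : ℤ) (hq : 1 ≤ q) (j : ℤ) : Equiv.Perm (Y q) where
  toFun y := ⟨(act q true j y.1.1, y.1.2), NF_act q hq _ _ _ y.2⟩
  invFun y := ⟨(act q false j y.1.1, y.1.2), NF_act q hq _ _ _ y.2⟩
  left_inv y := by
    apply Subtype.ext; exact Prod.ext (act_inv q hq false _ j y.2) rfl
  right_inv y := by
    apply Subtype.ext; exact Prod.ext (act_inv q hq true _ j y.2) rfl

def gen (q : ℤ) (hq : 1 ≤ q) (i : ℕ) : Equiv.Perm (Y q) :=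
  if i = 0 then shP q else actP q hq i

lemma gen_rel (p : ℕ) (q : ℤ) (hq : 1 ≤ q) (hpq : (p : ℤ) = q + 1) (i j : ℕ) (hij : i < j) :
    gen q hq j * gen q hq i = gen q hq i * gen q hq (j + p - 1) := by
  have hj : j ≠ 0 := by omega
  have hj' : j + p - 1 ≠ 0 := by omega
  have hc : ((j + p - 1 : ℕ) : ℤ) = j + q := by omega
  unfold gen
  rw [if_neg hj, if_neg hj', hc]
  split_ifs with hi
  · ext1 y
    apply Subtype.ext
    refine Prod.ext ?_ rfl
    have := act_sh q 1 true y.1.1 (j + q)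
    simpa [actP, shP] using this
  · ext1 y
    apply Subtype.ext
    refine Prod.ext ?_ rfl
    have := act_comm q hq true true y.1.1 i j y.2 (by simp [Red, sg]; omega)
    simpa [actP, sg] using this

def rep (p : ℕ) (q : ℤ) (hq : 1 ≤ q) (hpq : (p : ℤ) = q + 1) : FP p →* Equiv.Perm (Y q) :=
  PresentedGroup.toGroup (f := gen q hq) (by
    rintro r ⟨i, j, hij, rfl⟩
    simp only [map_mul, map_inv, FreeGroup.lift_apply_of]
    rw [gen_rel p q hq hpq i j hij]
    group)

lemma rep_gen (p : ℕ) (q : ℤ) (hq : 1 ≤ q) (hpq : (p : ℤ) = q + 1) (i : ℕ) :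
    rep p q hq hpq (xgen p i) = gen q hq i := PresentedGroup.toGroup.of _

def enc (q : ℤ) : List (ℕ × Bool) → List L × ℤ
  | [] => ([], 0)
  | a :: w =>
    if a.1 = 0 then
      (sh q (if a.2 then 1 else -1) (enc q w).1, (enc q w).2 + (if a.2 then 1 else -1))
    else (((a.1 : ℤ), a.2) :: (enc q w).1, (enc q w).2)

lemma NF_enc_app (q : ℤ) (a u : List (ℕ × Bool)) (h : NF q (enc q (a ++ u)).1) :
    NF q (enc q u).1 := by
  induction a with
  | nil => exact h
  | cons x a ih =>
    apply ih
    rw [List.cons_append, enc] at h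
    split_ifs at h
    · exact (NF_sh _ _ _).1 h
    · exact (NF_sh _ _ _).1 h
    · exact ((NF_cons _ _ _).1 h).2

lemma enc_rep (q : ℤ) (m : ℕ) (b : Bool) (u : List (ℕ × Bool)) :
    enc q (List.replicate m (0, b) ++ u) =
      (sh q (if b then (m : ℤ) else -m) (enc q u).1, (enc q u).2 + (if b then (m : ℤ) else -m)) := by
  induction m with
  | zero => simp [sh_zero]
  | succ m ih =>
    rw [List.replicate_succ, List.cons_append, enc, ih]
    simp only [sh_sh, if_true]
    cases b
    · simp only [Bool.false_eq_true, if_false]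
      refine Prod.ext ?_ ?_
      · simp only; congr 1; push_cast; ring
      · simp only; push_cast; ring
    · simp only [if_true]
      refine Prod.ext ?_ ?_
      · simp only; congr 1; push_cast; ring
      · simp only; push_cast; ring

/-- the numeric core -/
lemma red_iff (q : ℤ) (a b : ℕ) (m : ℕ) (d : Bool) (ha : 1 ≤ a) (ha' : a ≤ q) (hb : 1 ≤ b)
    (hb' : b ≤ q) : Red q a (b - m * q) d ↔
      if d then (1 ≤ m ∨ b < a) else (2 ≤ m ∨ (m = 1 ∧ b < a)) := by
  unfold Red
  have h0 : m = 0 ∨ m = 1 ∨ 2 ≤ m := by omega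
  rcases h0 with rfl | rfl | h
  · cases d <;> simp [sg] <;> omega
  · cases d <;> simp [sg] <;> omega
  · have : 2 * q ≤ m * q := by
      apply mul_le_mul_of_nonneg_right _ (by omega); exact_mod_cast h
    cases d <;> simp [sg] <;> omega

lemma forb_of_red (p : ℕ) (q : ℤ) (hpq : (p : ℤ) = q + 1) (a b m : ℕ) (e d : Bool)
    (ha : 1 ≤ a) (ha' : a ≤ p - 1) (hb : 1 ≤ b) (hb' : b ≤ p - 1)
    (h : Red q a (b - m * q) d) :
    Forbidden p ((a, e) :: (List.replicate m ((0 : ℕ), true) ++ [(b, d)])) := by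
  rw [red_iff q a b m d ha (by omega) hb (by omega)] at h
  right
  by_cases hab : b < a
  · cases d
    · right; left
      refine ⟨a, b, m - 1, e, hb, hab, ha', ?_⟩
      have : m - 1 + 1 = m := by simp at h; omega
      rw [this]
    · left
      exact ⟨a, b, m, e, hb, hab, ha', rfl⟩
  · cases d
    · right; right; right
      refine ⟨a, b, m - 2, e, ha, by omega, hb', ?_⟩
      have : m - 2 + 2 = m := by simp at h; omega
      rw [this]
    · right; right; left
      refine ⟨a, b, m - 1, e, ha, by omega, hb', ?_⟩
      have : m - 1 + 1 = m := by simp at h; omega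
      rw [this]

lemma red_of_forb (p : ℕ) (q : ℤ) (hpq : (p : ℤ) = q + 1) (u : List (ℕ × Bool))
    (h : Forbidden p u) :
    (∃ (i : ℕ) (ε : Bool), i ≤ p - 1 ∧ u = [(i, ε), (i, !ε)]) ∨
    ∃ (a b m : ℕ) (e d : Bool), 1 ≤ a ∧ 1 ≤ b ∧ Red q a (b - m * q) d ∧
      u = (a, e) :: (List.replicate m ((0 : ℕ), true) ++ [(b, d)]) := by
  rcases h with h | ⟨a, b, k, e, h1, h2, h3, rfl⟩ | ⟨a, b, k, e, h1, h2, h3, rfl⟩ |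
    ⟨a, b, k, e, h1, h2, h3, rfl⟩ | ⟨a, b, k, e, h1, h2, h3, rfl⟩
  · exact Or.inl h
  all_goals
    right
    refine ⟨a, b, _, e, _, by omega, by omega, ?_, rfl⟩
    rw [red_iff q a b _ _ (by omega) (by omega) (by omega) (by omega)]
    simp
    try omega

lemma NFin_tail (p : ℕ) (a : ℕ × Bool) (w : List (ℕ × Bool)) (h : NFin p (a :: w)) :
    NFin p w :=
  ⟨fun b hb => h.1 b (List.mem_cons_of_mem _ hb),
   fun u hu => h.2 u (hu.trans (List.suffix_cons a w).isInfix)⟩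

lemma enc_head (p : ℕ) (q : ℤ) (w : List (ℕ × Bool)) (hw : NFin p w) (b : L) (z : List L)
    (h : (enc q w).1 = b :: z) : ∃ (m c : ℕ) (f : Bool) (w' : List (ℕ × Bool)), 1 ≤ c ∧
      w = List.replicate m (0, f) ++ (c, b.2) :: w' ∧ b.1 = c - (if f then (m : ℤ) else -m) * q := by
  induction w generalizing b z with
  | nil => simp [enc] at h
  | cons x w ih =>
    rw [enc] at h
    by_cases hx : x.1 = 0
    · rw [if_pos hx] at h
      cases h4 : (enc q w).1 with
      | nil => simp [h4, sh] at h
      | cons b' z' =>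
        obtain ⟨m, c, f, w', hc, e1, e2⟩ := ih (NFin_tail _ _ _ hw) b' z' h4
        have hxx : x = (0, x.2) := by rw [← hx]
        simp only [h4, sh, List.map_cons, List.cons.injEq] at h
        obtain ⟨rfl, _⟩ := h
        by_cases hm : m = 0
        · subst hm
          refine ⟨1, c, x.2, w', hc, ?_, ?_⟩
          · rw [hxx, e1]; simp
          · simp at e2; simp [e2]
        · have hf : f = x.2 := by
            by_contra hne
            have hf' : f = !x.2 := by
              have hb : ∀ f g : Bool, ¬ f = g → f = !g := by decide
              exact hb _ _ hne
            apply hw.2 [(0, x.2), (0, !x.2)]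
            · obtain ⟨m, rfl⟩ := Nat.exists_eq_succ_of_ne_zero hm
              refine ⟨[], List.replicate m (0, f) ++ (c, b'.2) :: w', ?_⟩
              rw [e1, hxx, List.replicate_succ, hf']; simp
            · exact Or.inl ⟨0, x.2, by omega, rfl⟩
          refine ⟨m + 1, c, f, w', hc, ?_, ?_⟩
          · rw [hxx, e1, List.replicate_succ, ← hf]; simp
          · rw [e2, ← hf]; cases f <;> simp <;> ring
    · rw [if_neg hx] at h
      simp only [List.cons.injEq] at h
      obtain ⟨rfl, _⟩ := h
      exact ⟨0, x.1, true, w, by omega, by simp, by simp⟩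

lemma NFin_stuck (p : ℕ) (q : ℤ) (hq : 1 ≤ q) (hpq : (p : ℤ) = q + 1) (a : ℕ × Bool)
    (ha : a.1 ≠ 0) (w : List (ℕ × Bool))
    (hw : NFin p (a :: w)) : HStuck q ((a.1 : ℤ), a.2) (enc q w).1 := by
  cases h : (enc q w).1 with
  | nil => trivial
  | cons b z =>
    obtain ⟨m, c, f, w', hc, e1, e2⟩ := enc_head p q w (NFin_tail _ _ _ hw) b z h
    have ha' := hw.1 a (by simp)
    have hc' : c ≤ p - 1 := hw.1 (c, b.2) (by rw [e1]; simp)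
    have hmq : 0 ≤ (m : ℤ) * q := by positivity
    constructor
    · intro hr
      simp only at hr
      cases f with
      | true =>
        rw [e2] at hr
        refine hw.2 _ ?_ (forb_of_red p q hpq a.1 c m a.2 b.2 (by omega) ha' hc hc' hr)
        exact ⟨[], w', by rw [e1]; simp⟩
      | false =>
        have hr' : Red q a.1 (c - (0 : ℕ) * q) b.2 := by
          unfold Red at *; simp at e2; simp; omega
        have hm : m = 0 := by
          by_contra hm
          have : 1 * q ≤ m * q := by
            apply mul_le_mul_of_nonneg_right _ (by omega)
            have : 1 ≤ m := by omega
            exact_mod_cast this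
          unfold Red at hr; simp at e2; omega
        subst hm
        refine hw.2 _ ?_ (forb_of_red p q hpq a.1 c 0 a.2 b.2 (by omega) ha' hc hc' hr')
        exact ⟨[], w', by rw [e1]; simp⟩
    · intro hb
      rw [hb] at e2 e1
      simp only at e2 e1
      have hm : m = 0 := by
        by_contra hm
        have : 1 * q ≤ m * q := by
          apply mul_le_mul_of_nonneg_right _ (by omega)
          have : 1 ≤ m := by omega
          exact_mod_cast this
        cases f <;> simp at e2 <;> omega
      subst hm
      simp at e2
      refine hw.2 [(a.1, a.2), (a.1, !a.2)] ?_ (Or.inl ⟨a.1, a.2, ha', rfl⟩)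
      exact ⟨[], w', by rw [e1, ← e2]; simp⟩

lemma NF_enc (p : ℕ) (q : ℤ) (hq : 1 ≤ q) (hpq : (p : ℤ) = q + 1) (w : List (ℕ × Bool))
    (hw : NFin p w) : NF q (enc q w).1 := by
  induction w with
  | nil => trivial
  | cons a w ih =>
    have ih := ih (NFin_tail _ _ _ hw)
    rw [enc]
    by_cases ha : a.1 = 0
    · rw [if_pos ha]; exact (NF_sh _ _ _).2 ih
    · rw [if_neg ha]
      exact (NF_cons _ _ _).2 ⟨NFin_stuck p q hq hpq a ha w hw, ih⟩

def base (q : ℤ) : Y q := ⟨([], 0), trivial⟩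

lemma rep_eval (p : ℕ) (q : ℤ) (hq : 1 ≤ q) (hpq : (p : ℤ) = q + 1) (w : List (ℕ × Bool))
    (hw : NFin p w) : (rep p q hq hpq (evalWord p w) (base q)).1 = enc q w := by
  induction w with
  | nil => simp [evalWord, base, enc]
  | cons a w ih =>
    have ih := ih (NFin_tail _ _ _ hw)
    have e1 : evalWord p (a :: w) =
      (if a.2 then xgen p a.1 else (xgen p a.1)⁻¹) * evalWord p w := by simp [evalWord]
    rw [e1, map_mul, Equiv.Perm.mul_apply]
    set y := rep p q hq hpq (evalWord p w) (base q) with hy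
    rw [enc, ← ih]
    by_cases ha : a.1 = 0
    · rw [if_pos ha]
      cases h : a.2 with
      | true =>
        rw [if_pos rfl, rep_gen, gen, if_pos ha]; rfl
      | false =>
        rw [if_neg (by simp), map_inv, rep_gen, gen, if_pos ha]; rfl
    · rw [if_neg ha]
      have hs := NFin_stuck p q hq hpq a ha w hw
      rw [← ih] at hs
      have := act_stuck q _ _ _ hs
      rw [← this]
      cases h : a.2 with
      | true =>
        rw [if_pos rfl, rep_gen, gen, if_neg ha]; rfl
      | false =>
        rw [if_neg (by simp), map_inv, rep_gen, gen, if_neg ha]; rfl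

/-- Free group element attached to `X_j`. -/
def XF (q : ℤ) (j : ℤ) : FreeGroup ℕ :=
  (FreeGroup.of 0) ^ (-((j - 1) / q)) * FreeGroup.of ((j - 1) % q + 1).toNat *
    (FreeGroup.of 0) ^ ((j - 1) / q)

def XE {G : Type} [Group G] (X : ℤ → G) (a : L) : G := if a.2 then X a.1 else (X a.1)⁻¹

def D (q : ℤ) (y : List L × ℤ) : FreeGroup ℕ :=
  (y.1.map (XE (XF q))).prod * (FreeGroup.of 0) ^ y.2

lemma XF_sh (q : ℤ) (hq : 1 ≤ q) (j n : ℤ) :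
    XF q (j - n * q) = (FreeGroup.of 0) ^ n * XF q j * (FreeGroup.of 0) ^ (-n) := by
  have h1 : (j - n * q - 1) / q = (j - 1) / q - n := by
    have : j - n * q - 1 = (j - 1) + (-n) * q := by ring
    rw [this, Int.add_mul_ediv_right _ _ (by omega)]; ring
  have h2 : (j - n * q - 1) % q = (j - 1) % q := by
    have : j - n * q - 1 = (j - 1) + (-n) * q := by ring
    rw [this, Int.add_mul_emod_self_right]
  unfold XF
  rw [h1, h2]
  group

lemma XF_small (q : ℤ) (a : ℕ) (h1 : 1 ≤ a) (h2 : a ≤ q) : XF q a = FreeGroup.of a := by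
  have e1 : ((a : ℤ) - 1) / q = 0 := Int.ediv_eq_zero_of_lt (by omega) (by omega)
  have e2 : ((a : ℤ) - 1) % q = a - 1 := Int.emod_eq_of_lt (by omega) (by omega)
  unfold XF
  rw [e1, e2]
  simp

lemma D_cons (q : ℤ) (a : L) (z : List L) (s : ℤ) :
    D q (a :: z, s) = XE (XF q) a * D q (z, s) := by
  simp [D, mul_assoc]

lemma D_sh (q : ℤ) (hq : 1 ≤ q) (n : ℤ) (z : List L) (s : ℤ) :
    D q (sh q n z, s + n) = (FreeGroup.of 0) ^ n * D q (z, s) := by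
  induction z with
  | nil => simp [D, sh, zpow_add]; group
  | cons a z ih =>
    have : sh q n (a :: z) = (a.1 - n * q, a.2) :: sh q n z := rfl
    rw [this, D_cons, D_cons, ih]
    have : XE (XF q) (a.1 - n * q, a.2) =
        (FreeGroup.of 0) ^ n * XE (XF q) a * (FreeGroup.of 0) ^ (-n) := by
      unfold XE
      simp only [XF_sh q hq]
      split_ifs
      · rfl
      · group
    rw [this]
    group

lemma D_enc (q : ℤ) (hq : 1 ≤ q) (w : List (ℕ × Bool)) (hw : ∀ a ∈ w, (a.1 : ℤ) ≤ q) :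
    D q (enc q w) = FreeGroup.mk w := by
  induction w with
  | nil => simp [D, enc]; rfl
  | cons a w ih =>
    have ih := ih (fun b hb => hw b (List.mem_cons_of_mem _ hb))
    have e1 : (FreeGroup.mk (a :: w)) =
        (if a.2 then FreeGroup.of a.1 else (FreeGroup.of a.1)⁻¹) * FreeGroup.mk w := by
      obtain ⟨i, b⟩ := a
      cases b <;> simp [FreeGroup.of, FreeGroup.inv_mk, FreeGroup.mul_mk, FreeGroup.invRev]
    rw [e1, enc, ← ih]
    by_cases ha : a.1 = 0
    · rw [if_pos ha, D_sh q hq, ha]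
      cases a.2 <;> simp
    · rw [if_neg ha, D_cons]
      unfold XE
      simp only
      rw [XF_small q a.1 (by omega) (hw a (by simp))]

lemma enc_inj (p : ℕ) (q : ℤ) (hq : 1 ≤ q) (hpq : (p : ℤ) = q + 1) (w w' : List (ℕ × Bool))
    (hw : NFin p w) (hw' : NFin p w') (h : enc q w = enc q w') : w = w' := by
  have key : ∀ w, NFin p w → FreeGroup.IsReduced w := by
    intro w hw
    induction w with
    | nil => exact List.isChain_nil
    | cons a w ih =>
      have ih := ih (NFin_tail _ _ _ hw)
      cases w with
      | nil => exact List.isChain_singleton _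
      | cons b w =>
        refine List.isChain_cons_cons.2 ⟨?_, ih⟩
        intro hab
        by_contra hne
        have hb : b = (a.1, !a.2) := by
          refine Prod.ext hab.symm ?_
          cases h1 : a.2 <;> cases h2 : b.2 <;> simp_all
        refine hw.2 [(a.1, a.2), (a.1, !a.2)] ⟨[], w, by rw [hb]; simp⟩
          (Or.inl ⟨a.1, a.2, hw.1 a (by simp), rfl⟩)
  have e := congrArg (D q) h
  rw [D_enc q hq w (fun a ha => by have := hw.1 a ha; omega),
    D_enc q hq w' (fun a ha => by have := hw'.1 a ha; omega)] at e
  have e' := congrArg FreeGroup.toWord e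
  rw [FreeGroup.toWord_mk, FreeGroup.toWord_mk, (key w hw).reduce_eq, (key w' hw').reduce_eq] at e'
  exact e'

/-- existence of words -/
lemma enc_surj (q : ℤ) (hq : 1 ≤ q) (z : List L) : ∀ s : ℤ, ∃ w : List (ℕ × Bool),
    (∀ a ∈ w, (a.1 : ℤ) ≤ q) ∧ enc q w = (z, s) := by
  have shc : ∀ (n : ℤ) (w : List (ℕ × Bool)), (∀ a ∈ w, (a.1 : ℤ) ≤ q) →
      ∃ w' : List (ℕ × Bool), (∀ a ∈ w', (a.1 : ℤ) ≤ q) ∧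
        enc q w' = (sh q n (enc q w).1, (enc q w).2 + n) := by
    intro n w hw
    refine ⟨List.replicate n.natAbs (0, decide (0 ≤ n)) ++ w, ?_, ?_⟩
    · intro a ha
      rcases List.mem_append.1 ha with h | h
      · rw [List.eq_of_mem_replicate h]; simp; omega
      · exact hw a h
    · rw [enc_rep]
      have : (if decide (0 ≤ n) = true then (n.natAbs : ℤ) else -n.natAbs) = n := by
        split_ifs with h <;> simp at h <;> omega
      rw [this]
  induction z with
  | nil =>
    intro s
    obtain ⟨w', h1, h2⟩ := shc s [] (by simp)
    exact ⟨w', h1, by rw [h2]; simp [enc, sh]⟩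
  | cons a z ih =>
    intro s
    obtain ⟨w, h1, h2⟩ := ih s
    set m := (a.1 - 1) / q with hm
    obtain ⟨w', h3, h4⟩ := shc m w h1
    have r1 := Int.emod_nonneg (a.1 - 1) (b := q) (by omega)
    have r2 := Int.emod_lt_of_pos (a.1 - 1) (b := q) (by omega)
    have r3 := Int.emod_add_mul_ediv (a.1 - 1) q
    rw [← hm] at r3
    obtain ⟨c, hc⟩ : ∃ c : ℕ, (c : ℤ) = (a.1 - 1) % q + 1 :=
      ⟨((a.1 - 1) % q + 1).toNat, Int.toNat_of_nonneg (by omega)⟩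
    obtain ⟨w'', h5, h6⟩ := shc (-m) ((c, a.2) :: w') (by
      intro b hb
      rcases List.mem_cons.1 hb with rfl | hb
      · simp; omega
      · exact h3 b hb)
    refine ⟨w'', h5, ?_⟩
    rw [h6, enc, if_neg (by simp; omega), h4, h2]
    have e : sh q (-m) (((c : ℤ), a.2) :: sh q m z) =
      ((c : ℤ) - (-m) * q, a.2) :: sh q (-m) (sh q m z) := rfl
    simp only [e, sh_sh]
    have : (c : ℤ) - (-m) * q = a.1 := by rw [hc]; linarith [mul_comm m q]
    rw [this]
    simp [sh_zero]

lemma enc_append_congr (q : ℤ) (a u v : List (ℕ × Bool)) (h : enc q u = enc q v) :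
    enc q (a ++ u) = enc q (a ++ v) := by
  induction a with
  | nil => exact h
  | cons x a ih => simp only [List.cons_append, enc, ih]

lemma enc_surj_NFin (p : ℕ) (q : ℤ) (hq : 1 ≤ q) (hpq : (p : ℤ) = q + 1) (y : Y q) :
    ∃ w, NFin p w ∧ enc q w = y.1 := by
  classical
  have hex : ∃ n : ℕ, ∃ w : List (ℕ × Bool), w.length = n ∧
      (∀ a ∈ w, (a.1 : ℤ) ≤ q) ∧ enc q w = y.1 := by
    obtain ⟨w, h⟩ := enc_surj q hq y.1.1 y.1.2
    exact ⟨_, w, rfl, h⟩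
  obtain ⟨w, hl, hw, he⟩ := Nat.find_spec hex
  refine ⟨w, ⟨fun a ha => by have := hw a ha; omega, ?_⟩, he⟩
  rintro u ⟨s, t, rfl⟩ hu
  have hNF := y.2
  rw [← he, List.append_assoc] at hNF
  have hNF := NF_enc_app q _ _ hNF
  rcases red_of_forb p q hpq u hu with ⟨i, e, hi, rfl⟩ | ⟨a, b, m, e, d, ha, hb, hr, rfl⟩
  · by_cases h0 : i = 0
    · subst h0
      have e1 : enc q ([(0, e), (0, !e)] ++ t) = enc q t := by
        cases e <;> simp [enc, sh_sh, sh_zero]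
      have e2 := enc_append_congr q s _ _ e1
      refine Nat.find_min hex (m := (s ++ t).length) ?_ ⟨s ++ t, rfl, ?_, ?_⟩
      · rw [← hl]; simp
      · intro a ha
        apply hw
        rcases List.mem_append.1 ha with h | h <;> simp [h]
      · rw [← e2, ← he, List.append_assoc]
    · simp [enc, h0, NF, Stuck] at hNF
  · have e1 : (a, e) :: (List.replicate m ((0 : ℕ), true) ++ [(b, d)]) ++ t =
      (a, e) :: (List.replicate m ((0 : ℕ), true) ++ ((b, d) :: t)) := by simp
    rw [e1, enc, if_neg (by simp; omega), enc_rep, if_pos rfl, enc,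
      if_neg (show ¬ (b, d).1 = 0 by simp; omega)] at hNF
    exact hNF.1.1 hr

/-- evaluation of `Y` in `F(p)` -/
def E (p : ℕ) (q : ℤ) (y : List L × ℤ) : FP p := PresentedGroup.mk (ThompsonRels p) (D q y)

def XG (p : ℕ) (q : ℤ) (j : ℤ) : FP p := PresentedGroup.mk (ThompsonRels p) (XF q j)

lemma mk_of (p i : ℕ) : PresentedGroup.mk (ThompsonRels p) (FreeGroup.of i) = xgen p i := rfl

lemma XG_sh (p : ℕ) (q : ℤ) (hq : 1 ≤ q) (j n : ℤ) :
    XG p q (j - n * q) = (xgen p 0) ^ n * XG p q j * (xgen p 0) ^ (-n) := by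
  unfold XG
  rw [XF_sh q hq]
  simp only [map_mul, map_zpow, mk_of]

lemma x_rel (p i j : ℕ) (h : i < j) :
    xgen p j * xgen p i = xgen p i * xgen p (j + p - 1) := by
  have : PresentedGroup.mk (ThompsonRels p) (FreeGroup.of j * FreeGroup.of i *
      (FreeGroup.of (j + p - 1))⁻¹ * (FreeGroup.of i)⁻¹) = 1 :=
    PresentedGroup.one_of_mem ⟨i, j, h, rfl⟩
  simp only [map_mul, map_inv, mk_of] at this
  rw [mul_inv_eq_one, mul_inv_eq_iff_eq_mul] at this
  exact this

lemma XG_nat (p : ℕ) (q : ℤ) (hq : 1 ≤ q) (hpq : (p : ℤ) = q + 1) (j : ℕ) (hj : 1 ≤ j) :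
    XG p q j = xgen p j := by
  induction j using Nat.strong_induction_on with
  | _ j ih =>
    by_cases h : (j : ℤ) ≤ q
    · unfold XG; rw [XF_small q j hj h, mk_of]
    · obtain ⟨k, rfl⟩ : ∃ k, j = k + p - 1 := ⟨j - (p - 1), by omega⟩
      have hk := ih k (by omega) (by omega)
      have hr := x_rel p 0 k (by omega)
      have := XG_sh p q hq k (-1)
      have hc : ((k + p - 1 : ℕ) : ℤ) = k - (-1) * q := by omega
      rw [hc, this, hk]
      simp only [neg_neg, zpow_one, zpow_neg]
      rw [mul_assoc, hr]
      group

lemma XG_rel (p : ℕ) (q : ℤ) (hq : 1 ≤ q) (hpq : (p : ℤ) = q + 1) (i j : ℤ) (h : i < j) :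
    XG p q j * XG p q i = XG p q i * XG p q (j + q) := by
  -- shift everything to be positive
  set n : ℤ := |i| + 1 with hn
  have hnq : n * 1 ≤ n * q := mul_le_mul_of_nonneg_left hq (by positivity)
  have hi : 1 ≤ i + n * q := by have := neg_abs_le i; linarith
  obtain ⟨i', hi'⟩ : ∃ i' : ℕ, (i' : ℤ) = i + n * q :=
    ⟨(i + n * q).toNat, Int.toNat_of_nonneg (by omega)⟩
  obtain ⟨j', hj'⟩ : ∃ j' : ℕ, (j' : ℤ) = j + n * q :=
    ⟨(j + n * q).toNat, Int.toNat_of_nonneg (by omega)⟩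
  have r := x_rel p i' j' (by omega)
  rw [← XG_nat p q hq hpq i' (by omega), ← XG_nat p q hq hpq j' (by omega),
    ← XG_nat p q hq hpq (j' + p - 1) (by omega)] at r
  have e1 : i = i' - n * q := by omega
  have e2 : j = j' - n * q := by omega
  have e3 : j + q = ((j' + p - 1 : ℕ) : ℤ) - n * q := by omega
  rw [e3, e1, e2, XG_sh p q hq, XG_sh p q hq, XG_sh p q hq]
  have : ∀ a b c : FP p, a * b = b * c → ∀ t : FP p,
      t ^ n * a * t ^ (-n) * (t ^ n * b * t ^ (-n)) =
      t ^ n * b * t ^ (-n) * (t ^ n * c * t ^ (-n)) := by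
    intro a b c h t
    have l : t ^ n * a * t ^ (-n) * (t ^ n * b * t ^ (-n)) = t ^ n * (a * b) * t ^ (-n) := by group
    rw [l, h]; group
  exact this _ _ _ r _

lemma E_cons (p : ℕ) (q : ℤ) (a : L) (z : List L) (s : ℤ) :
    E p q (a :: z, s) = XE (XG p q) a * E p q (z, s) := by
  unfold E
  rw [D_cons, map_mul]
  congr 1
  unfold XE
  split_ifs <;> simp [XG]

lemma XE_rel (p : ℕ) (q : ℤ) (hq : 1 ≤ q) (hpq : (p : ℤ) = q + 1) (i j : ℤ) (e d : Bool)
    (h : Red q j i d) :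
    XE (XG p q) (j, e) * XE (XG p q) (i, d) =
      XE (XG p q) (i, d) * XE (XG p q) (j + sg q d, e) := by
  have key : XG p q j * XE (XG p q) (i, d) = XE (XG p q) (i, d) * XG p q (j + sg q d) := by
    unfold Red at h
    cases d
    · simp [sg] at h
      have := XG_rel p q hq hpq i (j - q) (by omega)
      simp only [sub_add_cancel] at this
      simp only [XE, sg, Bool.false_eq_true, if_false, ← sub_eq_add_neg]
      rw [eq_inv_mul_iff_mul_eq, ← mul_assoc, ← this]
      group
    · simpa [XE, sg] using XG_rel p q hq hpq i j h.1
  cases e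
  · have h1 : ∀ (x : L → FP p) (c : ℤ), XE (XG p q) (c, false) = (XG p q c)⁻¹ := by
      intros; simp [XE]
    rw [h1 (fun _ => 1), h1 (fun _ => 1), inv_mul_eq_iff_eq_mul, ← mul_assoc, key]
    group
  · simpa [XE] using key

lemma E_act (p : ℕ) (q : ℤ) (hq : 1 ≤ q) (hpq : (p : ℤ) = q + 1) (e : Bool) (z : List L)
    (s : ℤ) : ∀ j : ℤ, E p q (act q e j z, s) = XE (XG p q) (j, e) * E p q (z, s) := by
  induction z with
  | nil => intro j; rw [act, E_cons]
  | cons b z ih =>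
    intro j
    rw [act]
    split_ifs with h1 h2
    · subst h1
      rw [E_cons, ← mul_assoc]
      cases e <;> simp [XE]
    · rw [E_cons, ih, E_cons, ← mul_assoc, ← mul_assoc, XE_rel p q hq hpq b.1 j e b.2 h2]
    · rw [E_cons]

lemma E_gen (p : ℕ) (q : ℤ) (hq : 1 ≤ q) (hpq : (p : ℤ) = q + 1) (i : ℕ) (y : Y q) :
    E p q (gen q hq i y).1 = xgen p i * E p q y.1 := by
  unfold gen
  split_ifs with hi
  · subst hi
    have := D_sh q hq 1 y.1.1 y.1.2
    unfold E
    have e : ((shP q) y).1 = (sh q 1 y.1.1, y.1.2 + 1) := rfl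
    rw [e, this, map_mul, zpow_one, mk_of]
  · have e : ((actP q hq i) y).1 = (act q true i y.1.1, y.1.2) := rfl
    rw [e, E_act p q hq hpq]
    simp [XE, XG_nat p q hq hpq i (by omega)]

lemma E_rep (p : ℕ) (q : ℤ) (hq : 1 ≤ q) (hpq : (p : ℤ) = q + 1) (g : FP p) : ∀ (y : Y q),
    E p q (rep p q hq hpq g y).1 = g * E p q y.1 := by
  obtain ⟨g, rfl⟩ := PresentedGroup.mk_surjective _ g
  induction g using FreeGroup.induction_on with
  | C1 => intro y; simp
  | of i => intro y; rw [mk_of, rep_gen, E_gen p q hq hpq]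
  | inv_of i h =>
    intro y
    have := h ((rep p q hq hpq (PresentedGroup.mk (ThompsonRels p) (FreeGroup.of i)⁻¹)) y)
    rw [map_inv, eq_inv_mul_iff_mul_eq, ← map_inv, ← this]
    simp
  | mul a b ha hb =>
    intro y
    rw [map_mul, map_mul, Equiv.Perm.mul_apply, ha, hb, mul_assoc]

lemma mk_word (p : ℕ) (w : List (ℕ × Bool)) :
    PresentedGroup.mk (ThompsonRels p) (FreeGroup.mk w) = evalWord p w := by
  induction w with
  | nil => simp [evalWord]; exact map_one _
  | cons a w ih =>
    have e1 : (FreeGroup.mk (a :: w)) =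
        (if a.2 then FreeGroup.of a.1 else (FreeGroup.of a.1)⁻¹) * FreeGroup.mk w := by
      obtain ⟨i, b⟩ := a
      cases b <;> simp [FreeGroup.of, FreeGroup.inv_mk, FreeGroup.mul_mk, FreeGroup.invRev]
    rw [e1, map_mul, ih]
    simp only [evalWord, List.map_cons, List.prod_cons]
    congr 1
    split_ifs <;> simp [mk_of]

end T6

/-- Every element of `F(p)` is represented by exactly one word with no
forbidden subword: the evaluation map is a bijection from `N_fin(p)` onto
`F(p)`. -/
theorem stmt6 (p : ℕ) (hp : 2 ≤ p) :
    Set.BijOn (evalWord p) {w | NFin p w} (Set.univ : Set (FP p)) := by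
  obtain ⟨q, hpq⟩ : ∃ q : ℤ, (p : ℤ) = q + 1 := ⟨p - 1, by ring⟩
  have hq : 1 ≤ q := by omega
  refine ⟨fun _ _ => Set.mem_univ _, ?_, ?_⟩
  · intro w hw w' hw' h
    apply T6.enc_inj p q hq hpq w w' hw hw'
    rw [← T6.rep_eval p q hq hpq w hw, ← T6.rep_eval p q hq hpq w' hw', h]
  · intro g _
    obtain ⟨w, hw, he⟩ := T6.enc_surj_NFin p q hq hpq (T6.rep p q hq hpq g (T6.base q))
    refine ⟨w, hw, ?_⟩
    have h1 := T6.E_rep p q hq hpq g (T6.base q)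
    rw [← he] at h1
    have h2 : T6.E p q (T6.base q).1 = 1 := by simp [T6.E, T6.D, T6.base]
    rw [h2, mul_one] at h1
    rw [← h1, T6.E, T6.D_enc q hq w (fun a ha => by have := hw.1 a ha; omega), T6.mk_word]
end

section
/- The growth rate of the monoid F_+(p) exists and equals a number ζ_p satisfying p < ζ_p < p + 1/2 and (ζ_p² − 1)^{p−1}·(ζ_p² + ζ_p − 1) = ζ_p^{2p}. That is, the limit ζ_p = lim_{n→∞} (#(F_+(p) ∩ B(n)))^{1/n} exists, lies strictly between p and p + 1/2, and is a root of the equation (y² − 1)^{p−1}(y² + y − 1) = y^{2p}. -/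
/-- Word length of `g ∈ F(p)` with respect to `x_0, …, x_{p−1}`: the least `n`
such that `g` is a product of `n` elements of `{x_0^{±1}, …, x_{p−1}^{±1}}`. -/
noncomputable def wlen (p : ℕ) (g : FP p) : ℕ :=
  sInf {n | ∃ l : List (FP p), l.length = n ∧
    (∀ a ∈ l, ∃ i < p, a = xgen p i ∨ a = (xgen p i)⁻¹) ∧ l.prod = g}

/-- The submonoid `F₊(p)` of positive elements, generated by all `x_i`. -/
def Fplus (p : ℕ) : Submonoid (FP p) := Submonoid.closure (Set.range (xgen p))


/-! ## Trees and forests -/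

namespace Thm

inductive Tr (q : ℕ) : Type
  | leaf : Tr q
  | node : (Fin (q+1) → Tr q) → Tr q

variable {q : ℕ}

/-- extend a finite family of trees by leaves -/
def ext (f : Fin (q+1) → Tr q) (k : ℕ) : Tr q := if h : k < q + 1 then f ⟨k, h⟩ else Tr.leaf

lemma ext_val (f : Fin (q+1) → Tr q) (k : Fin (q+1)) : ext f k = f k := by
  simp only [ext, k.2, dite_true]

def Tr.size : Tr q → ℕ
  | .leaf => 1
  | .node f => ∑ k, (f k).size

def triv (f : Fin (q+1) → Tr q) (c : ℕ) : Prop := ∀ k : Fin (q+1), q ≤ c + k → f k = .leaf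

open Classical in
noncomputable def Tr.wt : Tr q → ℕ → ℕ
  | .leaf, _ => 0
  | .node f, m => 1 + (if triv f (m % q) then 0 else 2)
      + ∑ k : Fin (q+1), (f k).wt (m + k)

lemma wt_congr (T : Tr q) : ∀ m m', m % q = m' % q → T.wt m = T.wt m' := by
  induction T with
  | leaf => intros; rfl
  | node f ih =>
    intro m m' h
    simp only [Tr.wt]
    rw [h]
    have hs : ∑ k : Fin (q+1), (f k).wt (m + k) = ∑ k : Fin (q+1), (f k).wt (m' + k) := by
      refine Finset.sum_congr rfl fun k _ => ih k _ _ ?_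
      rw [Nat.add_mod, h, ← Nat.add_mod]
    rw [hs]

def off (φ : ℕ → Tr q) (k : ℕ) : ℕ := ∑ i ∈ Finset.range k, (φ i).size

lemma size_node (f : Fin (q+1) → Tr q) : (Tr.node f).size = off (ext f) (q+1) := by
  simp only [Tr.size, off, ← ext_val]
  rw [Fin.sum_univ_eq_sum_range (fun k => (ext f k).size)]

lemma off_succ (φ : ℕ → Tr q) (k : ℕ) : off φ (k+1) = off φ k + (φ k).size := by
  simp [off, Finset.sum_range_succ]

@[simp] lemma off_zero (φ : ℕ → Tr q) : off φ 0 = 0 := rfl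

lemma size_mod (T : Tr q) : T.size ≡ 1 [MOD q] := by
  induction T with
  | leaf => rfl
  | node f ih =>
    rw [size_node]
    have : ∀ k ≤ q + 1, off (ext f) k ≡ k [MOD q] := by
      intro k
      induction k with
      | zero => intro _; rfl
      | succ k ihk =>
        intro hk
        rw [off_succ]
        refine (ihk (by omega)).add ?_
        have := ih ⟨k, by omega⟩
        rwa [← ext_val f] at this
    refine (this _ le_rfl).trans ?_
    simp [Nat.ModEq]

lemma off_mod (φ : ℕ → Tr q) (k : ℕ) : off φ k ≡ k [MOD q] := by
  induction k with
  | zero => rfl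
  | succ k ih => rw [off_succ]; exact ih.add (size_mod _)

/-! ## Group elements -/

abbrev G (q : ℕ) := FP (q+1)

def tau (q : ℕ) : G q := xgen (q+1) 0
def zz (q : ℕ) (i : ℕ) : G q := xgen (q+1) (i+1)

lemma rel (i j : ℕ) (h : i < j) :
    xgen (q+1) j * xgen (q+1) i = xgen (q+1) i * xgen (q+1) (j+q) := by
  have : (PresentedGroup.mk (ThompsonRels (q+1)))
      (FreeGroup.of j * FreeGroup.of i * (FreeGroup.of (j + (q+1) - 1))⁻¹ * (FreeGroup.of i)⁻¹) = 1 := by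
    rw [PresentedGroup.mk_eq_one_iff]
    exact Subgroup.subset_normalClosure ⟨i, j, h, rfl⟩
  simp only [map_mul, map_inv] at this
  have h2 : j + (q+1) - 1 = j + q := by omega
  rw [h2] at this
  rw [mul_inv_eq_one, mul_inv_eq_iff_eq_mul] at this
  exact this

lemma zz_zz {i j : ℕ} (h : i < j) : zz q j * zz q i = zz q i * zz q (j+q) := by
  have := rel (q := q) (i+1) (j+1) (by omega)
  rw [show j + 1 + q = j + q + 1 by omega] at this
  exact this

lemma zz_tau (j : ℕ) : zz q j * tau q = tau q * zz q (j+q) := by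
  have := rel (q := q) 0 (j+1) (by omega)
  rw [show j + 1 + q = j + q + 1 by omega] at this
  exact this

/-- descending product -/
def dn {M : Type*} [Monoid M] (F : ℕ → M) : ℕ → M
  | 0 => 1
  | (n+1) => F n * dn F n

lemma dn_congr {M : Type*} [Monoid M] (F F' : ℕ → M) (n : ℕ) (h : ∀ i < n, F i = F' i) :
    dn F n = dn F' n := by
  induction n with
  | zero => rfl
  | succ n ih => simp only [dn]; rw [ih (fun i hi => h i (by omega)), h n (by omega)]

lemma dn_add {M : Type*} [Monoid M] (F : ℕ → M) (a b : ℕ) :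
    dn F (a+b) = dn (fun i => F (a+i)) b * dn F a := by
  induction b with
  | zero => simp [dn]
  | succ b ih => rw [← add_assoc]; simp only [dn]; rw [ih, mul_assoc]

lemma dn_one {M : Type*} [Monoid M] (F : ℕ → M) (n : ℕ) (h : ∀ i < n, F i = 1) :
    dn F n = 1 := by
  induction n with
  | zero => rfl
  | succ n ih => simp only [dn]; rw [ih (fun i hi => h i (by omega)), h n (by omega), one_mul]

/-- semiconjugation of descending products -/
lemma dn_conj {M : Type*} [Monoid M] (F F' : ℕ → M) (x : M) (n : ℕ)
    (h : ∀ i < n, x * F i = F' i * x) : x * dn F n = dn F' n * x := by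
  induction n with
  | zero => simp [dn]
  | succ n ih =>
    simp only [dn]
    rw [← mul_assoc, h n (by omega), mul_assoc, ih (fun i hi => h i (by omega)), mul_assoc]

def tel : Tr q → ℕ → G q
  | .leaf, _ => 1
  | .node f, m => zz q m * dn (fun k => if h : k < q + 1 then tel (f ⟨k, h⟩) (m+k) else 1) (q+1)

def fel (m : ℕ) (φ : ℕ → Tr q) (R : ℕ) : G q := dn (fun k => tel (φ k) (m+k)) R

lemma tel_node (f : Fin (q+1) → Tr q) (m : ℕ) :
    tel (.node f) m = zz q m * fel m (ext f) (q+1) := by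
  simp only [tel, fel]
  congr 1
  refine dn_congr _ _ _ fun i hi => ?_
  simp [hi, ext]

lemma fel_succ (m : ℕ) (φ : ℕ → Tr q) (R : ℕ) :
    fel m φ (R+1) = tel (φ R) (m+R) * fel m φ R := rfl

lemma fel_add (m : ℕ) (φ : ℕ → Tr q) (a b : ℕ) :
    fel m φ (a+b) = fel (m+a) (fun i => φ (a+i)) b * fel m φ a := by
  simp only [fel]; rw [dn_add]; simp only [add_assoc]

lemma fel_congr (m : ℕ) (φ ψ : ℕ → Tr q) (R : ℕ) (h : ∀ i < R, φ i = ψ i) :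
    fel m φ R = fel m ψ R := dn_congr _ _ _ fun i hi => by simp only [h i hi]

lemma tau_tel (T : Tr q) (m : ℕ) : tau q * tel T (m+q) = tel T m * tau q := by
  induction T generalizing m with
  | leaf => simp [tel]
  | node f ih =>
    rw [tel_node, tel_node, ← mul_assoc, ← zz_tau, mul_assoc, mul_assoc]
    congr 1
    refine dn_conj _ _ _ _ fun k hk => ?_
    simp only [ext, hk, dite_true]
    rw [← ih]; congr 2; omega

lemma tau_fel (m : ℕ) (φ : ℕ → Tr q) (R : ℕ) :
    tau q * fel (m+q) φ R = fel m φ R * tau q := by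
  refine dn_conj _ _ _ _ fun k _ => ?_
  rw [← tau_tel]; congr 2; omega

lemma zz_tel (T : Tr q) (i m : ℕ) (h : i < m) : zz q i * tel T (m+q) = tel T m * zz q i := by
  induction T generalizing m with
  | leaf => simp [tel]
  | node f ih =>
    rw [tel_node, tel_node, ← mul_assoc, ← zz_zz h, mul_assoc, mul_assoc]
    congr 1
    refine dn_conj _ _ _ _ fun k hk => ?_
    simp only [ext, hk, dite_true]
    rw [← ih _ _ (by omega)]; congr 2; omega

/-- grafting -/
def graft (φ : ℕ → Tr q) (m : ℕ) : ℕ → Tr q := fun i =>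
  if i < m then φ i else if i = m then .node (fun k => φ (m + k)) else φ (i + q)

lemma zz_fel (φ : ℕ → Tr q) (m r : ℕ) :
    zz q m * fel 0 φ (m + (q+1) + r) = fel 0 (graft φ m) (m + 1 + r) := by
  rw [fel_add, fel_add 0 (graft φ m), ← mul_assoc]
  have h1 : zz q m * fel (0 + (m + (q+1))) (fun i => φ (m + (q+1) + i)) r
      = fel (0 + (m+1)) (fun i => graft φ m (m+1+i)) r * zz q m := by
    refine dn_conj _ _ _ _ fun k hk => ?_
    rw [show 0 + (m + (q+1)) + k = (0 + (m+1) + k) + q by omega, zz_tel _ _ _ (by omega)]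
    congr 2
    simp only [graft]
    rw [if_neg (by omega), if_neg (by omega)]
    congr 1; omega
  rw [h1, mul_assoc]
  congr 1
  rw [fel_add, fel_succ 0 (graft φ m), ← mul_assoc]
  congr 1
  · have : graft φ m m = .node (fun k => φ (m + k)) := by simp [graft]
    rw [this, tel_node]
    simp only [zero_add]
    congr 1
    refine fel_congr _ _ _ _ fun i hi => ?_
    simp [ext, hi]
  · refine fel_congr _ _ _ _ fun i hi => ?_
    simp [graft, hi]

lemma tau_mem : tau q ∈ Fplus (q+1) := Submonoid.subset_closure ⟨_, rfl⟩
lemma zz_mem (i : ℕ) : zz q i ∈ Fplus (q+1) := Submonoid.subset_closure ⟨_, rfl⟩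

lemma dn_mem {M : Type*} [Monoid M] (S : Submonoid M) (F : ℕ → M) (n : ℕ) (h : ∀ i < n, F i ∈ S) :
    dn F n ∈ S := by
  induction n with
  | zero => exact S.one_mem
  | succ n ih => exact S.mul_mem (h n (by omega)) (ih fun i hi => h i (by omega))

lemma tel_mem (T : Tr q) (m : ℕ) : tel T m ∈ Fplus (q+1) := by
  induction T generalizing m with
  | leaf => exact Submonoid.one_mem _
  | node f ih =>
    rw [tel_node]
    refine Submonoid.mul_mem _ (zz_mem _) (dn_mem _ _ _ fun i hi => ?_)
    simp only [ext, hi, dite_true]; exact ih _ _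

lemma fel_mem (m : ℕ) (φ : ℕ → Tr q) (R : ℕ) : fel m φ R ∈ Fplus (q+1) :=
  dn_mem _ _ _ fun _ _ => tel_mem _ _

lemma fel_pad (φ : ℕ → Tr q) (R R' : ℕ) (h : R ≤ R') (hl : ∀ i, R ≤ i → φ i = .leaf) :
    fel 0 φ R' = fel 0 φ R := by
  obtain ⟨d, rfl⟩ := Nat.exists_eq_add_of_le h
  rw [fel_add]
  have : fel (0+R) (fun i => φ (R+i)) d = 1 := by
    refine dn_one _ _ fun i _ => ?_
    simp only [hl (R+i) (by omega)]; rfl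
  rw [this, one_mul]

lemma zz_tau_pow (m a : ℕ) : zz q m * tau q ^ a = tau q ^ a * zz q (m + a * q) := by
  induction a with
  | zero => simp
  | succ a ih =>
    rw [pow_succ, ← mul_assoc, ih, mul_assoc, zz_tau, mul_assoc]
    congr 3; ring

/-- normal form -/
lemma exists_rep (g : G q) (hg : g ∈ Fplus (q+1)) :
    ∃ (a : ℕ) (φ : ℕ → Tr q) (R : ℕ), (∀ i, R ≤ i → φ i = .leaf) ∧ g = tau q ^ a * fel 0 φ R := by
  induction hg using Submonoid.closure_induction_left with
  | one => exact ⟨0, fun _ => .leaf, 0, fun _ _ => rfl, by simp [fel, dn]⟩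
  | mul_left x hx y hy ih =>
    obtain ⟨i, rfl⟩ := hx
    obtain ⟨a, φ, R, hl, rfl⟩ := ih
    cases i with
    | zero => exact ⟨a+1, φ, R, hl, by rw [pow_succ', mul_assoc]; rfl⟩
    | succ m =>
      refine ⟨a, graft φ (m + a*q), m + a*q+1+R, ?_, ?_⟩
      · intro i hi
        simp only [graft]
        rw [if_neg (by omega), if_neg (by omega), hl _ (by omega)]
      · rw [← zz_fel, fel_pad φ R (m + a*q + (q+1) + R) (by omega) hl, ← mul_assoc, ← mul_assoc, ← zz_tau_pow]
        rfl

end Thm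


namespace Thm
variable {q : ℕ}

def HasLen (g : G q) (n : ℕ) : Prop := ∃ l : List (FP (q+1)), l.length = n ∧
    (∀ a ∈ l, ∃ i < q+1, a = xgen (q+1) i ∨ a = (xgen (q+1) i)⁻¹) ∧ l.prod = g

lemma HasLen.mul {g h : G q} {m n : ℕ} (hg : HasLen g m) (hh : HasLen h n) :
    HasLen (g * h) (m + n) := by
  obtain ⟨l, rfl, hl, rfl⟩ := hg
  obtain ⟨l', rfl, hl', rfl⟩ := hh
  refine ⟨l ++ l', by simp, ?_, by simp⟩
  intro a ha
  rcases List.mem_append.1 ha with h | h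
  · exact hl a h
  · exact hl' a h

lemma hasLen_one : HasLen (1 : G q) 0 := ⟨[], rfl, by simp, rfl⟩

lemma hasLen_gen {i : ℕ} (h : i < q+1) : HasLen (xgen (q+1) i) 1 :=
  ⟨[xgen (q+1) i], rfl, fun a ha => ⟨i, h, Or.inl (List.mem_singleton.1 ha)⟩, by simp⟩

lemma hasLen_gen_inv {i : ℕ} (h : i < q+1) : HasLen (xgen (q+1) i)⁻¹ 1 :=
  ⟨[(xgen (q+1) i)⁻¹], rfl, fun a ha => ⟨i, h, Or.inr (List.mem_singleton.1 ha)⟩, by simp⟩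

lemma hasLen_tau : HasLen (tau q) 1 := hasLen_gen (by omega)
lemma hasLen_tau_inv : HasLen (tau q)⁻¹ 1 := hasLen_gen_inv (by omega)
lemma hasLen_zz {m : ℕ} (h : m < q) : HasLen (zz q m) 1 := hasLen_gen (by omega)

lemma HasLen.wlen_le {g : G q} {n : ℕ} (h : HasLen g n) : wlen (q+1) g ≤ n := Nat.sInf_le h

lemma hasLen_fel (m : ℕ) (φ : ℕ → Tr q) (R : ℕ)
    (h : ∀ k < R, HasLen (tel (φ k) (m+k)) ((φ k).wt (m+k))) :
    HasLen (fel m φ R) (∑ k ∈ Finset.range R, (φ k).wt (m+k)) := by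
  induction R with
  | zero => exact hasLen_one
  | succ R ih =>
    rw [fel_succ, Finset.sum_range_succ,
      add_comm (∑ x ∈ Finset.range R, (φ x).wt (m + x))]
    exact (h R (by omega)).mul (ih fun k hk => h k (by omega))

lemma hasLen_tel (T : Tr q) (m : ℕ) (hm : m < q) : HasLen (tel T m) (T.wt m) := by
  induction T generalizing m with
  | leaf => exact hasLen_one
  | node f ih =>
    have ih' : ∀ k m, m < q → HasLen (tel (ext f k) m) ((ext f k).wt m) := by
      intro k m hm
      by_cases hk : k < q + 1
      · simp only [ext, hk, dite_true]; exact ih _ _ hm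
      · simp only [ext, hk, dite_false]; exact hasLen_one
    have e1 : fel m (ext f) (q+1) = fel q (fun i => ext f ((q-m)+i)) (m+1) * fel m (ext f) (q-m) := by
      have := fel_add m (ext f) (q-m) (m+1)
      rwa [show (q-m) + (m+1) = q + 1 by omega, show m + (q-m) = q by omega] at this
    have e2 : fel q (fun i => ext f ((q-m)+i)) (m+1) =
        (tau q)⁻¹ * (fel 0 (fun i => ext f ((q-m)+i)) (m+1) * tau q) := by
      rw [← tau_fel, zero_add]; group
    have w : ∑ k : Fin (q+1), (f k).wt (m + k) =
        ∑ i ∈ Finset.range (m+1), (ext f ((q-m)+i)).wt (0+i)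
        + ∑ k ∈ Finset.range (q-m), (ext f k).wt (m+k) := by
      have : ∑ k : Fin (q+1), (f k).wt (m + k) = ∑ k : Fin (q+1), (ext f k).wt (m + k) := by
        simp only [ext_val]
      rw [this, Fin.sum_univ_eq_sum_range (fun k => (ext f k).wt (m+k)),
        show Finset.range (q+1) = Finset.range ((q-m) + (m+1)) by congr 1; omega,
        Finset.sum_range_add, add_comm]
      congr 1
      refine Finset.sum_congr rfl fun i _ => wt_congr _ _ _ ?_
      rw [show m + (q - m + i) = 0 + i + q by omega, Nat.add_mod_right]
    have h2 : HasLen (fel m (ext f) (q-m)) (∑ k ∈ Finset.range (q-m), (ext f k).wt (m+k)) :=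
      hasLen_fel _ _ _ fun k hk => ih' _ _ (by omega)
    have h1 : HasLen (fel 0 (fun i => ext f ((q-m)+i)) (m+1))
        (∑ i ∈ Finset.range (m+1), (ext f ((q-m)+i)).wt (0+i)) :=
      hasLen_fel _ _ _ fun k hk => ih' _ _ (by omega)
    rw [tel_node]
    simp only [Tr.wt]
    rw [w, e1]
    split_ifs with ht
    · have : fel q (fun i => ext f ((q-m)+i)) (m+1) = 1 := by
        refine dn_one _ _ fun i hi => ?_
        have : f ⟨q - m + i, by omega⟩ = .leaf := ht _ (by
          rw [Nat.mod_eq_of_lt hm]; simp only []; omega)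
        have h3 : ext f (q-m+i) = .leaf := by
          rw [← this, ← ext_val f]
        simp only [h3]; rfl
      have hw : ∑ i ∈ Finset.range (m+1), (ext f ((q-m)+i)).wt (0+i) = 0 := by
        refine Finset.sum_eq_zero fun i hi => ?_
        have hi := Finset.mem_range.1 hi
        have : f ⟨q - m + i, by omega⟩ = .leaf := ht _ (by
          rw [Nat.mod_eq_of_lt hm]; simp only []; omega)
        have h3 : ext f (q-m+i) = .leaf := by
          rw [← this, ← ext_val f]
        simp only [h3]; rfl
      rw [this, hw, one_mul, zero_add]
      exact (hasLen_zz hm).mul h2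
    · rw [e2]
      have := (hasLen_zz hm).mul ((hasLen_tau_inv.mul (h1.mul hasLen_tau)).mul h2)
      convert this using 1
      omega

abbrev Bl (q : ℕ) := Fin q → Tr q

noncomputable def bw (β : Bl q) : ℕ := 1 + ∑ c, (β c).wt c
noncomputable def bwt (bs : List (Bl q)) : ℕ := (bs.map bw).sum

def flat : List (Bl q) → ℕ → Tr q
  | [], _ => .leaf
  | (β :: bs), i => if h : i < q then β ⟨i, h⟩ else flat bs (i - q)

def nel (a : ℕ) (bs : List (Bl q)) : G q := tau q ^ a * fel 0 (flat bs) (bs.length * q)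
def el (bs : List (Bl q)) : G q := nel bs.length bs

lemma nel_mem (a : ℕ) (bs : List (Bl q)) : nel a bs ∈ Fplus (q+1) :=
  Submonoid.mul_mem _ (Submonoid.pow_mem _ tau_mem _) (fel_mem _ _ _)

lemma hasLen_el (bs : List (Bl q)) : HasLen (el bs) (bwt bs) := by
  induction bs with
  | nil => simpa [el, nel, fel, dn, bwt] using hasLen_one
  | cons β bs ih =>
    have e : el (β :: bs) = el bs * (tau q * fel 0 (flat (β :: bs)) q) := by
      simp only [el, nel, List.length_cons]
      rw [show (bs.length + 1) * q = q + bs.length * q by ring, fel_add, pow_succ, zero_add]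
      have := tau_fel 0 (fun i => flat (β :: bs) (q + i)) (bs.length * q)
      rw [zero_add] at this
      rw [mul_assoc, ← mul_assoc (tau q), this]
      simp only [mul_assoc]
      congr 2
      refine fel_congr _ _ _ _ fun i hi => ?_
      simp [flat]
    have h1 := hasLen_fel 0 (flat (β :: bs)) q fun k hk => hasLen_tel _ _ (by omega)
    have w : ∑ k ∈ Finset.range q, (flat (β :: bs) k).wt (0+k) = ∑ c, (β c).wt c := by
      rw [← Fin.sum_univ_eq_sum_range (fun k => (flat (β :: bs) k).wt (0+k))]
      refine Finset.sum_congr rfl fun c _ => ?_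
      simp [flat]
    rw [w] at h1
    rw [e]
    have := ih.mul (hasLen_tau.mul h1)
    convert this using 1
    simp only [bwt, List.map_cons, List.sum_cons, bw]
    omega

/-- every element has a length -/
lemma exists_hasLen_gen (hq : 1 ≤ q) (i : ℕ) : ∃ n, HasLen (xgen (q+1) i) n := by
  induction i using Nat.strong_induction_on with
  | _ i ih =>
    by_cases h : i < q + 1
    · exact ⟨1, hasLen_gen h⟩
    · obtain ⟨n, hn⟩ := ih (i - q) (by omega)
      have := rel (q := q) 0 (i-q) (by omega)
      rw [show i - q + q = i by omega] at this
      have e : xgen (q+1) i = (xgen (q+1) 0)⁻¹ * (xgen (q+1) (i-q) * xgen (q+1) 0) := by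
        rw [this]; group
      rw [e]
      exact ⟨_, (hasLen_gen_inv (by omega)).mul (hn.mul (hasLen_gen (by omega)))⟩

lemma exists_hasLen (hq : 1 ≤ q) (g : G q) (hg : g ∈ Fplus (q+1)) : ∃ n, HasLen g n := by
  induction hg using Submonoid.closure_induction with
  | mem x hx => obtain ⟨i, rfl⟩ := hx; exact exists_hasLen_gen hq i
  | one => exact ⟨0, hasLen_one⟩
  | mul x y _ _ hx hy =>
    obtain ⟨m, hm⟩ := hx
    obtain ⟨n, hn⟩ := hy
    exact ⟨_, hm.mul hn⟩

lemma hasLen_wlen (hq : 1 ≤ q) (g : G q) (hg : g ∈ Fplus (q+1)) : HasLen g (wlen (q+1) g) :=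
  Nat.sInf_mem (s := {n | HasLen g n}) (exists_hasLen hq g hg)

lemma finite_ball (hq : 1 ≤ q) (n : ℕ) : {g : G q | g ∈ Fplus (q+1) ∧ wlen (q+1) g ≤ n}.Finite := by
  let A : Set (G q) := (xgen (q+1) '' Set.Iio (q+1)) ∪ ((fun i => (xgen (q+1) i)⁻¹) '' Set.Iio (q+1))
  have hA : A.Finite := ((Set.finite_Iio _).image _).union ((Set.finite_Iio _).image _)
  have hL : ∀ n, {l : List (G q) | l.length = n ∧ ∀ a ∈ l, a ∈ A}.Finite := by
    intro n
    induction n with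
    | zero =>
      refine (Set.finite_singleton []).subset ?_
      rintro l ⟨hl, -⟩
      exact List.length_eq_zero_iff.1 hl
    | succ n ih =>
      refine (Set.Finite.image2 List.cons hA ih).subset ?_
      rintro l ⟨hl, h⟩
      match l, hl, h with
      | a :: l, hl, h =>
        exact ⟨a, h a (by simp), l, ⟨by simpa using hl, fun b hb => h b (by simp [hb])⟩, rfl⟩
  have : (⋃ k ∈ Set.Iic n, List.prod '' {l : List (G q) | l.length = k ∧ ∀ a ∈ l, a ∈ A}).Finite :=
    (Set.finite_Iic n).biUnion fun k _ => (hL k).image _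
  refine this.subset ?_
  rintro g ⟨hg, hn⟩
  obtain ⟨l, hl, h1, h2⟩ := hasLen_wlen hq g hg
  simp only [Set.mem_iUnion]
  refine ⟨_, hn, l, ⟨hl, fun a ha => ?_⟩, h2⟩
  obtain ⟨i, hi, h | h⟩ := h1 a ha
  · exact Or.inl ⟨i, hi, h.symm⟩
  · exact Or.inr ⟨i, hi, h.symm⟩

end Thm


namespace Thm
variable {q : ℕ}

abbrev XX (q : ℕ) := ℤ × Stream' (Fin (q+1))

def dig (q : ℕ) (k : ℤ) : Fin (q+1) := Fin.ofNat (q+1) k.toNat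

lemma dig_val {k : ℤ} (h0 : 0 ≤ k) (h : k ≤ q) : ((dig q k : Fin (q+1)) : ℤ) = k := by
  simp only [dig, Fin.val_ofNat]
  rw [Nat.mod_eq_of_lt (by omega)]; omega

lemma dig_coe (k : Fin (q+1)) : dig q (k : ℤ) = k := by
  apply Fin.ext
  have := dig_val (q := q) (k := (k : ℤ)) (by omega) (by omega)
  exact_mod_cast this

def con (q : ℕ) (i : ℤ) (y : XX q) : XX q :=
  if y.1 < i then y else if y.1 ≤ i + q then (i, Stream'.cons (dig q (y.1 - i)) y.2) else (y.1 - q, y.2)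

def exp (q : ℕ) (i : ℤ) (y : XX q) : XX q :=
  if y.1 < i then y else if y.1 = i then (i + (y.2.head : ℕ), y.2.tail) else (y.1 + q, y.2)

lemma con_lt {i j : ℤ} (s) (h : j < i) : con q i (j, s) = (j, s) := by simp [con, h]
lemma con_mid (i : ℤ) (k : Fin (q+1)) (s) : con q i (i + (k : ℕ), s) = (i, Stream'.cons k s) := by
  have h : ¬ (i + (k : ℕ) : ℤ) < i := by omega
  have h2 : (i + (k : ℕ) : ℤ) ≤ i + q := by omega
  simp only [con, h, h2, if_true, if_false]
  rw [show i + ((k : ℕ) : ℤ) - i = ((k : ℕ) : ℤ) by omega, dig_coe]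
lemma con_gt {i j : ℤ} (s) (h : i + q < j) : con q i (j, s) = (j - q, s) := by
  have h1 : ¬ j < i := by omega
  have h2 : ¬ j ≤ i + q := by omega
  simp [con, h1, h2]

lemma exp_lt {i j : ℤ} (s) (h : j < i) : exp q i (j, s) = (j, s) := by simp [exp, h]
lemma exp_mid (i : ℤ) (k : Fin (q+1)) (s) : exp q i (i, Stream'.cons k s) = (i + (k : ℕ), s) := by
  simp [exp]
lemma exp_gt {i j : ℤ} (s) (h : i < j) : exp q i (j, s) = (j + q, s) := by
  have h1 : ¬ j < i := by omega
  have h2 : ¬ j = i := by omega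
  simp [exp, h1, h2]

/-- case analysis of a point for con -/
lemma con_cases (i : ℤ) (y : XX q) : y.1 < i ∨ (∃ (k : Fin (q+1)) (s : _), y = (i + (k : ℕ), s)) ∨ i + q < y.1 := by
  obtain ⟨j, s⟩ := y
  by_cases h : j < i
  · exact Or.inl h
  by_cases h2 : i + q < j
  · exact Or.inr (Or.inr h2)
  refine Or.inr (Or.inl ⟨⟨(j - i).toNat, by omega⟩, s, ?_⟩)
  simp only [Prod.mk.injEq, and_true]; omega

lemma exp_cases (i : ℤ) (y : XX q) : y.1 < i ∨ (∃ (k : Fin (q+1)) (s : _), y = (i, Stream'.cons k s)) ∨ i < y.1 := by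
  obtain ⟨j, s⟩ := y
  rcases lt_trichotomy j i with h | rfl | h
  · exact Or.inl h
  · exact Or.inr (Or.inl ⟨s.head, s.tail, by rw [Stream'.eta]⟩)
  · exact Or.inr (Or.inr h)

def conE (q : ℕ) (i : ℤ) : Equiv.Perm (XX q) where
  toFun := con q i
  invFun := exp q i
  left_inv y := by
    rcases con_cases i y with h | ⟨k, s, rfl⟩ | h
    · obtain ⟨j, s⟩ := y; rw [con_lt s h, exp_lt s h]
    · rw [con_mid, exp_mid]
    · obtain ⟨j, s⟩ := y
      rw [con_gt s h, exp_gt s (by simp at h; omega)]; simp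
  right_inv y := by
    rcases exp_cases i y with h | ⟨k, s, rfl⟩ | h
    · obtain ⟨j, s⟩ := y; rw [exp_lt s h, con_lt s h]
    · rw [exp_mid, con_mid]
    · obtain ⟨j, s⟩ := y
      rw [exp_gt s h, con_gt s (by simp at h; omega)]; simp

def trE (q : ℕ) : Equiv.Perm (XX q) where
  toFun y := (y.1 - q, y.2)
  invFun y := (y.1 + q, y.2)
  left_inv y := by simp
  right_inv y := by simp

def gp (q : ℕ) : ℕ → Equiv.Perm (XX q)
  | 0 => trE q
  | (i+1) => conE q i

lemma gp_rel (i j : ℕ) (h : i < j) : gp q j * gp q i = gp q i * gp q (j+q) := by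
  obtain ⟨j, rfl⟩ : ∃ j', j = j' + 1 := ⟨j-1, by omega⟩
  rw [show j + 1 + q = (j + q) + 1 by omega]
  cases i with
  | zero =>
    apply Equiv.ext
    rintro ⟨n, s⟩
    change con q j (n - q, s) = ((con q (j+q:ℕ) (n, s)).1 - q, (con q (j+q:ℕ) (n, s)).2)
    rcases con_cases ((j+q:ℕ):ℤ) (n, s) with h | ⟨k, s', h⟩ | h
    · simp only at h
      rw [con_lt s h, con_lt s (by push_cast at h; omega)]
    · rw [h, con_mid]
      simp only [Prod.mk.injEq] at h
      obtain ⟨rfl, rfl⟩ := h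
      rw [show (((j+q:ℕ):ℤ) + ((k:ℕ):ℤ) - q) = j + ((k:ℕ):ℤ) by push_cast; ring, con_mid]
      simp
    · simp only at h
      rw [con_gt s h, con_gt s (by push_cast at h; omega)]
  | succ i =>
    apply Equiv.ext
    rintro ⟨n, s⟩
    change con q j (con q i (n, s)) = con q i (con q (j+q:ℕ) (n, s))
    rcases con_cases (i:ℤ) (n, s) with h1 | ⟨k, s', h1⟩ | h1
    · simp only at h1
      rw [con_lt s h1, con_lt s (by omega), con_lt s (by push_cast; omega), con_lt s h1]
    · rw [h1, con_mid]
      rw [con_lt _ (by omega : (i:ℤ) < j), con_lt s' (by push_cast; omega), con_mid]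
    · simp only at h1
      rw [con_gt s h1]
      rcases con_cases ((j+q:ℕ):ℤ) (n, s) with h | ⟨k, s', h⟩ | h
      · simp only at h
        rw [con_lt s h, con_lt s (by push_cast at h; omega), con_gt s h1]
      · rw [h, con_mid]
        simp only [Prod.mk.injEq] at h
        obtain ⟨rfl, rfl⟩ := h
        rw [show (((j+q:ℕ):ℤ) + ((k:ℕ):ℤ) - q) = j + ((k:ℕ):ℤ) by push_cast; ring, con_mid,
          con_gt _ (by push_cast; omega)]
        simp
      · simp only at h
        rw [con_gt s h, con_gt s (by push_cast at h; omega), con_gt s (by push_cast at h; omega)]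

def rho (q : ℕ) : G q →* Equiv.Perm (XX q) :=
  PresentedGroup.toGroup (f := gp q) (by
    rintro r ⟨i, j, h, rfl⟩
    simp only [map_mul, map_inv, FreeGroup.lift_apply_of]
    rw [mul_inv_eq_one, mul_inv_eq_iff_eq_mul]
    exact gp_rel i j h)

lemma rho_gen (i : ℕ) : rho q (xgen (q+1) i) = gp q i := by
  simp [rho, xgen]

lemma rho_tau (j : ℤ) (s) : rho q (tau q) (j, s) = (j - q, s) := by
  rw [tau, rho_gen]; rfl
lemma rho_zz (i : ℕ) (y) : rho q (zz q i) y = con q i y := by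
  rw [zz, rho_gen]; rfl
lemma rho_tau_pow (a : ℕ) (j : ℤ) (s) : rho q (tau q ^ a) (j, s) = (j - a * q, s) := by
  induction a generalizing j with
  | zero => simp
  | succ a ih =>
    rw [pow_succ, map_mul, Equiv.Perm.mul_apply, rho_tau, ih]; congr 1; push_cast; ring

end Thm


namespace Thm
variable {q : ℕ}

local infixl:65 "+++" => Stream'.appendStream'

lemma prefix_eq (hq : 1 ≤ q) (w w' : List (Fin (q+1)))
    (h : ∀ s : Stream' (Fin (q+1)), w +++ s = w' +++ s) : w = w' := by
  have key : ∀ (x : Fin (q+1)) (w : List (Fin (q+1))),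
      ¬ ∀ s : Stream' (Fin (q+1)), s = (x :: w) +++ s := by
    intro x w h
    obtain ⟨y, hy⟩ : ∃ y : Fin (q+1), y ≠ x := by
      have : Nontrivial (Fin (q+1)) := Fin.nontrivial_iff_two_le.2 (by omega)
      exact exists_ne x
    have := congrArg Stream'.head (h (Stream'.const y))
    rw [Stream'.cons_append_stream, Stream'.head_cons] at this
    exact hy this
  induction w generalizing w' with
  | nil =>
    cases w' with
    | nil => rfl
    | cons x w' => exact absurd h (key x w')
  | cons x w ih =>
    cases w' with
    | nil => exact absurd (fun s => (h s).symm) (key x w)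
    | cons x' w' =>
      have h' : ∀ s, x = x' ∧ w +++ s = w' +++ s := fun s =>
        Stream'.cons_injective2 (h s)
      rw [(h' (Stream'.const 0)).1, ih w' fun s => (h' s).2]

def Placed (g : XX q → XX q) : Tr q → ℕ → ℤ → List (Fin (q+1)) → Prop
  | .leaf, j, m, v => ∀ s, g ((j : ℤ), s) = (m, v +++ s)
  | .node f, j, m, v => ∀ k : Fin (q+1), Placed g (f k) (j + off (ext f) k) m (v ++ [k])

lemma Placed.post {g h : XX q → XX q} {T : Tr q} {j : ℕ} {m m' : ℤ} {v v'}
    (hp : Placed g T j m v) (hh : ∀ s, h (m, v +++ s) = (m', v' +++ s)) :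
    Placed (fun y => h (g y)) T j m' v' := by
  induction T generalizing j v v' with
  | leaf => intro s; simp only [hp s, hh s]
  | node f ih =>
    intro k
    refine ih k (hp k) fun s => ?_
    simp only [Stream'.append_append_stream]
    exact hh _

lemma Placed.pre {g h : XX q → XX q} {T : Tr q} {j j' : ℕ} {m : ℤ} {v}
    (hp : Placed g T j m v) (hh : ∀ (i : ℕ) s, h (((j' + i : ℕ) : ℤ), s) = (((j + i : ℕ) : ℤ), s)) :
    Placed (fun y => g (h y)) T j' m v := by
  induction T generalizing j j' v with
  | leaf => intro s; have := hh 0 s; simp only [add_zero] at this; simp only [this]; exact hp s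
  | node f ih =>
    intro k
    refine ih k (hp k) fun i s => ?_
    have := hh (off (ext f) k + i) s
    rw [add_assoc, add_assoc]; exact this

lemma Placed.congr {g h : XX q → XX q} {T : Tr q} {j : ℕ} {m : ℤ} {v}
    (hp : Placed g T j m v) (hh : ∀ y, g y = h y) : Placed h T j m v := by
  have : g = h := funext hh
  rwa [← this]

lemma ext_zero (f : Fin (q+1) → Tr q) : ext f 0 = f 0 := ext_val f 0

lemma Placed.first {g : XX q → XX q} {T : Tr q} {j : ℕ} {m : ℤ} {v}
    (hp : Placed g T j m v) : ∃ e : ℕ, (∀ s, g ((j : ℤ), s) = (m, (v ++ List.replicate e 0) +++ s)) ∧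
      (e = 0 → T = .leaf) := by
  induction T generalizing v with
  | leaf => exact ⟨0, fun s => by rw [List.replicate_zero, List.append_nil]; exact hp s, fun _ => rfl⟩
  | node f ih =>
    obtain ⟨e, he, -⟩ := ih 0 (hp 0)
    refine ⟨e+1, fun s => ?_, by simp⟩
    have := he s
    rw [this, List.replicate_succ, List.append_assoc]; rfl

lemma Placed.unique (hq : 1 ≤ q) {g : XX q → XX q} {T T' : Tr q} {j : ℕ} {m : ℤ} {v}
    (hp : Placed g T j m v) (hp' : Placed g T' j m v) : T = T' := by
  have ff : ∀ {T T' : Tr q} {j : ℕ} {v}, Placed g T j m v → Placed g T' j m v →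
      T = .leaf → T' = .leaf := by
    intro T T' j v hp hp' h
    subst h
    obtain ⟨e, he, h0⟩ := hp'.first
    apply h0
    have := prefix_eq hq v (v ++ List.replicate e 0) fun s => by
      have h1 := he s
      rw [hp s] at h1
      exact (Prod.mk.inj h1).2
    have := congrArg List.length this
    simpa using this
  induction T generalizing j v T' with
  | leaf => exact (ff hp hp' rfl).symm
  | node f ih =>
    cases T' with
    | leaf => exact ff hp' hp rfl
    | node f' =>
      congr 1
      have key : ∀ k ≤ q + 1, ∀ i < k, ext f i = ext f' i := by
        intro k
        induction k with
        | zero => intro _ i hi; omega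
        | succ k ihk =>
          intro hk i hi
          have ihk := ihk (by omega)
          rcases Nat.lt_succ_iff_lt_or_eq.1 hi with h | rfl
          · exact ihk i h
          · have ho : off (ext f) i = off (ext f') i := by
              unfold off
              exact Finset.sum_congr rfl fun l hl => by rw [ihk l (Finset.mem_range.1 hl)]
            have h1 := hp ⟨i, by omega⟩
            have h2 := hp' ⟨i, by omega⟩
            simp only at h1 h2
            rw [ho] at h1
            have := ih _ h1 h2
            rwa [← ext_val f, ← ext_val f'] at this
      funext k
      rw [← ext_val f, ← ext_val f']
      exact key _ le_rfl k k.2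

structure Good (g : XX q → XX q) (m : ℕ) (φ : ℕ → Tr q) (R : ℕ) : Prop where
  lt : ∀ (j : ℤ) s, j < m → g (j, s) = (j, s)
  ge : ∀ (i : ℕ) s, g (((m + off φ R + i : ℕ) : ℤ), s) = (((m + R + i : ℕ) : ℤ), s)
  pl : ∀ k < R, Placed g (φ k) (m + off φ k) ((m + k : ℕ) : ℤ) []

structure GoodT (g : XX q → XX q) (m : ℕ) (T : Tr q) : Prop where
  lt : ∀ (j : ℤ) s, j < m → g (j, s) = (j, s)
  ge : ∀ (i : ℕ) s, g (((m + T.size + i : ℕ) : ℤ), s) = (((m + 1 + i : ℕ) : ℤ), s)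
  pl : Placed g T m (m : ℤ) []

lemma good_fel (m : ℕ) (φ : ℕ → Tr q) (R : ℕ)
    (h : ∀ k < R, GoodT (rho q (tel (φ k) (m+k))) (m+k) (φ k)) :
    Good (rho q (fel m φ R)) m φ R := by
  induction R with
  | zero => exact ⟨fun j s _ => by simp [fel, dn], fun i s => by simp [fel, dn], fun k hk => by omega⟩
  | succ R ih =>
    have ih := ih fun k hk => h k (by omega)
    have hR := h R (by omega)
    have e : ∀ y, rho q (fel m φ (R+1)) y = rho q (tel (φ R) (m+R)) (rho q (fel m φ R) y) := by
      intro y; rw [fel_succ, map_mul, Equiv.Perm.mul_apply]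
    refine ⟨fun j s hj => ?_, fun i s => ?_, fun k hk => ?_⟩
    · rw [e, ih.lt j s hj, hR.lt j s (by push_cast; omega)]
    · rw [e, off_succ]
      have := ih.ge ((φ R).size + i) s
      rw [show m + (off φ R + (φ R).size) + i = m + off φ R + ((φ R).size + i) by ring, this]
      have := hR.ge i s
      rw [show m + R + ((φ R).size + i) = m + R + (φ R).size + i by ring, this]
      rw [show m + R + 1 + i = m + (R + 1) + i by ring]
    · rcases Nat.lt_succ_iff_lt_or_eq.1 hk with hk | rfl
      · refine ((ih.pl k hk).post (h := rho q (tel (φ R) (m+R))) fun s => ?_).congr fun y => (e y).symm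
        exact hR.lt _ _ (by push_cast; omega)
      · refine (hR.pl.pre (h := rho q (fel m φ k)) fun i s => ?_).congr fun y => (e y).symm
        exact ih.ge i s

lemma good_tel (T : Tr q) (m : ℕ) : GoodT (rho q (tel T m)) m T := by
  induction T generalizing m with
  | leaf => exact ⟨fun j s _ => by simp [tel], fun i s => by simp [tel, Tr.size], fun s => by simp [tel]⟩
  | node f ih =>
    have hg := good_fel m (ext f) (q+1) fun k hk => by
      simp only [ext, hk, dite_true]; exact ih _ _
    have e : ∀ y, rho q (tel (.node f) m) y = con q m (rho q (fel m (ext f) (q+1)) y) := by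
      intro y; rw [tel_node, map_mul, Equiv.Perm.mul_apply, rho_zz]
    refine ⟨fun j s hj => ?_, fun i s => ?_, fun k => ?_⟩
    · rw [e, hg.lt j s hj, con_lt s hj]
    · rw [e, size_node, hg.ge, con_gt _ (by push_cast; omega)]
      congr 1; push_cast; ring
    · have := hg.pl k k.2
      rw [ext_val] at this
      refine (this.post (h := con q m) fun s => ?_).congr fun y => (e y).symm
      rw [Nat.cast_add, con_mid]; rfl

/-- the action of `τ^a * fel 0 φ R` -/
lemma nf_lt (a : ℕ) (φ : ℕ → Tr q) (R : ℕ) (j : ℤ) (s) (hj : j < 0) :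
    rho q (tau q ^ a * fel 0 φ R) (j, s) = (j - a * q, s) := by
  have hg := good_fel 0 φ R fun k _ => good_tel _ _
  rw [map_mul, Equiv.Perm.mul_apply, hg.lt j s (by simpa using hj), rho_tau_pow]

lemma nf_pl (a : ℕ) (φ : ℕ → Tr q) (R : ℕ) (k : ℕ) (hk : k < R) :
    Placed (rho q (tau q ^ a * fel 0 φ R)) (φ k) (off φ k) ((k : ℤ) - a * q) [] := by
  have hg := good_fel 0 φ R fun k _ => good_tel _ _
  have := hg.pl k hk
  rw [zero_add, zero_add] at this
  refine (this.post (h := rho q (tau q ^ a)) fun s => ?_).congr fun y => ?_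
  · rw [rho_tau_pow]
  · rw [map_mul, Equiv.Perm.mul_apply]

lemma flat_inj (bs bs' : List (Bl q)) (hl : bs.length = bs'.length)
    (h : ∀ k < bs.length * q, flat bs k = flat bs' k) : bs = bs' := by
  induction bs generalizing bs' with
  | nil => cases bs' with
    | nil => rfl
    | cons _ _ => simp at hl
  | cons β bs ih =>
    cases bs' with
    | nil => simp at hl
    | cons β' bs' =>
      simp only [List.length_cons, add_left_inj] at hl
      have e : (β :: bs).length * q = q + bs.length * q := by simp; ring
      rw [e] at h
      congr 1
      · funext c
        have := h c (by omega)
        simpa [flat] using this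
      · refine ih bs' hl fun k hk => ?_
        have := h (q + k) (by omega)
        simpa [flat] using this

lemma el_injective (hq : 1 ≤ q) : Function.Injective (el (q := q)) := by
  intro bs bs' h
  have h1 := nf_lt bs.length (flat bs) (bs.length * q) (-1) (Stream'.const 0) (by omega)
  have h2 := nf_lt bs'.length (flat bs') (bs'.length * q) (-1) (Stream'.const 0) (by omega)
  have h' : tau q ^ bs.length * fel 0 (flat bs) (bs.length * q)
    = tau q ^ bs'.length * fel 0 (flat bs') (bs'.length * q) := h
  rw [h', h2] at h1
  have h3 := (Prod.mk.inj h1).1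
  have hl : bs.length = bs'.length := by
    have : (bs.length : ℤ) * q = bs'.length * q := by linarith
    have := mul_right_cancel₀ (by exact_mod_cast (by omega : q ≠ 0)) this
    exact_mod_cast this
  refine flat_inj bs bs' hl ?_
  have key : ∀ n ≤ bs.length * q, ∀ k < n, flat bs k = flat bs' k := by
    intro n
    induction n with
    | zero => intro _ k hk; omega
    | succ n ih =>
      intro hn k hk
      have ih := ih (by omega)
      rcases Nat.lt_succ_iff_lt_or_eq.1 hk with hk | rfl
      · exact ih k hk
      · have p1 := nf_pl bs.length (flat bs) (bs.length * q) k (by omega)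
        have p2 := nf_pl bs'.length (flat bs') (bs'.length * q) k (by rw [← hl]; omega)
        rw [h'] at p1
        have ho : off (flat bs) k = off (flat bs') k := by
          unfold off
          exact Finset.sum_congr rfl fun l hl => by rw [ih l (Finset.mem_range.1 hl)]
        rw [ho, hl] at p1
        exact p1.unique hq p2
  exact key _ le_rfl

end Thm


namespace Thm
variable {q : ℕ}

local infixl:65 "+++" => Stream'.appendStream'

abbrev z0 (q : ℕ) : Stream' (Fin (q+1)) := Stream'.const 0

def lp (q : ℕ) (a : ℕ × Bool) : Equiv.Perm (XX q) := if a.2 then gp q a.1 else (gp q a.1).symm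

open Classical in
noncomputable def ev (a : ℕ × Bool) (y : XX q) : ℕ :=
  if (if a.2 then y else lp q a y) = ((q : ℤ), z0 q) then 1 else 0

noncomputable def act : List (ℕ × Bool) → XX q → XX q
  | [], y => y
  | (a :: l), y => lp q a (act l y)

noncomputable def cnt : List (ℕ × Bool) → XX q → ℕ
  | [], _ => 0
  | (a :: l), y => cnt l y + ev a (act l y)

lemma act_inj (l : List (ℕ × Bool)) : Function.Injective (act (q := q) l) := by
  induction l with
  | nil => exact fun _ _ h => h
  | cons a l ih => exact fun x y h => ih ((lp q a).injective h)

lemma sum_cnt (l : List (ℕ × Bool)) (S : Finset (XX q)) : ∑ y ∈ S, cnt l y ≤ l.length := by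
  classical
  induction l with
  | nil => simp [cnt]
  | cons a l ih =>
    simp only [cnt, Finset.sum_add_distrib, List.length_cons]
    have : ∑ y ∈ S, ev a (act l y) ≤ 1 := by
      simp only [ev, Finset.sum_boole, Nat.cast_id]
      rw [Finset.card_le_one]
      intro x hx y hy
      simp only [Finset.mem_filter] at hx hy
      have h := hx.2.trans hy.2.symm
      split_ifs at h with ha
      · exact act_inj l h
      · exact act_inj l ((lp q a).injective h)
    omega

lemma app_ne (v : List (Fin (q+1))) (d : Fin (q+1)) (hd : d ≠ 0) (s) :
    v +++ (Stream'.cons d s) ≠ z0 q := by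
  induction v with
  | nil => intro h; exact hd (congrArg Stream'.head h)
  | cons x v ih =>
    intro h; exact ih (congrArg Stream'.tail h)

structure StC (b : ℕ) (F : XX q → XX q) (a : ℕ) (m : ℤ) (v : List (Fin (q+1))) : Prop where
  lt : a < q
  md : m + (v.map (fun x : Fin (q+1) => ((x : ℕ) : ℤ))).sum ≡ a [ZMOD q]
  eq : ∀ d : Fin (q+1), q ≤ a + d → ∀ s, F (((b * q + (a + d - q) : ℕ) : ℤ), s) = (m, v +++ (Stream'.cons d s))

structure StA (b : ℕ) (F : XX q → XX q) (c : ℤ) : Prop where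
  le : 1 ≤ c
  eq : ∀ (j : ℕ) s, F (((b * q + j : ℕ) : ℤ), s) = (j + c * q, s)

inductive St (b : ℕ) (F : XX q → XX q) (n : ℕ) : Prop
  | A (c : ℤ) (hn : n = 0) (h : StA b F c)
  | B (c : ℤ) (hn : n = 1) (h : c ≤ 0) (h2 : F (((b * q : ℕ) : ℤ), z0 q) = (c * q, z0 q))
  | C (a m v) (hn : n = 1) (h : StC b F a m v)
  | D (c : ℤ) (hn : 2 ≤ n) (h : 1 ≤ c) (h2 : F (((b * q : ℕ) : ℤ), z0 q) = (c * q, z0 q))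
  | E (hn : 3 ≤ n)

lemma StC.beta {b : ℕ} {F : XX q → XX q} {a m v} (h : StC b F a m v) :
    ∃ d : Fin (q+1), (d : ℕ) = q - a ∧ d ≠ 0 ∧ ∀ s, F (((b * q : ℕ) : ℤ), s) = (m, v +++ (Stream'.cons d s)) := by
  have hl := h.lt
  refine ⟨⟨q - a, by omega⟩, rfl, ?_, fun s => ?_⟩
  · intro h; have := congrArg Fin.val h; simp at this; omega
  · have := h.eq ⟨q - a, by omega⟩ (by simp only; omega) s
    rw [← this]; congr 3; simp only; omega

open Classical in
lemma ev_pos {i : ℕ} {y : XX q} : ev (i, true) y = if y = ((q : ℤ), z0 q) then 1 else 0 := by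
  simp [ev]
open Classical in
lemma ev_neg {i : ℕ} {y : XX q} : ev (i, false) y = if lp q (i, false) y = ((q : ℤ), z0 q) then 1 else 0 := by
  simp [ev]

lemma lp_tau (y : XX q) : lp q (0, true) y = (y.1 - q, y.2) := rfl
lemma lp_tau' (y : XX q) : lp q (0, false) y = (y.1 + q, y.2) := rfl
lemma lp_con (k : ℕ) (y : XX q) : lp q (k+1, true) y = con q k y := rfl
lemma lp_exp (k : ℕ) (y : XX q) : lp q (k+1, false) y = exp q k y := rfl

lemma con_fix {c : ℤ} (k : ℕ) (hc : c ≤ 0) : con q k (c * q, z0 q) = (c * q, z0 q) := by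
  have h0 : c * q ≤ 0 := mul_nonpos_of_nonpos_of_nonneg hc (by positivity)
  by_cases h : c * q < k
  · exact con_lt _ h
  · have hk : k = 0 := by omega
    have hc : c * q = 0 := by omega
    subst hk
    rw [hc]
    have := con_mid (q := q) 0 0 (z0 q)
    simp only [Fin.val_zero, Nat.cast_zero, add_zero] at this
    rw [Nat.cast_zero, this]
    rw [← Stream'.const_eq]

lemma exp_fix {c : ℤ} (k : ℕ) (hc : c ≤ 0) : exp q k (c * q, z0 q) = (c * q, z0 q) := by
  have := con_fix (q := q) k hc
  conv_lhs => rw [← this]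
  exact (conE q k).symm_apply_apply _

lemma cq_one (hq : 1 ≤ q) (c : ℤ) (h : c ≠ 1) (s) : ((c * q, s) : XX q) ≠ ((q : ℤ), z0 q) := by
  intro e
  have := (Prod.mk.inj e).1
  apply h
  have h2 : (q : ℤ) ≠ 0 := by positivity
  exact mul_right_cancel₀ h2 (by rw [this, one_mul])

lemma St.step (hq : 1 ≤ q) {b : ℕ} {F : XX q → XX q} {n : ℕ} (h : St b F n) (a : ℕ × Bool)
    (ha : a.1 < q + 1) : St b (fun y => lp q a (F y)) (n + ev a (F (((b * q : ℕ) : ℤ), z0 q))) := by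
  have hq' : (1:ℤ) ≤ q := by exact_mod_cast hq
  obtain ⟨i, ε⟩ := a
  simp only at ha
  cases h with
  | A c hn h =>
    have hb := h.eq 0 (z0 q)
    simp only [add_zero, Nat.cast_zero, zero_add] at hb
    have hc := h.le
    subst hn
    cases ε with
    | true =>
      rw [hb, ev_pos]
      by_cases h1 : c = 1
      · subst h1
        rw [if_pos (by rw [one_mul])]
        cases i with
        | zero =>
          refine .B 0 rfl le_rfl ?_
          simp only [hb, lp_tau]; simp
        | succ k =>
          refine .C k k [] rfl ⟨by omega, by simp, ?_⟩
          intro d hd s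
          simp only [h.eq, lp_con]
          rw [show (((k + d - q : ℕ) : ℤ) + 1 * q) = k + ((d:ℕ):ℤ) by omega, con_mid]
          rfl
      · rw [if_neg (cq_one hq c h1 _)]
        have h2q : 2 * (q:ℤ) ≤ c * q := by nlinarith [show 2 ≤ c by omega]
        refine .A (c-1) rfl ⟨by omega, fun j s => ?_⟩
        simp only [h.eq]
        cases i with
        | zero => rw [lp_tau]; simp only; congr 1; ring
        | succ k => rw [lp_con, con_gt _ (by omega)]; congr 1; ring
    | false =>
      have key : ∀ (j : ℕ) s, lp q (i, false) (j + c * q, s) = (j + (c+1) * q, s) := by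
        intro j s
        cases i with
        | zero => rw [lp_tau']; simp only; congr 1; ring
        | succ k =>
          have : (q:ℤ) ≤ c * q := by nlinarith
          rw [lp_exp, exp_gt _ (by omega)]; congr 1; ring
      rw [hb, ev_neg]
      have := key 0 (z0 q)
      simp only [Nat.cast_zero, zero_add] at this
      rw [this, if_neg (cq_one hq _ (by omega) _)]
      exact .A (c+1) rfl ⟨by omega, fun j s => by simp only [h.eq, key]⟩
  | B c hn hc hb =>
    subst hn
    cases ε with
    | true =>
      rw [hb, ev_pos, if_neg (cq_one hq c (by omega) _)]
      cases i with
      | zero => exact .B (c-1) rfl (by omega) (by simp only [hb, lp_tau]; congr 1; ring)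
      | succ k => exact .B c rfl hc (by simp only [hb, lp_con]; exact con_fix k hc)
    | false =>
      rw [hb, ev_neg]
      cases i with
      | zero =>
        have e : lp q (0, false) (c * (q:ℤ), z0 q) = ((c+1) * q, z0 q) := by
          rw [lp_tau']; simp only; congr 1; ring
        rw [e]
        by_cases h0 : c = 0
        · subst h0
          rw [if_pos (by simp)]
          exact .D 1 le_rfl le_rfl (by simp only [hb, e]; simp)
        · rw [if_neg (cq_one hq _ (by omega) _)]
          exact .B (c+1) rfl (by omega) (by simp only [hb, e])
      | succ k =>
        have e : lp q (k+1, false) (c * (q:ℤ), z0 q) = (c * q, z0 q) := by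
          rw [lp_exp]; exact exp_fix k hc
        rw [e, if_neg (cq_one hq _ (by omega) _)]
        exact .B c rfl hc (by simp only [hb, e])
  | C a m v hn h =>
    subst hn
    obtain ⟨d0, hd0, hd0', hb⟩ := h.beta
    have hne : ∀ (m' : ℤ) (v'), ((m', v' +++ (Stream'.cons d0 (z0 q))) : XX q) ≠ ((q : ℤ), z0 q) := by
      intro m' v' e
      exact app_ne v' d0 hd0' _ (Prod.mk.inj e).2
    -- generic step
    have gen : ∀ m' v', m' + (v'.map (fun x : Fin (q+1) => ((x : ℕ) : ℤ))).sum ≡ a [ZMOD q] →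
        (∀ s, lp q (i, ε) (m, v +++ s) = (m', v' +++ s)) →
        St b (fun y => lp q (i, ε) (F y)) (1 + ev (i, ε) (F (((b * q : ℕ) : ℤ), z0 q))) := by
      intro m' v' hm hs
      have : ev (i, ε) (F (((b * q : ℕ) : ℤ), z0 q)) = 0 := by
        rw [hb]
        cases ε with
        | true => rw [ev_pos, if_neg (hne _ _)]
        | false => rw [ev_neg, hs, if_neg (hne _ _)]
      rw [this]
      exact .C a m' v' rfl ⟨h.lt, hm, fun d hd s => by simp only [h.eq d hd, hs]⟩
    have hmd := h.md
    have hmq : m - q + (v.map (fun x : Fin (q+1) => ((x : ℕ) : ℤ))).sum ≡ a [ZMOD q] := by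
      refine Int.ModEq.trans ?_ hmd
      rw [show m - q + (v.map (fun x : Fin (q+1) => ((x : ℕ) : ℤ))).sum =
        m + (v.map (fun x : Fin (q+1) => ((x : ℕ) : ℤ))).sum - q by ring]
      simp [Int.ModEq]
    have hpq : m + q + (v.map (fun x : Fin (q+1) => ((x : ℕ) : ℤ))).sum ≡ a [ZMOD q] := by
      refine Int.ModEq.trans ?_ hmd
      rw [show m + q + (v.map (fun x : Fin (q+1) => ((x : ℕ) : ℤ))).sum =
        m + (v.map (fun x : Fin (q+1) => ((x : ℕ) : ℤ))).sum + q by ring]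
      simp [Int.ModEq]
    cases ε with
    | true =>
      cases i with
      | zero => exact gen (m - q) v hmq fun s => rfl
      | succ k =>
        rcases con_cases (q := q) k (m, z0 q) with h1 | ⟨e, s, h1⟩ | h1
        · exact gen m v hmd fun s => by rw [lp_con, con_lt _ h1]
        · obtain ⟨rfl, -⟩ := Prod.mk.inj h1
          refine gen k (e :: v) ?_ fun s => ?_
          · rw [List.map_cons, List.sum_cons, ← add_assoc]; exact hmd
          · rw [lp_con, con_mid]; rfl
        · exact gen (m - q) v hmq fun s => by rw [lp_con, con_gt _ h1]
    | false =>
      cases i with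
      | zero => exact gen (m + q) v hpq fun s => rfl
      | succ k =>
        rcases lt_trichotomy m k with h1 | h1 | h1
        · exact gen m v hmd fun s => by rw [lp_exp, exp_lt _ h1]
        · subst h1
          cases v with
          | cons e v =>
            refine gen (k + (e:ℕ)) v ?_ fun s => ?_
            · rw [List.map_cons, List.sum_cons, ← add_assoc] at hmd; exact hmd
            · rw [lp_exp]; exact exp_mid _ _ _
          | nil =>
            simp only [List.map_nil, List.sum_nil, add_zero] at hmd
            have hka : k = a := by
              have := (Int.natCast_modEq_iff).1 hmd
              exact Nat.ModEq.eq_of_lt_of_lt this (by omega) h.lt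
            subst hka
            have e : lp q (k+1, false) (F (((b * q : ℕ) : ℤ), z0 q)) = ((q:ℤ), z0 q) := by
              rw [hb, lp_exp]
              refine (exp_mid _ _ _).trans ?_
              congr 1
              have := h.lt
              omega
            rw [ev_neg, if_pos e]
            exact .D 1 le_rfl le_rfl (by simp only [e, one_mul])
        · exact gen (m + q) v hpq fun s => by rw [lp_exp, exp_gt _ h1]
  | D c hn hc hb =>
    cases ε with
    | true =>
      rw [hb, ev_pos]
      by_cases h1 : c = 1
      · subst h1
        rw [if_pos (by rw [one_mul])]
        exact .E (by omega)
      · have h2q : 2 * (q:ℤ) ≤ c * q := by nlinarith [show 2 ≤ c by omega]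
        refine .D (c-1) (by omega) (by omega) ?_
        simp only [hb]
        cases i with
        | zero => rw [lp_tau]; simp only; congr 1; ring
        | succ k => rw [lp_con, con_gt _ (by omega)]; congr 1; ring
    | false =>
      refine .D (c+1) (by omega) (by omega) ?_
      simp only [hb]
      cases i with
      | zero => rw [lp_tau']; simp only; congr 1; ring
      | succ k =>
        have : (q:ℤ) ≤ c * q := by nlinarith
        rw [lp_exp, exp_gt _ (by omega)]; congr 1; ring
  | E hn => exact .E (by omega)

lemma St.all (hq : 1 ≤ q) (l : List (ℕ × Bool)) (hl : ∀ a ∈ l, a.1 < q + 1) {b : ℕ} (hb : 1 ≤ b) :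
    St b (act (q := q) l) (cnt l (((b * q : ℕ) : ℤ), z0 q)) := by
  induction l with
  | nil =>
    refine .A b rfl ⟨by exact_mod_cast hb, fun j s => ?_⟩
    simp only [act]; congr 1; push_cast; ring
  | cons a l ih =>
    exact (ih fun x hx => hl x (by simp [hx])).step hq a (hl a (by simp))

end Thm


namespace Thm
variable {q : ℕ}

local infixl:65 "+++" => Stream'.appendStream'

lemma exists_act (L : List (FP (q+1)))
    (hL : ∀ a ∈ L, ∃ i < q+1, a = xgen (q+1) i ∨ a = (xgen (q+1) i)⁻¹) :
    ∃ l : List (ℕ × Bool), l.length = L.length ∧ (∀ a ∈ l, a.1 < q+1) ∧ ∀ y, rho q L.prod y = act l y := by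
  induction L with
  | nil => exact ⟨[], rfl, by simp, fun y => by simp [act]⟩
  | cons x L ih =>
    obtain ⟨l, h1, h2, h3⟩ := ih fun a ha => hL a (by simp [ha])
    obtain ⟨i, hi, hx⟩ := hL x (by simp)
    have : ∃ ε, ∀ y, rho q x y = lp q (i, ε) y := by
      rcases hx with rfl | rfl
      · exact ⟨true, fun y => by rw [rho_gen]; rfl⟩
      · exact ⟨false, fun y => by rw [map_inv, rho_gen]; rfl⟩
    obtain ⟨ε, he⟩ := this
    refine ⟨(i, ε) :: l, by simp [h1], ?_, fun y => ?_⟩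
    · intro a ha
      rcases List.mem_cons.1 ha with rfl | ha
      · exact hi
      · exact h2 a ha
    · rw [List.prod_cons, map_mul, Equiv.Perm.mul_apply, he, h3]; rfl

noncomputable def W (q : ℕ) (l : List (ℕ × Bool)) (j : ℕ) : ℕ :=
  if j % q = 0 ∧ j ≠ 0 then cnt (q := q) l ((j : ℤ), z0 q) else 0

lemma sum_W (l : List (ℕ × Bool)) (N : ℕ) : ∑ i ∈ Finset.range N, W q l i ≤ l.length := by
  have h1 : ∑ i ∈ Finset.range N, W q l i ≤ ∑ i ∈ Finset.range N, cnt (q := q) l ((i : ℤ), z0 q) := by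
    refine Finset.sum_le_sum fun i _ => ?_
    unfold W; split_ifs <;> omega
  refine h1.trans ?_
  have := sum_cnt (q := q) l ((Finset.range N).map ⟨fun i : ℕ => ((i : ℤ), z0 q), fun a b h => by
    simpa using h⟩)
  rwa [Finset.sum_map] at this

lemma size_pos (T : Tr q) : 1 ≤ T.size := by
  induction T with
  | leaf => simp [Tr.size]
  | node f ih =>
    simp only [Tr.size]
    exact (ih 0).trans (Finset.single_le_sum (f := fun k => (f k).size) (fun _ _ => Nat.zero_le _) (Finset.mem_univ 0))

lemma le_off (φ : ℕ → Tr q) (k : ℕ) : k ≤ off φ k := by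
  induction k with
  | zero => simp
  | succ k ih => rw [off_succ]; have := size_pos (φ k); omega

lemma sum_off (φ : ℕ → Tr q) (V : ℕ → ℕ) (R : ℕ) :
    ∑ i ∈ Finset.range (off φ R), V i =
      ∑ k ∈ Finset.range R, ∑ i ∈ Finset.range (φ k).size, V (off φ k + i) := by
  induction R with
  | zero => simp
  | succ R ih => rw [off_succ, Finset.sum_range_add, ih, Finset.sum_range_succ]

lemma append_eq_aux {v v' : List (Fin (q+1))} {d k : Fin (q+1)} (hd : d ≠ 0) {e : ℕ}
    (h : v' ++ [d] = v ++ [k] ++ List.replicate e 0) : e = 0 ∧ v' = v ∧ d = k := by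
  cases e with
  | zero =>
    rw [List.replicate_zero, List.append_nil] at h
    have := List.append_inj' h rfl
    exact ⟨rfl, this.1, by simpa using this.2⟩
  | succ e =>
    rw [List.replicate_succ', ← List.append_assoc] at h
    have := List.append_inj' h rfl
    exact absurd (by simpa using this.2) hd

lemma boundary (hq : 1 ≤ q) (l : List (ℕ × Bool)) (hl : ∀ a ∈ l, a.1 < q + 1)
    (f : Fin (q+1) → Tr q) (pos : ℕ) (m : ℤ) (v) (hp : Placed (act l) (.node f) pos m v) :
    (triv f (pos % q) ∧ 1 ≤ W q l (pos + off (ext f) (q - pos % q))) ∨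
      3 ≤ W q l (pos + off (ext f) (q - pos % q)) := by
  set c := pos % q with hc
  have hcq : c < q := Nat.mod_lt _ (by omega)
  set k0 : Fin (q+1) := ⟨q - c, by omega⟩ with hk0
  have hk0v : (k0 : ℕ) = q - c := rfl
  have hk00 : k0 ≠ 0 := by
    intro h; have := congrArg Fin.val h; simp [hk0] at this; omega
  have hmod : (pos + off (ext f) (q - c)) % q = 0 := by
    have h1 : pos ≡ c [MOD q] := (Nat.mod_modEq _ _).symm
    have h2 := off_mod (ext f) (q - c)
    have h3 := h1.add h2
    rw [show c + (q - c) = q by omega] at h3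
    have h4 : (pos + off (ext f) (q - c)) % q = q % q := h3
    rw [h4, Nat.mod_self]
  have hP : pos + off (ext f) (q - c) ≠ 0 := by
    have := le_off (ext f) (q - c); omega
  obtain ⟨b, hb⟩ := Nat.dvd_of_mod_eq_zero hmod
  have hb' : pos + off (ext f) (q - c) = b * q := by rw [hb, mul_comm]
  have hb1 : 1 ≤ b := by
    rcases Nat.eq_zero_or_pos b with h | h
    · rw [h] at hb; omega
    · exact h
  rw [W, if_pos ⟨hmod, hP⟩, hb']
  have hch : Placed (act l) (f k0) (b * q) m (v ++ [k0]) := by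
    have := hp k0
    rwa [hk0v, hb'] at this
  obtain ⟨e, he, he0⟩ := hch.first
  have hne : ∀ cq : ℤ, act l (((b * q : ℕ) : ℤ), z0 q) ≠ (cq, z0 q) := by
    intro cq h
    rw [he] at h
    have := (Prod.mk.inj h).2
    rw [List.append_assoc, Stream'.append_append_stream] at this
    exact app_ne v k0 hk00 _ this
  cases St.all hq l hl hb1 with
  | A c' hn h =>
    exfalso
    have := h.eq 0 (z0 q)
    simp only [add_zero, Nat.cast_zero, zero_add] at this
    exact hne _ this
  | B c' hn h h2 => exact absurd h2 (hne _)
  | D c' hn h h2 => exact absurd h2 (hne _)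
  | E hn => exact Or.inr hn
  | C a m' v' hn h =>
    left
    refine ⟨?_, by omega⟩
    obtain ⟨d, hd, hd0, hd'⟩ := h.beta
    have hmm : ∀ s, m' = m ∧ (v' ++ [d]) +++ s = (v ++ [k0] ++ List.replicate e 0) +++ s := by
      intro s
      have h1 := (hd' s).symm.trans (he s)
      have h2 := Prod.mk.inj h1
      refine ⟨h2.1, ?_⟩
      rw [← h2.2, Stream'.append_append_stream]; rfl
    obtain ⟨hee, hvv, hdk⟩ := append_eq_aux hd0 (prefix_eq hq _ _ fun s => (hmm s).2)
    have hm := (hmm (z0 q)).1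
    subst hvv hdk hm
    have hac : a = c := by have := h.lt; omega
    subst hac
    have key : ∀ i, ∀ hi : q - c + i < q + 1, off (ext f) (q - c + i) = off (ext f) (q - c) + i ∧
        f ⟨q - c + i, hi⟩ = .leaf := by
      intro i
      induction i with
      | zero => intro hi; exact ⟨rfl, he0 hee⟩
      | succ i ih =>
        intro hi
        obtain ⟨h1, h2⟩ := ih (by omega)
        have ho : off (ext f) (q - c + (i+1)) = off (ext f) (q - c) + (i+1) := by
          rw [← add_assoc, off_succ, h1]
          have : ext f (q - c + i) = .leaf := by rw [← h2]; exact ext_val f ⟨_, _⟩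
          rw [this]; simp [Tr.size]; omega
        refine ⟨ho, ?_⟩
        have hpl := hp ⟨q - c + (i+1), hi⟩
        simp only [ho] at hpl
        obtain ⟨e', he', he0'⟩ := hpl.first
        apply he0'
        have hx := h.eq ⟨q - c + (i+1), hi⟩ (by simp only; omega)
        simp only at hx
        rw [show b * q + (c + (q - c + (i + 1)) - q) = pos + (off (ext f) (q - c) + (i + 1)) by omega] at hx
        have := prefix_eq hq (v' ++ [⟨q - c + (i+1), hi⟩]) _ fun s => by
          have h1 := (hx s).symm.trans (he' s)
          have h2 := (Prod.mk.inj h1).2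
          rw [← h2, Stream'.append_append_stream]; rfl
        have := congrArg List.length this
        simpa using this
    intro k hk
    have hh := k.2
    have := (key (k - (q - c)) (by omega)).2
    rw [← this]; congr 1; apply Fin.ext; simp only; omega

lemma tree_bound (hq : 1 ≤ q) (l : List (ℕ × Bool)) (hl : ∀ a ∈ l, a.1 < q + 1) (T : Tr q) :
    ∀ (pos : ℕ) (m : ℤ) (v), Placed (act l) T pos m v →
    W q l pos + T.wt pos ≤ ∑ i ∈ Finset.range T.size, W q l (pos + i) := by
  induction T with
  | leaf => intro pos m v _; simp [Tr.size, Tr.wt]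
  | node f ih =>
    intro pos m v hp
    rw [size_node, sum_off (ext f) (fun i => W q l (pos + i))]
    have h1 : ∀ k ∈ Finset.range (q+1), W q l (pos + off (ext f) k) + (ext f k).wt (pos + k) ≤
        ∑ i ∈ Finset.range (ext f k).size, W q l (pos + (off (ext f) k + i)) := by
      intro k hk
      have hk := Finset.mem_range.1 hk
      have := ih ⟨k, hk⟩ _ _ _ (hp ⟨k, hk⟩)
      rw [← ext_val f ⟨k, hk⟩] at this
      simp only at this
      rw [wt_congr _ (pos + off (ext f) k) (pos + k) ((off_mod (ext f) k).add_left pos)] at this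
      simpa only [add_assoc] using this
    refine le_trans ?_ (Finset.sum_le_sum h1)
    rw [Finset.sum_add_distrib]
    have e : ∑ k : Fin (q+1), (f k).wt (pos + k) = ∑ k ∈ Finset.range (q+1), (ext f k).wt (pos + k) := by
      rw [← Fin.sum_univ_eq_sum_range (fun k => (ext f k).wt (pos+k))]
      simp only [ext_val]
    have hcq : pos % q < q := Nat.mod_lt _ (by omega)
    have h2 : W q l pos + W q l (pos + off (ext f) (q - pos % q)) ≤
        ∑ k ∈ Finset.range (q+1), W q l (pos + off (ext f) k) := by
      have hsub : ({0, q - pos % q} : Finset ℕ) ⊆ Finset.range (q+1) := by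
        intro x hx
        simp only [Finset.mem_insert, Finset.mem_singleton] at hx
        rw [Finset.mem_range]; omega
      refine le_trans (le_of_eq ?_) (Finset.sum_le_sum_of_subset hsub)
      rw [Finset.sum_pair (by omega)]
      simp
    simp only [Tr.wt]
    rw [e]
    rcases boundary hq l hl f pos m v hp with ⟨ht, hw⟩ | hw
    · rw [if_pos ht]; omega
    · split_ifs <;> omega

def blk (φ : ℕ → Tr q) : ℕ → List (Bl q)
  | 0 => []
  | (M+1) => (fun c => φ c) :: blk (fun i => φ (q + i)) M
termination_by structural M => M

lemma blk_length (φ : ℕ → Tr q) (M : ℕ) : (blk φ M).length = M := by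
  induction M generalizing φ with
  | zero => rfl
  | succ M ih => simp [blk, ih]

lemma flat_blk (φ : ℕ → Tr q) (M i : ℕ) (h : i < M * q) : flat (blk φ M) i = φ i := by
  induction M generalizing φ i with
  | zero => omega
  | succ M ih =>
    simp only [blk, flat]
    split_ifs with hi
    · rfl
    · rw [ih _ _ (by rw [Nat.succ_mul] at h; omega)]
      congr 1; omega

lemma bwt_blk (φ : ℕ → Tr q) (M : ℕ) :
    bwt (blk φ M) = M + ∑ k ∈ Finset.range (M * q), (φ k).wt k := by
  induction M generalizing φ with
  | zero => simp [blk, bwt]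
  | succ M ih =>
    have e : bwt (blk φ (M+1)) = bw (fun c : Fin q => φ c) + bwt (blk (fun i => φ (q + i)) M) := by
      simp [blk, bwt]
    rw [e, ih, bw, show (M+1) * q = q + M * q by ring, Finset.sum_range_add,
      Fin.sum_univ_eq_sum_range (fun k => (φ k).wt k)]
    have : ∑ k ∈ Finset.range (M * q), (φ (q + k)).wt (q + k) = ∑ k ∈ Finset.range (M * q), (φ (q + k)).wt k :=
      Finset.sum_congr rfl fun k _ => wt_congr _ _ _ (by simp)
    rw [this]; omega

lemma root_boundary (hq : 1 ≤ q) (l : List (ℕ × Bool)) (hl : ∀ a ∈ l, a.1 < q + 1)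
    (φ : ℕ → Tr q) (a M b : ℕ) (hb : 1 ≤ b) (hbM : b < M)
    (hp : ∀ k < M * q, Placed (act l) (φ k) (off φ k) ((k : ℤ) - a * q) [])
    (h0 : W q l (off φ (b * q)) = 0) : a + 1 ≤ b ∧ ∀ i, b * q ≤ i → i < M * q → φ i = .leaf := by
  have hmod : off φ (b * q) % q = 0 := by
    have := off_mod φ (b * q)
    have h4 : off φ (b * q) % q = (b * q) % q := this
    rw [h4, Nat.mul_mod_left]
  have hbq : 1 ≤ b * q := Nat.mul_pos hb hq
  have hle := le_off φ (b * q)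
  obtain ⟨b', hb'⟩ := Nat.dvd_of_mod_eq_zero hmod
  rw [mul_comm q b'] at hb'
  have hb1 : 1 ≤ b' := by
    rcases Nat.eq_zero_or_pos b' with h | h
    · rw [h] at hb'; omega
    · exact h
  rw [W, if_pos ⟨hmod, by omega⟩, hb'] at h0
  have hMq : b * q < M * q := Nat.mul_lt_mul_of_pos_right hbM hq
  have hA : ∃ c, StA b' (act (q := q) l) c := by
    cases St.all (q := q) hq l hl hb1 with
    | A c' hn h => exact ⟨c', h⟩
    | B c' hn h h2 => omega
    | D c' hn h h2 => omega
    | E hn => omega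
    | C a m' v' hn h => omega
  obtain ⟨c, hA⟩ := hA
  -- leaf at a position where act is translation
  have leaf : ∀ i, b * q + i < M * q → off φ (b * q + i) = off φ (b * q) + i → φ (b * q + i) = .leaf ∧
      ((b * q + i : ℕ) : ℤ) - a * q = i + c * q := by
    intro i hi ho
    have hpl := hp _ hi
    rw [ho, hb'] at hpl
    obtain ⟨e, he, he0⟩ := hpl.first
    have hx := hA.eq i
    refine ⟨?_, (Prod.mk.inj ((he (z0 q)).symm.trans (hx (z0 q)))).1⟩
    apply he0
    have := prefix_eq hq ([] ++ List.replicate e 0) [] fun s => by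
      exact (Prod.mk.inj ((he s).symm.trans (hx s))).2
    have := congrArg List.length this
    simpa using this
  have key : ∀ i, b * q + i < M * q → off φ (b * q + i) = off φ (b * q) + i := by
    intro i
    induction i with
    | zero => intro _; rfl
    | succ i ih =>
      intro hi
      have h1 := ih (by omega)
      rw [← add_assoc, off_succ, h1, (leaf i (by omega) h1).1]
      simp [Tr.size]; omega
  constructor
  · have := (leaf 0 hMq rfl).2
    have h1 := hA.le
    have hq0 : (0:ℤ) < q := by exact_mod_cast hq
    have : (b:ℤ) - a = c := by
      apply mul_right_cancel₀ hq0.ne'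
      push_cast at this; linarith
    omega
  · intro i hi hi'
    have := (leaf (i - b * q) (by omega) (key _ (by omega))).1
    rwa [show b * q + (i - b * q) = i by omega] at this

lemma lower_main (hq : 1 ≤ q) (g : G q) (hg : g ∈ Fplus (q+1)) (n : ℕ) (hn : wlen (q+1) g ≤ n) :
    ∃ a bs, a ≤ n ∧ bwt bs ≤ n + 1 ∧ g = nel a bs := by
  classical
  obtain ⟨a, φ, R, hφ, hgr⟩ := exists_rep g hg
  obtain ⟨L, hLl, hL, hLp⟩ := hasLen_wlen hq g hg
  obtain ⟨l, hl1, hl2, hl3⟩ := exists_act L hL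
  have hex : ∃ M, a + 1 ≤ M ∧ ∀ i, M * q ≤ i → φ i = .leaf := by
    refine ⟨R + a + 1, by omega, fun i hi => hφ i ?_⟩
    nlinarith
  obtain ⟨hM1, hM2⟩ := Nat.find_spec hex
  have hmin := fun m => Nat.find_min hex (m := m)
  set M := Nat.find hex
  have hgM : g = tau q ^ a * fel 0 φ (M * q) := by
    rw [hgr, ← fel_pad φ R (max R (M*q)) (le_max_left _ _) hφ, fel_pad φ (M*q) (max R (M*q)) (le_max_right _ _) hM2]
  have hact : ∀ y, rho q (tau q ^ a * fel 0 φ (M * q)) y = act l y := by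
    intro y; rw [← hgM, ← hLp, hl3]
  have hp : ∀ k < M * q, Placed (act l) (φ k) (off φ k) ((k : ℤ) - a * q) [] :=
    fun k hk => (nf_pl a φ (M*q) k hk).congr hact
  have h1 : ∀ b ∈ Finset.Ico 1 M, 1 ≤ W q l (off φ (b * q)) := by
    intro b hb
    obtain ⟨hb1, hb2⟩ := Finset.mem_Ico.1 hb
    by_contra hcon
    obtain ⟨h2, h3⟩ := root_boundary hq l hl2 φ a M b hb1 hb2 hp (by omega)
    refine hmin b hb2 ⟨h2, fun i hi => ?_⟩
    by_cases h : i < M * q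
    · exact h3 i hi h
    · exact hM2 i (by omega)
  have h2 : M - 1 ≤ ∑ k ∈ Finset.range (M * q), W q l (off φ k) := by
    have e : M - 1 ≤ ∑ b ∈ Finset.Ico 1 M, W q l (off φ (b * q)) := by
      have := Finset.card_nsmul_le_sum _ _ 1 h1
      simpa using this
    refine e.trans ?_
    have inj : Function.Injective (fun b : ℕ => b * q) := fun x y h => Nat.eq_of_mul_eq_mul_right hq h
    have := Finset.sum_map (Finset.Ico 1 M) ⟨_, inj⟩ (fun k => W q l (off φ k))
    simp only [Function.Embedding.coeFn_mk] at this
    rw [← this]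
    refine Finset.sum_le_sum_of_subset ?_
    intro k hk
    simp only [Finset.mem_map, Finset.mem_Ico, Function.Embedding.coeFn_mk] at hk
    obtain ⟨b, ⟨_, hb⟩, rfl⟩ := hk
    exact Finset.mem_range.2 (Nat.mul_lt_mul_of_pos_right hb hq)
  have h3 : ∑ k ∈ Finset.range (M * q), (W q l (off φ k) + (φ k).wt k) ≤ l.length := by
    refine le_trans ?_ (sum_W (q := q) l (off φ (M * q)))
    rw [sum_off]
    refine Finset.sum_le_sum fun k hk => ?_
    have := tree_bound hq l hl2 (φ k) _ _ _ (hp k (Finset.mem_range.1 hk))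
    rwa [wt_congr (φ k) _ _ (off_mod φ k)] at this
  rw [Finset.sum_add_distrib] at h3
  refine ⟨a, blk φ M, by omega, ?_, ?_⟩
  · rw [bwt_blk]; omega
  · rw [hgM, nel, blk_length]
    congr 1
    exact fel_congr _ _ _ _ fun i hi => (flat_blk φ M i hi).symm

end Thm


namespace Thm
variable {q : ℕ}

def CB (q n : ℕ) : Set (List (Bl q)) := {bs | bwt bs = n}
def GB (q n : ℕ) : Set (G q) := {g | g ∈ Fplus (q+1) ∧ wlen (q+1) g ≤ n}
noncomputable def cc (q n : ℕ) : ℕ := (CB q n).ncard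
noncomputable def gg (q n : ℕ) : ℕ := (GB q n).ncard

lemma el_maps (n : ℕ) : Set.MapsTo (el (q := q)) (CB q n) (GB q n) := by
  intro bs hbs
  have h : bwt bs = n := hbs
  exact ⟨nel_mem _ _, h ▸ (hasLen_el bs).wlen_le⟩

lemma CB_finite (hq : 1 ≤ q) (n : ℕ) : (CB q n).Finite :=
  Set.Finite.of_injOn (el_maps n) ((el_injective hq).injOn) (finite_ball hq n)

lemma cc_le_gg (hq : 1 ≤ q) (n : ℕ) : cc q n ≤ gg q n :=
  Set.ncard_le_ncard_of_injOn el (el_maps n) (el_injective hq).injOn (finite_ball hq n)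

lemma gg_le (hq : 1 ≤ q) (n : ℕ) : gg q n ≤ (n+1) * ∑ w ∈ Finset.range (n+2), cc q w := by
  classical
  let A : Finset (ℕ × List (Bl q)) :=
    Finset.range (n+1) ×ˢ (Finset.range (n+2)).biUnion fun w => (CB_finite hq w).toFinset
  have hsub : GB q n ⊆ (fun p : ℕ × List (Bl q) => nel p.1 p.2) '' (A : Set _) := by
    rintro g ⟨hg, hn⟩
    obtain ⟨a, bs, ha, hb, rfl⟩ := lower_main hq g hg n hn
    refine ⟨(a, bs), ?_, rfl⟩
    simp only [A, Finset.mem_coe, Finset.mem_product, Finset.mem_range, Finset.mem_biUnion, Set.Finite.mem_toFinset]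
    exact ⟨by omega, bwt bs, by omega, rfl⟩
  have h1 : gg q n ≤ A.card := by
    refine (Set.ncard_le_ncard hsub (A.finite_toSet.image _)).trans ?_
    refine (Set.ncard_image_le A.finite_toSet).trans ?_
    rw [Set.ncard_coe_finset]
  refine h1.trans ?_
  rw [Finset.card_product, Finset.card_range]
  refine Nat.mul_le_mul_left _ (Finset.card_biUnion_le.trans (Finset.sum_le_sum fun w _ => ?_))
  rw [cc, Set.ncard_eq_toFinset_card _ (CB_finite hq w)]

lemma bw_pos (β : Bl q) : 1 ≤ bw β := by unfold bw; omega

lemma bwt_cons (β : Bl q) (bs) : bwt (β :: bs) = bw β + bwt bs := by simp [bwt]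
lemma bwt_append (bs bs' : List (Bl q)) : bwt (bs ++ bs') = bwt bs + bwt bs' := by simp [bwt]

lemma length_le_bwt (bs : List (Bl q)) : bs.length ≤ bwt bs := by
  induction bs with
  | nil => simp
  | cons β bs ih => rw [bwt_cons, List.length_cons]; have := bw_pos β; omega

lemma cc_pos (hq : 1 ≤ q) (n : ℕ) : 1 ≤ cc q n := by
  have : (List.replicate n (fun _ => Tr.leaf) : List (Bl q)) ∈ CB q n := by
    induction n with
    | zero => simp [CB, bwt]
    | succ n ih =>
      have ih : bwt _ = n := ih
      change bwt _ = n + 1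
      rw [List.replicate_succ, bwt_cons, ih]
      simp [bw, Tr.wt]; omega
  exact (Set.ncard_pos (CB_finite hq n)).2 ⟨_, this⟩

lemma append_inj_bwt (a b c d : List (Bl q)) (h : a ++ b = c ++ d) (hw : bwt a = bwt c) :
    a = c ∧ b = d := by
  induction a generalizing c with
  | nil =>
    cases c with
    | nil => exact ⟨rfl, h⟩
    | cons x c => rw [bwt_cons] at hw; have := bw_pos x; simp [bwt] at hw; omega
  | cons y a ih =>
    cases c with
    | nil => rw [bwt_cons] at hw; have := bw_pos y; simp [bwt] at hw; omega
    | cons x c =>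
      simp only [List.cons_append, List.cons.injEq] at h
      obtain ⟨rfl, h⟩ := h
      rw [bwt_cons, bwt_cons] at hw
      obtain ⟨rfl, rfl⟩ := ih c h (by omega)
      exact ⟨rfl, rfl⟩

lemma cc_mul (hq : 1 ≤ q) (m n : ℕ) : cc q m * cc q n ≤ cc q (m+n) := by
  have : cc q m * cc q n = (CB q m ×ˢ CB q n).ncard := (Set.ncard_prod).symm
  rw [this]
  refine Set.ncard_le_ncard_of_injOn (fun p => p.1 ++ p.2) ?_ ?_ (CB_finite hq _)
  · rintro ⟨a, b⟩ ⟨ha, hb⟩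
    have ha : bwt a = m := ha
    have hb : bwt b = n := hb
    change bwt (a ++ b) = m + n
    rw [bwt_append, ha, hb]
  · rintro ⟨a, b⟩ ⟨ha, hb⟩ ⟨c, d⟩ ⟨hc, hd⟩ h
    have ha : bwt a = m := ha
    have hc : bwt c = m := hc
    obtain ⟨rfl, rfl⟩ := append_inj_bwt a b c d h (by rw [ha, hc])
    rfl

def consE (q : ℕ) : (Bl q × List (Bl q)) ↪ List (Bl q) :=
  ⟨fun p => p.1 :: p.2, fun p p' h => by
      simp only [List.cons.injEq] at h; exact Prod.ext h.1 h.2⟩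
lemma consE_apply (a : Bl q) (b) : consE q (a, b) = a :: b := rfl

/-- lists of length N with entries in S -/
def LL (S : Finset (Bl q)) : ℕ → Finset (List (Bl q))
  | 0 => {[]}
  | (N+1) => (S ×ˢ LL S N).map (consE q)

lemma mem_LL (S : Finset (Bl q)) (N : ℕ) (bs) : bs ∈ LL S N ↔ bs.length = N ∧ ∀ β ∈ bs, β ∈ S := by
  induction N generalizing bs with
  | zero =>
    simp only [LL, Finset.mem_singleton]
    constructor
    · rintro rfl; simp
    · rintro ⟨h, -⟩; exact List.length_eq_zero_iff.1 h
  | succ N ih =>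
    simp only [LL, Finset.mem_map, Finset.mem_product, Prod.exists, consE_apply, ih]
    constructor
    · rintro ⟨a, b, ⟨h1, h2, h3⟩, rfl⟩
      refine ⟨by simp [h2], fun β hβ => ?_⟩
      rcases List.mem_cons.1 hβ with rfl | h
      · exact h1
      · exact h3 _ h
    · rintro ⟨h1, h2⟩
      cases bs with
      | nil => simp at h1
      | cons a b =>
        exact ⟨a, b, ⟨h2 a (by simp), by simpa using h1, fun β hβ => h2 β (by simp [hβ])⟩, rfl⟩

lemma sum_LL (S : Finset (Bl q)) (N : ℕ) (t : ℝ) :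
    ∑ bs ∈ LL S N, t ^ bwt bs = (∑ β ∈ S, t ^ bw β) ^ N := by
  induction N with
  | zero => simp [LL, bwt]
  | succ N ih =>
    simp only [LL, Finset.sum_map, Finset.sum_product, consE_apply, bwt_cons, pow_add]
    rw [pow_one, ← ih, mul_comm, Finset.sum_mul_sum]

/-- upper bound on cc from block sums -/
lemma cc_upper (hq : 1 ≤ q) (n : ℕ) (t : ℝ) (ht : 0 < t)
    (hS : ∀ S : Finset (Bl q), ∑ β ∈ S, t ^ bw β ≤ 1) : (cc q n : ℝ) * t ^ n ≤ n + 1 := by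
  classical
  set C := (CB_finite hq n).toFinset with hC
  let S : Finset (Bl q) := C.biUnion fun bs => bs.toFinset
  have hsub : C ⊆ (Finset.range (n+1)).biUnion fun N => LL S N := by
    intro bs hbs
    have hb : bwt bs = n := by simpa [hC, CB] using hbs
    simp only [Finset.mem_biUnion, Finset.mem_range, mem_LL]
    refine ⟨bs.length, ?_, rfl, fun β hβ => ?_⟩
    · have := length_le_bwt bs; omega
    · simp only [S, Finset.mem_biUnion, List.mem_toFinset]
      exact ⟨bs, hbs, hβ⟩
  have h1 : (cc q n : ℝ) * t ^ n = ∑ bs ∈ C, t ^ bwt bs := by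
    rw [Finset.sum_congr rfl (g := fun _ => t ^ n), Finset.sum_const, nsmul_eq_mul, cc,
      Set.ncard_eq_toFinset_card _ (CB_finite hq n)]
    intro bs hbs
    have hb : bwt bs = n := by simpa [hC, CB] using hbs
    rw [hb]
  rw [h1]
  calc ∑ bs ∈ C, t ^ bwt bs ≤ ∑ bs ∈ (Finset.range (n+1)).biUnion fun N => LL S N, t ^ bwt bs :=
        Finset.sum_le_sum_of_subset_of_nonneg hsub fun _ _ _ => by positivity
    _ = ∑ N ∈ Finset.range (n+1), ∑ bs ∈ LL S N, t ^ bwt bs := by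
        refine Finset.sum_biUnion ?_
        intro N _ N' _ hne
        refine Finset.disjoint_left.2 fun bs h1 h2 => hne ?_
        rw [mem_LL] at h1 h2
        exact h1.1.symm.trans h2.1
    _ ≤ ∑ N ∈ Finset.range (n+1), 1 := by
        refine Finset.sum_le_sum fun N _ => ?_
        rw [sum_LL]
        exact pow_le_one₀ (Finset.sum_nonneg fun _ _ => by positivity) (hS S)
    _ = n + 1 := by simp

/-- lower bound -/
lemma cc_lower (hq : 1 ≤ q) (t : ℝ) (ht : 0 < t) (S : Finset (Bl q)) (hS : 1 ≤ ∑ β ∈ S, t ^ bw β) (K : ℕ) :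
    ∃ D : ℕ, (K : ℝ) ≤ ∑ n ∈ Finset.range D, (cc q n : ℝ) * t ^ n := by
  classical
  let U := (Finset.range K).biUnion fun N => LL S N
  have h0 : (K : ℝ) ≤ ∑ bs ∈ U, t ^ bwt bs := by
    have e : ∑ bs ∈ U, t ^ bwt bs = ∑ N ∈ Finset.range K, ∑ bs ∈ LL S N, t ^ bwt bs := by
      refine Finset.sum_biUnion ?_
      intro N _ N' _ hne
      refine Finset.disjoint_left.2 fun bs h1 h2 => hne ?_
      rw [mem_LL] at h1 h2
      exact h1.1.symm.trans h2.1
    rw [e]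
    calc (K : ℝ) = ∑ N ∈ Finset.range K, 1 := by simp
      _ ≤ _ := by
        refine Finset.sum_le_sum fun N _ => ?_
        rw [sum_LL]
        exact one_le_pow₀ hS
  refine ⟨U.sup bwt + 1, h0.trans ?_⟩
  rw [← Finset.sum_fiberwise_of_maps_to (s := U) (t := Finset.range (U.sup bwt + 1)) (g := bwt)
    (fun bs hbs => Finset.mem_range.2 (Nat.lt_succ_of_le (Finset.le_sup (f := bwt) hbs)))]
  refine Finset.sum_le_sum fun n _ => ?_
  rw [Finset.sum_congr rfl (g := fun _ => t ^ n), Finset.sum_const, nsmul_eq_mul]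
  · refine mul_le_mul_of_nonneg_right ?_ (by positivity)
    rw [cc, Set.ncard_eq_toFinset_card _ (CB_finite hq n)]
    norm_cast
    refine Finset.card_le_card fun bs hbs => ?_
    simp only [Finset.mem_filter] at hbs
    simpa [CB] using hbs.2
  · intro bs hbs
    simp only [Finset.mem_filter] at hbs
    rw [hbs.2]

end Thm


namespace Thm
variable {q : ℕ}

def nodeE (q : ℕ) : (Fin (q+1) → Tr q) ↪ Tr q := ⟨Tr.node, fun f f' h => by injection h⟩
lemma nodeE_apply (f : Fin (q+1) → Tr q) : nodeE q f = .node f := rfl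

def trees (q : ℕ) : ℕ → Finset (Tr q)
  | 0 => {.leaf}
  | (h+1) => Finset.cons .leaf ((Fintype.piFinset fun _ => trees q h).map (nodeE q)) (by
      simp [nodeE_apply])

lemma leaf_mem (h : ℕ) : Tr.leaf ∈ trees q h := by
  cases h <;> simp [trees]

lemma node_mem {h : ℕ} {f : Fin (q+1) → Tr q} : Tr.node f ∈ trees q (h+1) ↔ ∀ k, f k ∈ trees q h := by
  simp [trees, nodeE_apply]

lemma trees_mono_succ (h : ℕ) : trees q h ⊆ trees q (h+1) := by
  induction h with
  | zero => intro T hT; simp [trees] at hT; rw [hT]; exact leaf_mem _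
  | succ h ih =>
    intro T hT
    cases T with
    | leaf => exact leaf_mem _
    | node f => rw [node_mem] at hT ⊢; exact fun k => ih (hT k)

lemma trees_mono : Monotone (trees q) := monotone_nat_of_le_succ trees_mono_succ

lemma exists_mem (T : Tr q) : ∃ h, T ∈ trees q h := by
  induction T with
  | leaf => exact ⟨0, leaf_mem _⟩
  | node f ih =>
    choose g hg using ih
    refine ⟨Finset.univ.sup g + 1, node_mem.2 fun k => ?_⟩
    exact trees_mono (Finset.le_sup (Finset.mem_univ k)) (hg k)

noncomputable def Th (q h : ℕ) (t : ℝ) (m : ℕ) : ℝ := ∑ T ∈ trees q h, t ^ T.wt m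

lemma Th_zero (t : ℝ) (m : ℕ) : Th q 0 t m = 1 := by simp [Th, trees, Tr.wt]

lemma Th_congr (h : ℕ) (t : ℝ) (m m' : ℕ) (e : m % q = m' % q) : Th q h t m = Th q h t m' :=
  Finset.sum_congr rfl fun T _ => by rw [wt_congr T m m' e]

lemma Th_pos (h : ℕ) {t : ℝ} (ht : 0 < t) (m : ℕ) : 0 < Th q h t m :=
  Finset.sum_pos (fun _ _ => by positivity) ⟨_, leaf_mem h⟩

lemma Th_succ (h : ℕ) (t : ℝ) (m : ℕ) : Th q (h+1) t m = 1 + t * (t^2 * ∏ k : Fin (q+1), Th q h t (m+k)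
    + (1 - t^2) * ∏ k : Fin (q+1), if q ≤ m % q + k then 1 else Th q h t (m+k)) := by
  classical
  have e0 : Th q (h+1) t m = 1 + ∑ f ∈ Fintype.piFinset (fun _ : Fin (q+1) => trees q h), t ^ (Tr.node f).wt m := by
    simp only [Th, trees, Finset.sum_cons, Finset.sum_map, nodeE_apply]
    simp [Tr.wt]
  rw [e0]
  have e1 : ∏ k : Fin (q+1), Th q h t (m+k) =
      ∑ f ∈ Fintype.piFinset (fun _ : Fin (q+1) => trees q h), ∏ k, t ^ (f k).wt (m+k) := by
    simp only [Th]
    exact Finset.prod_univ_sum (fun _ => trees q h) fun (k : Fin (q+1)) T => t ^ T.wt (m+k)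
  have e2 : (∏ k : Fin (q+1), if q ≤ m % q + k then 1 else Th q h t (m+k)) =
      ∑ f ∈ Fintype.piFinset (fun _ : Fin (q+1) => trees q h),
        if triv f (m % q) then ∏ k, t ^ (f k).wt (m+k) else 0 := by
    have h1 : ∀ k : Fin (q+1), (if q ≤ m % q + k then 1 else Th q h t (m+k)) =
        ∑ T ∈ trees q h, (if q ≤ m % q + k ∧ T ≠ .leaf then 0 else t ^ T.wt (m+k)) := by
      intro k
      split_ifs with hk
      · rw [Finset.sum_eq_single_of_mem _ (leaf_mem h)]
        · simp [Tr.wt]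
        · intro T _ hT; simp [hk, hT]
      · simp only [Th, hk, false_and, if_false]
    simp only [h1]
    rw [Finset.prod_univ_sum (fun _ => trees q h) fun (k : Fin (q+1)) T =>
      (if q ≤ m % q + k ∧ T ≠ .leaf then (0:ℝ) else t ^ T.wt (m+k))]
    refine Finset.sum_congr rfl fun f _ => ?_
    split_ifs with ht
    · refine Finset.prod_congr rfl fun k _ => ?_
      rw [if_neg]
      rintro ⟨h2, h3⟩; exact h3 (ht k h2)
    · simp only [triv, not_forall] at ht
      obtain ⟨k, hk, hk'⟩ := ht
      exact Finset.prod_eq_zero (Finset.mem_univ k) (if_pos ⟨hk, hk'⟩)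
  rw [e1, e2, Finset.mul_sum, Finset.mul_sum, ← Finset.sum_add_distrib, Finset.mul_sum]
  congr 1
  refine Finset.sum_congr rfl fun f _ => ?_
  simp only [Tr.wt]
  rw [Finset.prod_pow_eq_pow_sum]
  split_ifs with ht
  · ring
  · ring

noncomputable def PP (q h : ℕ) (t : ℝ) : ℝ := ∏ c ∈ Finset.range q, Th q h t c

lemma Th_period (h : ℕ) (t : ℝ) (ht : 0 < t) (m : ℕ) : ∏ k ∈ Finset.range q, Th q h t (m+k) = PP q h t := by
  induction m with
  | zero => simp [PP]
  | succ m ih =>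
    rw [← ih]
    have h1 := Finset.prod_range_succ (fun k => Th q h t (m+k)) q
    have h2 := Finset.prod_range_succ' (fun k => Th q h t (m+k)) q
    rw [h2] at h1
    have h3 : Th q h t (m + q) = Th q h t (m + 0) := Th_congr _ _ _ _ (by simp)
    rw [h3] at h1
    have := mul_right_cancel₀ (Th_pos h ht _).ne' h1
    rw [← this]
    exact Finset.prod_congr rfl fun k _ => by congr 1; ring

lemma Th_rec (h : ℕ) (t : ℝ) (ht : 0 < t) (c : ℕ) (hc : c < q) : Th q (h+1) t c =
    1 + t * (t^2 * (Th q h t c * PP q h t) + (1 - t^2) * ∏ i ∈ Finset.Ico c q, Th q h t i) := by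
  rw [Th_succ]
  congr 4
  · rw [Fin.prod_univ_eq_prod_range (fun k => Th q h t (c+k)), Finset.prod_range_succ, Th_period h t ht, mul_comm]
    congr 1
    exact Th_congr _ _ _ _ (by simp)
  · rw [Fin.prod_univ_eq_prod_range (fun k => if q ≤ c % q + k then 1 else Th q h t (c+k)),
      Nat.mod_eq_of_lt hc, Finset.prod_Ico_eq_prod_range]
    have hsub : Finset.range (q - c) ⊆ Finset.range (q+1) := Finset.range_mono (by omega)
    rw [← Finset.prod_subset hsub]
    · refine Finset.prod_congr rfl fun k hk => ?_
      have := Finset.mem_range.1 hk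
      rw [if_neg (by omega)]
    · intro k hk hk'
      have := Finset.mem_range.not.1 hk'
      rw [if_pos (by omega)]

/-- blocks of bounded height -/
def bl (q h : ℕ) : Finset (Bl q) := Fintype.piFinset fun _ => trees q h

lemma sum_bl (h : ℕ) (t : ℝ) : ∑ β ∈ bl q h, t ^ bw β = t * PP q h t := by
  rw [PP, ← Fin.prod_univ_eq_prod_range (fun c => Th q h t c)]
  simp only [Th]
  rw [Finset.prod_univ_sum (fun _ => trees q h) (fun (c : Fin q) T => t ^ T.wt (c:ℕ)), Finset.mul_sum]
  refine Finset.sum_congr rfl fun β _ => ?_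
  rw [Finset.prod_pow_eq_pow_sum, bw, pow_add, pow_one]

lemma sub_bl (S : Finset (Bl q)) : ∃ h, S ⊆ bl q h := by
  classical
  choose g hg using fun T : Tr q => exists_mem T
  refine ⟨S.sup fun β => Finset.univ.sup fun c => g (β c), fun β hβ => ?_⟩
  simp only [bl, Fintype.mem_piFinset]
  intro c
  refine trees_mono ?_ (hg (β c))
  exact (Finset.le_sup (f := fun c => g (β c)) (Finset.mem_univ c)).trans
    (Finset.le_sup (f := fun β : Bl q => Finset.univ.sup fun c => g (β c)) hβ)

lemma Th_mono {t : ℝ} (ht : 0 < t) (m : ℕ) : Monotone fun h => Th q h t m := by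
  intro h h' hh
  exact Finset.sum_le_sum_of_subset_of_nonneg (trees_mono hh) fun _ _ _ => by positivity

end Thm


namespace Thm
variable {q : ℕ}

/-- the explicit super-solution -/
lemma exists_super (t : ℝ) (ht : 0 < t) (ht1 : t < 1) (heq : (1 - t^2)^q * (1 + t - t^2) = 1) :
    ∃ R : ℕ → ℝ, R q = 1 ∧ R 0 = t ∧ (∀ c, c ≤ q → 0 < R c) ∧
      ∀ c < q, R c = (1 - t^2) * R (c+1) - t * (1 - t^2) := by
  set r := 1 - t^2 with hr
  have hr0 : 0 < r := by nlinarith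
  have hr1 : r < 1 := by nlinarith
  let R : ℕ → ℝ := fun c => (1 + r / t) * r ^ (q - c) - r / t
  have h0 : R 0 = t := by
    simp only [R, Nat.sub_zero]
    field_simp
    have : (t + r) * r^q = 1 := by rw [← heq]; ring
    rw [this]; ring
  refine ⟨R, by simp [R], h0, ?_, ?_⟩
  · intro c hc
    rw [← h0] at ht
    refine ht.trans_le ?_
    simp only [R, Nat.sub_zero]
    have : r^q ≤ r^(q-c) := pow_le_pow_of_le_one hr0.le hr1.le (by omega)
    have h2 : 0 ≤ 1 + r/t := by rw [h0] at ht; positivity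
    nlinarith [mul_le_mul_of_nonneg_left this h2]
  · intro c hc
    simp only [R]
    rw [show q - c = (q - (c+1)) + 1 by omega, pow_succ]
    have : r / t = r * (r/t) + t * r := by
      field_simp; rw [hr]; ring
    linear_combination -this

lemma prod_ratio (R : ℕ → ℝ) (q : ℕ) (hR : ∀ c ≤ q, 0 < R c) (c : ℕ) (hc : c ≤ q) :
    ∏ i ∈ Finset.Ico c q, R (i+1) / R i = R q / R c := by
  induction q, hc using Nat.le_induction with
  | base => simp [div_self (hR c le_rfl).ne']
  | succ n hn ih =>
    rw [Finset.prod_Ico_succ_top hn, ih fun c h => hR c (by omega)]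
    have := (hR n (by omega)).ne'
    field_simp

lemma Th_le (t : ℝ) (ht : 0 < t) (ht1 : t < 1) (R : ℕ → ℝ) (hRq : R q = 1) (hR0 : R 0 = t)
    (hR : ∀ c, c ≤ q → 0 < R c) (hrec : ∀ c < q, R c = (1 - t^2) * R (c+1) - t * (1 - t^2)) (h : ℕ) :
    ∀ c < q, Th q h t c ≤ R (c+1) / R c := by
  have hr0 : 0 < 1 - t^2 := by nlinarith
  have hfix : ∀ c < q, R (c+1) / R c =
      1 + t * (t^2 * (R (c+1) / R c * (1/t)) + (1 - t^2) * (1 / R c)) := by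
    intro c hc
    have h1 := hR c hc.le
    have h2 := hrec c hc
    field_simp
    linear_combination -h2
  have hP : ∏ i ∈ Finset.range q, R (i+1) / R i = 1/t := by
    have := prod_ratio R q hR 0 (Nat.zero_le _)
    rw [hRq, hR0] at this
    rw [← this, Finset.range_eq_Ico]
  induction h with
  | zero =>
    intro c hc
    rw [Th_zero, hfix c hc]
    have h1 := hR c hc.le
    have h2 := hR (c+1) hc
    have : 0 ≤ t * (t^2 * (R (c+1) / R c * (1/t)) + (1 - t^2) * (1 / R c)) := by positivity
    linarith
  | succ h ih =>
    intro c hc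
    rw [Th_rec h t ht c hc, hfix c hc]
    have h1 := hR c hc.le
    have h2 := hR (c+1) hc
    have hPP : PP q h t ≤ 1/t := by
      rw [← hP]
      exact Finset.prod_le_prod (fun i _ => (Th_pos h ht i).le) fun i hi => ih i (Finset.mem_range.1 hi)
    have hQ : ∏ i ∈ Finset.Ico c q, Th q h t i ≤ 1 / R c := by
      have := prod_ratio R q hR c hc.le
      rw [hRq] at this
      rw [← this]
      exact Finset.prod_le_prod (fun i _ => (Th_pos h ht i).le) fun i hi => ih i (Finset.mem_Ico.1 hi).2
    have hPP0 : 0 ≤ PP q h t := Finset.prod_nonneg fun i _ => (Th_pos h ht i).le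
    have := ih c hc
    gcongr

/-- uniqueness of κ -/
lemma kappa_unique (t κ : ℝ) (ht : 0 < t) (htq : (q + 1) * t < 1) (heq : (1 - t^2)^q * (1 + t - t^2) = 1)
    (hκ : 1 - t^2 ≤ κ) (h : κ^q * (1 + (t - t^3) - κ) = t) : κ = 1 - t^2 := by
  by_contra hne
  have hqt : 0 ≤ (q:ℝ) * t := by positivity
  have ht1 : t < 1 := by linarith
  set r := 1 - t^2 with hr
  have hr0 : 0 < r := by nlinarith
  have hδ : 0 < κ - r := by
    rcases hκ.lt_or_eq with h | h
    · linarith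
    · exact absurd h.symm hne
  have hκ0 : 0 < κ := by linarith
  set δ := κ - r with hδ'
  set B := t * (1 + t - t^2) with hB
  have hB0 : 0 < B := by
    have : 0 < 1 + t - t^2 := by nlinarith
    positivity
  have e1 : r^q * B = t := by
    rw [hB]; linear_combination t * heq
  have e2 : κ^q * (B - δ) = t := by
    rw [← h]; congr 1; rw [hB, hδ', hr]; ring
  have bern := one_add_mul_le_pow (a := -(δ/κ)) (by
    have : δ/κ ≤ 1 := by rw [div_le_one hκ0]; linarith
    linarith) q
  have e3 : 1 + -(δ/κ) = r/κ := by rw [hδ']; field_simp; ring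
  rw [e3, div_pow] at bern
  have hκq : 0 < κ^q := by positivity
  have e4 : r^q / κ^q = (B - δ)/B := by
    rw [div_eq_div_iff hκq.ne' hB0.ne', e1, ← e2]; ring
  rw [e4] at bern
  have h5 : δ / B ≤ q * (δ/κ) := by
    have : (B - δ)/B = 1 - δ/B := by field_simp
    rw [this] at bern; linarith
  have h6 : κ ≤ q * B := by
    rw [div_le_iff₀ hB0] at h5
    have h7 : δ * κ ≤ δ * (q * B) := by
      calc δ * κ ≤ (q * (δ/κ) * B) * κ := by gcongr
        _ = δ * (q * B) := by field_simp
    exact le_of_mul_le_mul_left h7 hδ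
  have h8 : q * B < r := by
    have : (q * t) * (1 + t - t^2) ≤ (1 - t) * (1 + t - t^2) := by
      apply mul_le_mul_of_nonneg_right <;> nlinarith
    have h9 : 0 < t^2 * (1-t) := by have := sub_pos.2 ht1; positivity
    rw [hB, hr]; nlinarith
  linarith

lemma PP_tendsto (t : ℝ) (ht : 0 < t) (htq : (q + 1) * t < 1)
    (heq : (1 - t^2)^q * (1 + t - t^2) = 1) :
    (∀ h, t * PP q h t ≤ 1) ∧ Filter.Tendsto (fun h => t * PP q h t) Filter.atTop (nhds 1) := by
  have hqt : 0 ≤ (q:ℝ) * t := by positivity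
  have ht1 : t < 1 := by linarith
  obtain ⟨R, hRq, hR0, hR, hrec⟩ := exists_super t ht ht1 heq
  have hle := Th_le t ht ht1 R hRq hR0 hR hrec
  have hP : ∏ i ∈ Finset.range q, R (i+1) / R i = 1/t := by
    have := prod_ratio R q hR 0 (Nat.zero_le _)
    rw [hRq, hR0] at this
    rw [← this, Finset.range_eq_Ico]
  have hPP : ∀ h, PP q h t ≤ 1/t := by
    intro h
    rw [← hP]
    exact Finset.prod_le_prod (fun i _ => (Th_pos h ht i).le) fun i hi => hle h i (Finset.mem_range.1 hi)
  refine ⟨fun h => ?_, ?_⟩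
  · have := mul_le_mul_of_nonneg_left (hPP h) ht.le
    rwa [mul_one_div, div_self ht.ne'] at this
  have hlim : ∀ c : ℕ, ∃ X, c < q → Filter.Tendsto (fun h => Th q h t c) Filter.atTop (nhds X) := by
    intro c
    by_cases hc : c < q
    · exact ⟨_, fun _ => tendsto_atTop_ciSup (Th_mono ht c) ⟨_, by rintro _ ⟨h, rfl⟩; exact hle h c hc⟩⟩
    · exact ⟨0, fun h => absurd h hc⟩
  choose X hX using hlim
  have hX1 : ∀ c < q, 1 ≤ X c := fun c hc => ge_of_tendsto' (hX c hc) fun h => by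
    rw [← Th_zero (q := q) t c]; exact Th_mono ht c (Nat.zero_le h)
  have hPl : Filter.Tendsto (fun h => PP q h t) Filter.atTop (nhds (∏ c ∈ Finset.range q, X c)) :=
    tendsto_finsetProd _ fun c hc => hX c (Finset.mem_range.1 hc)
  have hQl : ∀ c, Filter.Tendsto (fun h => ∏ i ∈ Finset.Ico c q, Th q h t i) Filter.atTop
      (nhds (∏ i ∈ Finset.Ico c q, X i)) := fun c =>
    tendsto_finsetProd _ fun i hi => hX i (Finset.mem_Ico.1 hi).2
  set P := ∏ c ∈ Finset.range q, X c with hPdef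
  have hfix : ∀ c < q, X c = 1 + t * (t^2 * (X c * P) + (1 - t^2) * ∏ i ∈ Finset.Ico c q, X i) := by
    intro c hc
    have h1 := (hX c hc).comp (Filter.tendsto_add_atTop_nat 1)
    have h2 : Filter.Tendsto (fun h => Th q (h+1) t c) Filter.atTop
        (nhds (1 + t * (t^2 * (X c * P) + (1 - t^2) * ∏ i ∈ Finset.Ico c q, X i))) := by
      simp only [Th_rec _ t ht c hc]
      exact ((((hX c hc).mul hPl).const_mul _).add ((hQl c).const_mul _)).const_mul _ |>.const_add _
    exact tendsto_nhds_unique h1 h2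
  have hP0 : 0 < P := Finset.prod_pos fun c hc => by
    have := hX1 c (Finset.mem_range.1 hc); linarith
  have hPle : P ≤ 1/t := le_of_tendsto' hPl hPP
  set κ := 1 - t^3 * P with hκ
  have hQ0 : ∀ c, 0 < ∏ i ∈ Finset.Ico c q, X i := fun c => Finset.prod_pos fun i hi => by
    have := hX1 i (Finset.mem_Ico.1 hi).2; linarith
  -- telescoping identity
  have tel : ∀ n ≤ q, (1 - κ) * (∏ i ∈ Finset.Ico (q - n) q, X i)⁻¹ + (t - t^3) =
      κ^n * ((1 - κ) + (t - t^3)) := by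
    intro n
    induction n with
    | zero => intro _; simp
    | succ n ih =>
      intro hn
      have ih := ih (by omega)
      have e : ∏ i ∈ Finset.Ico (q - (n+1)) q, X i = X (q - (n+1)) * ∏ i ∈ Finset.Ico (q - n) q, X i := by
        have := Finset.prod_eq_prod_Ico_succ_bot (show q - (n+1) < q by omega) X
        rw [this, show q - (n+1) + 1 = q - n by omega]
      have hf := hfix (q - (n+1)) (by omega)
      rw [e] at hf
      rw [e, pow_succ]
      set x := X (q - (n+1))
      set Q := ∏ i ∈ Finset.Ico (q - n) q, X i
      have hx : 0 < x := by have := hX1 (q - (n+1)) (by omega); change 1 ≤ x at this; linarith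
      have hQ : 0 < Q := hQ0 _
      have hf' : κ * x = 1 + (t - t^3) * (x * Q) := by
        rw [hκ]; linear_combination hf
      have hf'' : (x * Q)⁻¹ = κ * Q⁻¹ - (t - t^3) := by
        field_simp; linear_combination -hf'
      rw [hf'']
      linear_combination κ * ih
  have hfin := tel q le_rfl
  rw [Nat.sub_self, ← Finset.range_eq_Ico] at hfin
  have hk : κ^q * (1 + (t - t^3) - κ) = t := by
    have h1 : (1 - κ) * P⁻¹ = t^3 := by rw [hκ]; field_simp; ring
    rw [h1] at hfin
    linear_combination -hfin
  have hκge : 1 - t^2 ≤ κ := by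
    have : t^3 * P ≤ t^3 * (1/t) := by gcongr
    have h2 : t^3 * (1/t) = t^2 := by field_simp
    rw [hκ]; linarith
  have hkk := kappa_unique t κ ht htq heq hκge hk
  have hPt : t * P = 1 := by
    have : t^2 * (t * P) = t^2 * 1 := by
      rw [hκ] at hkk; linear_combination -hkk
    exact mul_left_cancel₀ (by positivity) this
  rw [← hPt]
  exact hPl.const_mul _

end Thm


namespace Thm
variable {q : ℕ}

lemma div_form (y : ℝ) (hy : 0 < y) : (y^2 - 1)^q * (y^2 + y - 1) =
    y^(2*(q+1)) * ((1 - (1/y)^2)^q * (1 + 1/y - (1/y)^2)) := by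
  have e1 : y^2 - 1 = y^2 * (1 - (1/y)^2) := by field_simp
  have e2 : y^2 + y - 1 = y^2 * (1 + 1/y - (1/y)^2) := by field_simp
  rw [e1, e2, mul_pow]; ring

lemma root_lo (hq : 1 ≤ q) (t : ℝ) (ht : (q+1) * t = 1) : (1 - t^2)^q * (1 + t - t^2) < 1 := by
  have hq' : (1:ℝ) ≤ q := by exact_mod_cast hq
  have ht0 : 0 < t := by
    by_contra h
    have : (q + 1 : ℝ) * t ≤ 0 := mul_nonpos_of_nonneg_of_nonpos (by positivity) (by linarith)
    linarith
  have ht1 : t < 1 := by nlinarith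
  have e : 1 + t - t^2 = 1 + q * t^2 := by linear_combination -t * ht
  have h1 : 0 < 1 - t^2 := by nlinarith
  have h2 := one_add_mul_le_pow (a := t^2) (by nlinarith) q
  rw [e]
  calc (1 - t^2)^q * (1 + q * t^2) ≤ (1 - t^2)^q * (1 + t^2)^q := by gcongr
    _ = (1 - t^4)^q := by rw [← mul_pow]; ring
    _ < 1 := by
      refine pow_lt_one₀ ?_ ?_ (by omega)
      · have : 1 - t^4 = (1 - t^2) * (1 + t^2) := by ring
        rw [this]; positivity
      · have : 0 < t^4 := by positivity
        linarith

lemma root_hi (t : ℝ) (ht : ((q:ℝ) + 3/2) * t = 1) : 1 < (1 - t^2)^q * (1 + t - t^2) := by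
  have hq0 : (0:ℝ) ≤ q := by positivity
  have ht0 : 0 < t := by
    by_contra h
    have : (q + 3/2 : ℝ) * t ≤ 0 := mul_nonpos_of_nonneg_of_nonpos (by positivity) (by linarith)
    linarith
  have hqt : (q:ℝ) * t = 1 - 3/2 * t := by linarith
  have hqt0 : 0 ≤ (q:ℝ) * t := by positivity
  have ht1 : t < 1 := by nlinarith
  have h1 : 0 < 1 - t^2 := by nlinarith
  have h2 : 0 < 1 + t - t^2 := by nlinarith
  have l1 := Real.one_sub_inv_le_log_of_pos h1
  have l2 := Real.le_log_one_add_of_nonneg (x := t - t^2) (by nlinarith)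
  rw [show 1 + (t - t^2) = 1 + t - t^2 by ring] at l2
  have h3 : 0 < 1 - t := by linarith
  have h4 : 0 < 1 + t := by linarith
  have h5 : 0 < 2 - t := by linarith
  have key : 0 < q * (1 - (1 - t^2)⁻¹) + 2 * (t - t^2) / (t - t^2 + 2) := by
    have e1 : (q:ℝ) * (1 - (1 - t^2)⁻¹) = -((1 - 3/2*t) * t / ((1 - t) * (1+t))) := by
      rw [← hqt, show 1 - t^2 = (1-t)*(1+t) by ring]; field_simp; ring
    have e2 : 2 * (t - t^2) / (t - t^2 + 2) = 2 * t * (1 - t) / ((2-t) * (1+t)) := by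
      rw [show t - t^2 + 2 = (2-t)*(1+t) by ring]; congr 1; ring
    rw [e1, e2]
    have e3 : -((1 - 3/2*t) * t / ((1 - t) * (1+t))) + 2 * t * (1 - t) / ((2-t) * (1+t)) =
       t^3 / (2 * ((1-t) * (1+t) * (2-t))) := by
      field_simp; ring
    rw [e3]; positivity
  have h6 : 0 < Real.log ((1 - t^2)^q * (1 + t - t^2)) := by
    rw [Real.log_mul (by positivity) h2.ne', Real.log_pow]
    have := mul_le_mul_of_nonneg_left l1 hq0
    linarith
  exact (Real.log_pos_iff (by positivity)).1 h6

lemma exists_root (hq : 1 ≤ q) : ∃ ζ : ℝ, (q:ℝ) + 1 < ζ ∧ ζ < (q:ℝ) + 1 + 1/2 ∧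
    (ζ^2 - 1)^q * (ζ^2 + ζ - 1) = ζ^(2*(q+1)) := by
  let f : ℝ → ℝ := fun y => (y^2 - 1)^q * (y^2 + y - 1) - y^(2*(q+1))
  have hf : Continuous f := by fun_prop
  have ha : f (q+1) < 0 := by
    have h0 : (0:ℝ) < q + 1 := by positivity
    have h1 := root_lo hq (1/((q:ℝ)+1)) (by field_simp)
    simp only [f]
    rw [div_form _ h0]
    have : (0:ℝ) < ((q:ℝ)+1)^(2*(q+1)) := by positivity
    nlinarith
  have hb : 0 < f (q+1+1/2) := by
    have h0 : (0:ℝ) < q + 1 + 1/2 := by positivity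
    have h1 := root_hi (q := q) (1/((q:ℝ)+1+1/2)) (by field_simp; ring)
    simp only [f]
    rw [div_form _ h0]
    have : (0:ℝ) < ((q:ℝ)+1+1/2)^(2*(q+1)) := by positivity
    nlinarith
  obtain ⟨ζ, ⟨h1, h2⟩, h3⟩ := intermediate_value_Ioo (by linarith : (q:ℝ)+1 ≤ q+1+1/2) hf.continuousOn ⟨ha, hb⟩
  exact ⟨ζ, h1, h2, sub_eq_zero.1 h3⟩

lemma growth (hq : 1 ≤ q) (ζ : ℝ) (h1 : (q:ℝ) + 1 < ζ)
    (heq : (ζ^2 - 1)^q * (ζ^2 + ζ - 1) = ζ^(2*(q+1))) :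
    Filter.Tendsto (fun n : ℕ => (gg q n : ℝ) ^ ((n:ℝ)⁻¹)) Filter.atTop (nhds ζ) := by
  have hq0 : (0:ℝ) ≤ q := by positivity
  have hζ0 : 0 < ζ := by linarith
  have hζ1 : 1 < ζ := by linarith
  set t := 1/ζ with ht
  have ht0 : 0 < t := by positivity
  have htq : ((q:ℝ) + 1) * t < 1 := by rw [ht, mul_one_div, div_lt_one hζ0]; exact h1
  have heqt : (1 - t^2)^q * (1 + t - t^2) = 1 := by
    rw [div_form ζ hζ0] at heq
    have : ζ^(2*(q+1)) * ((1 - t^2)^q * (1 + t - t^2)) = ζ^(2*(q+1)) * 1 := by rw [mul_one]; exact heq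
    exact mul_left_cancel₀ (by positivity) this
  obtain ⟨hS1, hS2⟩ := PP_tendsto t ht0 htq heqt
  -- upper bound for cc
  have hup : ∀ n, (cc q n : ℝ) ≤ (n+1) * ζ^n := by
    intro n
    have := cc_upper hq n t ht0 fun S => by
      obtain ⟨h, hh⟩ := sub_bl S
      refine (Finset.sum_le_sum_of_subset_of_nonneg hh fun _ _ _ => by positivity).trans ?_
      rw [sum_bl]; exact hS1 h
    have h2 := mul_le_mul_of_nonneg_right this (show (0:ℝ) ≤ ζ^n by positivity)
    rw [mul_assoc, ← mul_pow, ht, one_div_mul_cancel hζ0.ne', one_pow, mul_one] at h2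
    exact h2
  have hcpos : ∀ n, (1:ℝ) ≤ cc q n := fun n => by exact_mod_cast cc_pos hq n
  -- Fekete
  have hsub : Subadditive fun n => - Real.log (cc q n) := by
    intro m n
    have h := cc_mul hq m n
    have h' : (cc q m : ℝ) * cc q n ≤ cc q (m+n) := by exact_mod_cast h
    have hm := hcpos m
    have hn := hcpos n
    have := Real.log_le_log (by positivity) h'
    rw [Real.log_mul (by positivity) (by positivity)] at this
    linarith
  have hlogζ : 0 < Real.log ζ := Real.log_pos hζ1
  have hlogup : ∀ n : ℕ, Real.log (cc q n) ≤ Real.log (n+1) + n * Real.log ζ := by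
    intro n
    have hn := hcpos n
    have := Real.log_le_log (by positivity) (hup n)
    rwa [Real.log_mul (by positivity) (by positivity), Real.log_pow] at this
  have hbdd : BddBelow (Set.range fun n : ℕ => (- Real.log (cc q n)) / n) := by
    refine ⟨-(1 + Real.log ζ), ?_⟩
    rintro _ ⟨n, rfl⟩
    rcases Nat.eq_zero_or_pos n with rfl | hn
    · simp; linarith
    · have hn' : (0:ℝ) < n := by exact_mod_cast hn
      simp only
      rw [le_div_iff₀ hn']
      have := hlogup n
      have h2 := Real.log_le_sub_one_of_pos (show (0:ℝ) < n + 1 by positivity)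
      nlinarith
  have hlim := hsub.tendsto_lim hbdd
  set L := -hsub.lim with hL
  have hlim' : Filter.Tendsto (fun n : ℕ => Real.log (cc q n) / n) Filter.atTop (nhds L) := by
    have := hlim.neg
    refine this.congr fun n => ?_
    rw [neg_div, neg_neg]
  have hcL : ∀ n : ℕ, (cc q n : ℝ) ≤ Real.exp L ^ n := by
    intro n
    rcases Nat.eq_zero_or_pos n with rfl | hn
    · have := hup 0; simpa using this
    · have hn' : (0:ℝ) < n := by exact_mod_cast hn
      have := hsub.lim_le_div hbdd (n := n) (by omega)
      have h0 := hcpos n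
      rw [le_div_iff₀ hn'] at this
      rw [← Real.exp_nat_mul, ← Real.log_le_iff_le_exp (by positivity), hL]
      linarith
  have hLge : Real.log ζ ≤ L := by
    by_contra hlt
    push Not at hlt
    have he : Real.exp L < ζ := by rwa [Real.lt_log_iff_exp_lt hζ0] at hlt
    obtain ⟨y, hy1, hy2⟩ := exists_between he
    have hy0 : 0 < y := (Real.exp_pos L).trans hy1
    have hut : 1 < (1/y)/t := by
      rw [ht, div_div_eq_mul_div, one_div_mul_eq_div, div_one, lt_div_iff₀ hy0]; linarith
    have hu0 : 0 < 1/y := by positivity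
    -- large h
    have hev : ∀ᶠ h in Filter.atTop, ((1/y)/t)⁻¹ < t * PP q h t :=
      hS2.eventually (lt_mem_nhds (inv_lt_one_of_one_lt₀ hut))
    obtain ⟨h, hh⟩ := hev.exists
    have hS : 1 ≤ ∑ β ∈ bl q h, (1/y) ^ bw β := by
      have h1 : ((1/y)/t) * ∑ β ∈ bl q h, t ^ bw β ≤ ∑ β ∈ bl q h, (1/y) ^ bw β := by
        rw [Finset.mul_sum]
        refine Finset.sum_le_sum fun β _ => ?_
        have hb := bw_pos β
        have e : (1/y) ^ bw β = ((1/y)/t) ^ bw β * t ^ bw β := by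
          rw [← mul_pow, div_mul_cancel₀ _ ht0.ne']
        rw [e]
        refine mul_le_mul_of_nonneg_right ?_ (by positivity)
        exact le_self_pow₀ hut.le (by omega)
      refine le_trans ?_ h1
      rw [sum_bl]
      have := mul_le_mul_of_nonneg_left hh.le (show 0 ≤ (1/y)/t by positivity)
      rwa [mul_inv_cancel₀ (by positivity)] at this
    set x := Real.exp L * (1/y) with hx
    have hx0 : 0 < x := by positivity
    have hx1 : x < 1 := by rw [hx, mul_one_div, div_lt_one hy0]; exact hy1
    obtain ⟨K, hK⟩ := exists_nat_gt (1 - x)⁻¹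
    obtain ⟨D, hD⟩ := cc_lower hq (1/y) hu0 (bl q h) hS K
    have hb : ∑ n ∈ Finset.range D, (cc q n : ℝ) * (1/y)^n ≤ (1 - x)⁻¹ := by
      calc ∑ n ∈ Finset.range D, (cc q n : ℝ) * (1/y)^n ≤ ∑ n ∈ Finset.range D, x^n := by
            refine Finset.sum_le_sum fun n _ => ?_
            rw [hx, mul_pow]
            exact mul_le_mul_of_nonneg_right (hcL n) (by positivity)
        _ ≤ (1-x)⁻¹ := by
            rw [← tsum_geometric_of_lt_one hx0.le hx1]
            exact (summable_geometric_of_lt_one hx0.le hx1).sum_le_tsum _ fun _ _ => by positivity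
    linarith
  -- upper bound for gg
  have hgpos : ∀ n, (1:ℝ) ≤ gg q n := fun n => (hcpos n).trans (by exact_mod_cast cc_le_gg hq n)
  have hgup : ∀ n : ℕ, Real.log (gg q n) ≤ 3 * Real.log (n+2) + (n+1) * Real.log ζ := by
    intro n
    have h := gg_le hq n
    have h' : (gg q n : ℝ) ≤ (n+1) * ∑ w ∈ Finset.range (n+2), (cc q w : ℝ) := by exact_mod_cast h
    have h2 : ∑ w ∈ Finset.range (n+2), (cc q w : ℝ) ≤ (n+2) * ((n+2) * ζ^(n+1)) := by
      have : ∀ w ∈ Finset.range (n+2), (cc q w : ℝ) ≤ (n+2) * ζ^(n+1) := by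
        intro w hw
        have hw := Finset.mem_range.1 hw
        have hw' : (w:ℝ) + 1 ≤ n + 2 := by
          have : w + 1 ≤ n + 2 := hw
          exact_mod_cast this
        refine (hup w).trans ?_
        have := pow_le_pow_right₀ hζ1.le (show w ≤ n+1 by omega)
        gcongr
      have h3 := Finset.sum_le_card_nsmul _ _ _ this
      simpa using h3
    have h3 : (gg q n : ℝ) ≤ (n+2)^3 * ζ^(n+1) := by
      calc (gg q n : ℝ) ≤ (n+1) * ∑ w ∈ Finset.range (n+2), (cc q w : ℝ) := h'
        _ ≤ (n+2) * ((n+2) * ((n+2) * ζ^(n+1))) := by gcongr <;> linarith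
        _ = _ := by ring
    have h0 := hgpos n
    have h4 := Real.log_le_log (by positivity) h3
    rw [Real.log_mul (by positivity) (by positivity), Real.log_pow, Real.log_pow] at h4
    push_cast at h4
    exact h4
  have hlim3 : Filter.Tendsto (fun n : ℕ => (3 * Real.log (n+2) + (n+1) * Real.log ζ) / n) Filter.atTop
      (nhds (Real.log ζ)) := by
    have a1 : Filter.Tendsto (fun n : ℕ => Real.log ((n:ℝ)+2) / n) Filter.atTop (nhds 0) := by
      have b1 : Filter.Tendsto (fun x : ℝ => Real.log x / (1 * x + (-2))) Filter.atTop (nhds 0) := by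
        have := Real.tendsto_pow_log_div_mul_add_atTop 1 (-2) 1 one_ne_zero
        simpa using this
      have b2 : Filter.Tendsto (fun n : ℕ => (n:ℝ) + 2) Filter.atTop Filter.atTop :=
        Filter.tendsto_atTop_add_const_right _ _ tendsto_natCast_atTop_atTop
      refine (b1.comp b2).congr fun n => ?_
      simp only [Function.comp]
      congr 1; ring
    have a2 : Filter.Tendsto (fun n : ℕ => (n:ℝ)⁻¹) Filter.atTop (nhds 0) :=
      tendsto_inv_atTop_nhds_zero_nat
    have a3 := (a1.const_mul 3).add ((a2.mul_const (Real.log ζ)).const_add (Real.log ζ))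
    simp only [mul_zero, zero_mul, add_zero, zero_add] at a3
    refine a3.congr' ?_
    filter_upwards [Filter.eventually_gt_atTop 0] with n hn
    have hn' : (n:ℝ) ≠ 0 := by positivity
    field_simp
  have hLe : L ≤ Real.log ζ := by
    refine le_of_tendsto_of_tendsto' hlim' hlim3 fun n => ?_
    refine div_le_div_of_nonneg_right ?_ (by positivity)
    refine le_trans ?_ (hgup n)
    have h0 := hcpos n
    exact Real.log_le_log (by positivity) (by exact_mod_cast cc_le_gg hq n)
  have hLL : L = Real.log ζ := le_antisymm hLe hLge
  rw [hLL] at hlim'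
  have hg : Filter.Tendsto (fun n : ℕ => Real.log (gg q n) / n) Filter.atTop (nhds (Real.log ζ)) := by
    refine tendsto_of_tendsto_of_tendsto_of_le_of_le hlim' hlim3 (fun n => ?_) (fun n => ?_)
    · refine div_le_div_of_nonneg_right ?_ (by positivity)
      have h0 := hcpos n
      exact Real.log_le_log (by positivity) (by exact_mod_cast cc_le_gg hq n)
    · exact div_le_div_of_nonneg_right (hgup n) (by positivity)
  have hfin := (Real.continuous_exp.tendsto _).comp hg
  rw [Real.exp_log hζ0] at hfin
  refine hfin.congr fun n => ?_
  have h0 := hgpos n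
  rw [Real.rpow_def_of_pos (by positivity)]
  simp only [Function.comp, div_eq_mul_inv]

end Thm

theorem stmt13 (p : ℕ) (hp : 2 ≤ p) :
    ∃ ζ : ℝ,
      Filter.Tendsto
        (fun n : ℕ =>
          (Nat.card {g : FP p // g ∈ Fplus p ∧ wlen p g ≤ n} : ℝ) ^ ((n : ℝ)⁻¹))
        Filter.atTop (nhds ζ) ∧
      (p : ℝ) < ζ ∧ ζ < (p : ℝ) + 1 / 2 ∧
      (ζ ^ 2 - 1) ^ (p - 1) * (ζ ^ 2 + ζ - 1) = ζ ^ (2 * p) := by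
  obtain ⟨q, rfl⟩ : ∃ q, p = q + 1 := ⟨p - 1, by omega⟩
  have hq : 1 ≤ q := by omega
  obtain ⟨ζ, h1, h2, h3⟩ := Thm.exists_root hq
  refine ⟨ζ, Thm.growth hq ζ h1 h3, ?_, ?_, ?_⟩
  · push_cast; exact h1
  · push_cast; exact h2
  · rw [Nat.add_sub_cancel]; exact h3
end
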